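/- Let k be a field, S a polynomial ring over k, and I ⊆ S a homogeneous ideal of height 3 generated by quadrics with Hilbert–Samuel multiplicity e(S/I) = 6. Then S/I is Cohen–Macaulay, I is generated by 4 quadrics, and pd_S(S/I) = 3. -/

import Mathlib

open CategoryTheory Opposite

universe u

/-- The height of an ideal: the infimum of the heights (in the prime spectrum,
ordered by inclusion) of the primes containing it. -/
noncomputable def Ideal.heightENat {R : Type u} [CommRing R] (I : Ideal R) : ℕ∞ :=
  ⨅ (p : PrimeSpectrum R) (_ : I ≤ p.asIdeal), Order.height p

/-- The projective dimension of an `R`-module `M`: the least `n` such that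
`Ext^i(M, N) = 0` for all `i > n` and all modules `N` (and `⊤` if no such `n` exists). -/
noncomputable def projDim (R : Type u) [CommRing R] (M : Type u) [AddCommGroup M]
    [Module R M] : ℕ∞ :=
  sInf ((↑) '' {n : ℕ | ∀ i : ℕ, n < i → ∀ N : ModuleCat.{u} R,
    Subsingleton (((Ext R (ModuleCat.{u} R) i).obj (op (ModuleCat.of R M))).obj N)})

/-- The Hilbert function of the standard graded ring `S/J`, where
`S = k[x_1, ..., x_N]`: the `k`-dimension of the degree-`d` graded piece of `S/J`. -/
noncomputable def hilbertFunction (k : Type u) [Field k] {N : ℕ}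
    (J : Ideal (MvPolynomial (Fin N) k)) (d : ℕ) : ℕ :=
  Module.finrank k (Submodule.map (Ideal.Quotient.mkₐ k J).toLinearMap
    (MvPolynomial.homogeneousSubmodule (Fin N) k d))

open scoped Classical in
/-- The Hilbert–Samuel multiplicity `e(S/J)` of the graded ring `S/J`:
`(deg P)!` times the leading coefficient of the Hilbert polynomial `P` of `S/J`,
i.e. of the polynomial agreeing with the Hilbert function in all large degrees
(the degree of the Hilbert polynomial being `dim(S/J) - 1`). -/
noncomputable def hilbertSamuelMultiplicity (k : Type u) [Field k] {N : ℕ}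
    (J : Ideal (MvPolynomial (Fin N) k)) : ℚ :=
  if h : ∃ P : Polynomial ℚ, ∀ᶠ d : ℕ in Filter.atTop,
      (hilbertFunction k J d : ℚ) = P.eval (d : ℚ)
  then (h.choose.natDegree).factorial * h.choose.leadingCoeff
  else 0

/-- The depth of a module `M` over the polynomial ring `S = k[x_1, …, x_N]` with respect to
the graded maximal ideal `m = (x_1, …, x_N)`: the least `i` with `Ext^i(S/m, M) ≠ 0`. -/
noncomputable def gradedDepth (k : Type u) [Field k] (N : ℕ) (M : Type u) [AddCommGroup M]
    [Module (MvPolynomial (Fin N) k) M] : ℕ∞ :=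
  sInf ((↑) '' {i : ℕ | Nontrivial
    (((Ext (MvPolynomial (Fin N) k) (ModuleCat.{u} (MvPolynomial (Fin N) k)) i).obj
      (op (ModuleCat.of (MvPolynomial (Fin N) k)
        (MvPolynomial (Fin N) k ⧸
          Ideal.span (Set.range (MvPolynomial.X : Fin N → MvPolynomial (Fin N) k)))))).obj
      (ModuleCat.of (MvPolynomial (Fin N) k) M))})

/-!
After an extension of scalars the field is infinite. Choose quadrics `f₁, …, f_c` in `I` and linear
forms `z₁, …, z_d` which together are a homogeneous system of parameters of `S`, and put
`R = K[z₁, …, z_d]`. Then `S/(f)` is free of rank `2 ^ c` over `R`, `I ∩ R = 0`, and `e(S/I)` is the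
rank of `S/I` over `R`. Let this rank be `2 ^ c - c + 1`, which is `6` for `c = 3`. It is less than
`2 ^ c`, so there is a quadric `q ∈ I` outside `(f)`.

If `q` were in `(f, z)`, say `q ≡ ∑ z_k b_k` modulo `(f)` with linear forms `b_k` not all in
`(f, z)`, then, the socle of `S/(f, z)` being in degree `c`, suitable multiples of `q` in the `c`
degrees `2, …, c + 1` would be linearly independent over `R` in `I/(f)`, and `S/I` would have rank
at most `2 ^ c - c`. So `q ∉ (f, z)`, and by the same socle argument `(q)` is nonzero in each of the
degrees `2, …, c` of `S/(f, z)`. Hence `S/(f, q)` is generated over `R` by `2 ^ c - (c - 1)`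
elements. This is the rank of its quotient `S/I`, so `I = (f, q)` and `S/I` is free over `R`. As `S`
is a polynomial ring in `c` variables over `R`, this gives `pd S/I ≤ c`.
-/

namespace HeightThreeQuadrics

section Ext

variable {R : Type u} [CommRing R]

open Abelian in
lemma subsingleton_ext_zero_iff (X Y : ModuleCat.{u} R) :
    Subsingleton (((_root_.Ext R (ModuleCat.{u} R) 0).obj (op X)).obj Y) ↔
      Subsingleton (X ⟶ Y) := by
  let P := projectiveResolution X
  have hepi : Epi (P.π.f 0) := inferInstance
  have hzero : P.complex.d 1 0 ≫ P.π.f 0 = 0 := P.complex_d_comp_π_f_zero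
  have hshape : (HomologicalComplex.sc' (P.complex.linearYonedaObj R Y) 0 0 1).f = 0 :=
    (P.complex.linearYonedaObj R Y).shape 0 0 (by simp)
  rw [← ModuleCat.isZero_iff_subsingleton, (P.isoExt (R := R) 0 Y).isZero_iff,
    ← HomologicalComplex.exactAt_iff_isZero_homology,
    HomologicalComplex.exactAt_iff' _ 0 0 1 (by simp) (by simp), ShortComplex.moduleCat_exact_iff]
  constructor
  · refine fun h => ⟨fun f g => ?_⟩
    rw [← sub_eq_zero]
    obtain ⟨x, hx⟩ := h ((P.π.f 0 : P.complex.X 0 ⟶ X) ≫ (f - g)) (by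
      change P.complex.d 1 0 ≫ (P.π.f 0 : P.complex.X 0 ⟶ X) ≫ (f - g) = 0
      exact (reassoc_of% hzero) (f - g) |>.trans Limits.zero_comp)
    rw [hshape] at hx
    have hx' : (P.π.f 0 : P.complex.X 0 ⟶ X) ≫ (f - g) = 0 := hx.symm
    exact hepi.left_cancellation _ _ (hx'.trans Limits.comp_zero.symm)
  · intro h (f : P.complex.X 0 ⟶ Y) (hf : P.complex.d 1 0 ≫ f = 0)
    refine ⟨0, (map_zero _).trans (?_ : (0 : P.complex.X 0 ⟶ Y) = f)⟩
    obtain ⟨g, hg⟩ := P.exact₀.desc' f hf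
    have hg' : (P.π.f 0 : P.complex.X 0 ⟶ X) ≫ (g : X ⟶ Y) = f := hg
    have hg0 : g = 0 := h.elim (g : X ⟶ Y) 0
    rw [← hg', hg0]
    exact Limits.comp_zero.symm

open Abelian in
lemma subsingleton_ext_succ_iff (X Y : ModuleCat.{u} R) (n : ℕ) :
    Subsingleton (((_root_.Ext R (ModuleCat.{u} R) (n + 1)).obj (op X)).obj Y) ↔
      Subsingleton (Abelian.Ext.{u} X Y (n + 1)) := by
  let P := projectiveResolution X
  rw [← ModuleCat.isZero_iff_subsingleton, (P.isoExt (R := R) (n + 1) Y).isZero_iff,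
    ← HomologicalComplex.exactAt_iff_isZero_homology,
    HomologicalComplex.exactAt_iff' _ n (n + 1) (n + 2) (by simp) (by simp),
    ShortComplex.moduleCat_exact_iff]
  constructor
  · intro h
    rw [subsingleton_iff_forall_eq 0]
    intro e
    obtain ⟨f, hf, rfl⟩ := P.extMk_surjective e (n + 2) rfl
    rw [P.extMk_eq_zero_iff _ _ _ _ n rfl]
    exact h f hf
  · intro h (f : P.complex.X (n + 1) ⟶ Y) (hf : P.complex.d (n + 2) (n + 1) ≫ f = 0)
    have := Subsingleton.elim (P.extMk f (n + 2) rfl hf) 0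
    rwa [P.extMk_eq_zero_iff _ _ _ _ n rfl] at this

/-- Mathlib has two `Ext`s on module categories: the left derived functor of `Hom` and the
morphisms in the derived category. -/
lemma subsingleton_ext_iff_subsingleton_abelianExt (X Y : ModuleCat.{u} R) (n : ℕ) :
    Subsingleton (((Ext R (ModuleCat.{u} R) n).obj (op X)).obj Y) ↔
      Subsingleton (Abelian.Ext.{u} X Y n) := by
  cases n with
  | zero =>
    exact (subsingleton_ext_zero_iff X Y).trans Abelian.Ext.homEquiv₀.subsingleton_congr.symm
  | succ n => exact subsingleton_ext_succ_iff X Y n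

lemma sInf_image_natCast_le_iff {A : Set ℕ} (hA : IsUpperSet A) (n : ℕ) :
    sInf ((↑) '' A : Set ℕ∞) ≤ n ↔ n ∈ A := by
  refine ⟨fun h => ?_, fun h => sInf_le ⟨n, h, rfl⟩⟩
  rcases A.eq_empty_or_nonempty with rfl | hne
  · simp at h
  · obtain ⟨m, hm, hm'⟩ := csInf_mem (hne.image ((↑) : ℕ → ℕ∞))
    rw [← hm'] at h
    exact hA (by exact_mod_cast h) hm

lemma projDim_le_iff (M : Type u) [AddCommGroup M] [Module R M] (n : ℕ) :
    projDim R M ≤ n ↔ HasProjectiveDimensionLE (ModuleCat.of R M) n := by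
  refine (sInf_image_natCast_le_iff ?_ n).trans ?_
  · exact fun m m' hm h i hi => h i (hm.trans_lt hi)
  simp only [subsingleton_ext_iff_subsingleton_abelianExt, Set.mem_ofPred_eq]
  refine Iff.trans ?_ (hasProjectiveDimensionLT_iff.{u} _ _).symm
  exact ⟨fun h i hi Y e => (h i hi Y).elim _ _,
    fun h i hi Y => subsingleton_of_forall_eq 0 (@h i hi Y)⟩

/-- `Extⁱ(X, M) = 0` for `i < n`. For `X = R ⧸ 𝔪` this says that the depth of `M` with respect
to `𝔪` is at least `n`. -/
def DepthAtLeast (X M : ModuleCat.{u} R) (n : ℕ) : Prop :=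
  ∀ i < n, Subsingleton (Abelian.Ext.{u} X M i)

lemma natCast_le_gradedDepth_iff (k : Type u) [Field k] (N : ℕ) (M : Type u) [AddCommGroup M]
    [Module (MvPolynomial (Fin N) k) M] (n : ℕ) :
    n ≤ gradedDepth k N M ↔ DepthAtLeast (ModuleCat.of (MvPolynomial (Fin N) k)
      (MvPolynomial (Fin N) k ⧸
        Ideal.span (Set.range (MvPolynomial.X : Fin N → MvPolynomial (Fin N) k))))
      (ModuleCat.of (MvPolynomial (Fin N) k) M) n := by
  simp only [gradedDepth, le_sInf_iff, Set.forall_mem_image, Set.mem_ofPred_eq, Nat.cast_le,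
    ← not_subsingleton_iff_nontrivial, subsingleton_ext_iff_subsingleton_abelianExt]
  exact ⟨fun h i hi => by_contra fun hne => hi.not_ge (h hne),
    fun h i hne => not_lt.1 fun hi => hne (h i hi)⟩

namespace DepthAtLeast

variable {X M M' : ModuleCat.{u} R} {n : ℕ}

lemma mono {m : ℕ} (h : DepthAtLeast X M n) (hmn : m ≤ n) : DepthAtLeast X M m :=
  fun i hi => h i (hi.trans_le hmn)

lemma of_retract (i : M ⟶ M') (r : M' ⟶ M) (hir : i ≫ r = 𝟙 M) (h : DepthAtLeast X M' n) :
    DepthAtLeast X M n := by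
  intro j hj
  refine subsingleton_of_forall_eq 0 fun x => ?_
  have hx :
      (x.comp (Abelian.Ext.mk₀ i) (add_zero j)).comp (Abelian.Ext.mk₀ r) (add_zero j) = x := by
    rw [Abelian.Ext.comp_assoc_of_third_deg_zero, Abelian.Ext.mk₀_comp_mk₀, hir,
      Abelian.Ext.comp_mk₀_id]
  rw [← hx, (h j hj).elim (x.comp (Abelian.Ext.mk₀ i) (add_zero j)) 0, Abelian.Ext.zero_comp]

lemma of_linearEquiv {M M' : Type u} [AddCommGroup M] [Module R M] [AddCommGroup M'] [Module R M']
    (e : M ≃ₗ[R] M') (h : DepthAtLeast X (ModuleCat.of R M') n) :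
    DepthAtLeast X (ModuleCat.of R M) n :=
  h.of_retract e.toModuleIso.hom e.toModuleIso.inv e.toModuleIso.hom_inv_id

lemma middle {S : ShortComplex (ModuleCat.{u} R)} (hS : S.ShortExact)
    (h₁ : DepthAtLeast X S.X₁ n) (h₃ : DepthAtLeast X S.X₃ n) : DepthAtLeast X S.X₂ n := by
  intro i hi
  refine subsingleton_of_forall_eq 0 fun x => ?_
  obtain ⟨y, rfl⟩ := Abelian.Ext.covariant_sequence_exact₂ _ hS x ((h₃ i hi).elim _ _)
  rw [(h₁ i hi).elim y 0, Abelian.Ext.zero_comp]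

lemma right {S : ShortComplex (ModuleCat.{u} R)} (hS : S.ShortExact)
    (h₁ : DepthAtLeast X S.X₁ (n + 1)) (h₂ : DepthAtLeast X S.X₂ n) : DepthAtLeast X S.X₃ n := by
  intro i hi
  refine subsingleton_of_forall_eq 0 fun x => ?_
  obtain ⟨y, rfl⟩ := Abelian.Ext.covariant_sequence_exact₃ _ hS x rfl
    ((h₁ (i + 1) (by lia)).elim _ _)
  rw [(h₂ i hi).elim y 0, Abelian.Ext.zero_comp]

lemma quotSMulTop {r : R} (hr : IsSMulRegular M r) (h : DepthAtLeast X M (n + 1)) :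
    DepthAtLeast X (ModuleCat.of R (QuotSMulTop r M)) n :=
  right hr.smulShortComplex_shortExact h (h.mono n.le_succ)

lemma left {S : ShortComplex (ModuleCat.{u} R)} (hS : S.ShortExact)
    (hf : ∀ (i : ℕ) (x : Abelian.Ext X S.X₁ i), x.comp (Abelian.Ext.mk₀ S.f) (add_zero i) = 0)
    (h₃ : DepthAtLeast X S.X₃ n) : DepthAtLeast X S.X₁ (n + 1) := by
  intro i hi
  refine subsingleton_of_forall_eq 0 fun x => ?_
  cases i with
  | zero =>
    have := hS.mono_f
    exact Abelian.Ext.postcomp_mk₀_injective_of_mono X S.f ((hf 0 x).trans (map_zero _).symm)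
  | succ i =>
    obtain ⟨y, rfl⟩ := Abelian.Ext.covariant_sequence_exact₁ _ hS x (hf _ x) rfl
    rw [(h₃ i (by lia)).elim y 0, Abelian.Ext.zero_comp]

lemma of_quotSMulTop {r : R} (hX : r ∈ Module.annihilator R X) (hr : IsSMulRegular M r)
    (h : DepthAtLeast X (ModuleCat.of R (QuotSMulTop r M)) n) : DepthAtLeast X M (n + 1) :=
  left hr.smulShortComplex_shortExact (fun i x => congrArg (fun t => t.hom x)
    (Abelian.Ext.postcomp_smul_id_eq_zero_of_mem_annihilator (M := M) hX i)) h

lemma pi (h : DepthAtLeast X (ModuleCat.of R R) n) (m : ℕ) :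
    DepthAtLeast X (ModuleCat.of R (Fin m → R)) n := by
  induction m with
  | zero =>
    refine fun i _ => subsingleton_of_forall_eq 0 fun x => ?_
    have hid : 𝟙 (ModuleCat.of R (Fin 0 → R)) = 0 :=
      (ModuleCat.isZero_of_subsingleton _).eq_of_src _ _
    rw [← Abelian.Ext.comp_mk₀_id x, hid, Abelian.Ext.mk₀_zero, Abelian.Ext.comp_zero]
  | succ m ih =>
    refine of_linearEquiv (Fin.consLinearEquiv R fun _ => R).symm ?_
    exact middle (ModuleCat.shortComplex_shortExact (ModuleCat.shortComplexOfCompEqZero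
      (LinearMap.inl R R (Fin m → R)) (LinearMap.snd R R (Fin m → R))
      (LinearMap.snd_comp_inl ..)) Function.Exact.inl_snd LinearMap.inl_injective
      LinearMap.snd_surjective) h ih

/-- The inequality `depth M ≥ depth R - pd M` of the Auslander–Buchsbaum formula. -/
lemma of_hasProjectiveDimensionLE [IsNoetherianRing R] (h : DepthAtLeast X (ModuleCat.of R R) n)
    (c : ℕ) : ∀ (M : Type u) [AddCommGroup M] [Module R M] [Module.Finite R M],
      HasProjectiveDimensionLE (ModuleCat.of R M) c →
        DepthAtLeast X (ModuleCat.of R M) (n - c) := by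
  induction c with
  | zero =>
    intro M _ _ _ hM
    rw [← projective_iff_hasProjectiveDimensionLE_zero, ← IsProjective.iff_projective] at hM
    obtain ⟨m, f, hf⟩ := Module.Finite.exists_fin' R M
    obtain ⟨s, hs⟩ := Module.projective_lifting_property f LinearMap.id hf
    exact (h.pi m).of_retract (ModuleCat.ofHom s) (ModuleCat.ofHom f)
      (by rw [← ModuleCat.ofHom_comp, hs]; rfl)
  | succ c ih =>
    intro M _ _ _ hM
    obtain ⟨m, f, hf⟩ := Module.Finite.exists_fin' R M
    have hS := ModuleCat.shortComplex_shortExact (ModuleCat.shortComplexOfCompEqZero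
      (LinearMap.ker f).subtype f (LinearMap.comp_ker_subtype f))
      (LinearMap.exact_subtype_ker_map f) Subtype.val_injective hf
    have hproj : Projective (ModuleCat.of R (Fin m → R)) :=
      (IsProjective.iff_projective (Fin m → R)).1 inferInstance
    have hker := ih (LinearMap.ker f) ((hS.hasProjectiveDimensionLT_X₃_iff c hproj).1 hM)
    rcases Nat.lt_or_ge c n with hc | hc
    · exact right hS (hker.mono (by lia)) ((h.pi m).mono (by lia))
    · exact fun j hj => by lia

end DepthAtLeast

end Ext

section Depth

variable {R : Type u} [CommRing R]

/-- The isomorphism `(R ⧸ J) / a (R ⧸ J) ≃ R ⧸ (J + (a))`. -/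
noncomputable def quotSMulTopQuotientEquiv (J : Ideal R) (a : R) :
    QuotSMulTop a (R ⧸ J) ≃ₗ[R] R ⧸ (J ⊔ Ideal.span {a}) :=
  (Submodule.quotEquivOfEq _ _ (by
    have h := Submodule.map_smul'' (Ideal.span {a}) ⊤ J.mkQ
    rw [Submodule.map_top, Submodule.range_mkQ, smul_eq_mul, Ideal.mul_top] at h
    rw [← Submodule.ideal_span_singleton_smul, h])).trans
    (Submodule.quotientQuotientEquivQuotientSup J (Ideal.span {a}))

lemma quotSMulTop_map_torsionBySet_injective {M : Type*} [AddCommGroup M] [Module R M] {r : R}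
    (hr : IsSMulRegular M r) (s : Set R) :
    Function.Injective (QuotSMulTop.map r (Submodule.torsionBySet R M s).subtype) := by
  refine (injective_iff_map_eq_zero _).2 fun u hu => ?_
  obtain ⟨u, rfl⟩ := Submodule.Quotient.mk_surjective _ u
  rw [QuotSMulTop.map_apply_mk, Submodule.Quotient.mk_eq_zero] at hu
  obtain ⟨y, -, hy⟩ := (Submodule.mem_smul_pointwise_iff_exists _ _ _).1 hu
  have hy_mem : y ∈ Submodule.torsionBySet R M s := (Submodule.mem_torsionBySet_iff _ _).2 fun a =>
    hr.right_eq_zero_of_smul (by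
      rw [smul_comm, hy]; exact (Submodule.mem_torsionBySet_iff _ _).1 u.2 a)
  exact (Submodule.Quotient.mk_eq_zero _).2 ((Submodule.mem_smul_pointwise_iff_exists _ _ _).2
    ⟨⟨y, hy_mem⟩, Submodule.mem_top, Subtype.ext hy⟩)

lemma sup_span_le_annihilator_quotSMulTop_torsionBySet (M : Type*) [AddCommGroup M] [Module R M]
    (p : Ideal R) (r : R) : p ⊔ Ideal.span {r} ≤
      Module.annihilator R (QuotSMulTop r (Submodule.torsionBySet R M (p : Set R))) := by
  refine sup_le (fun a ha => Module.mem_annihilator.2 fun u => ?_) ?_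
  · obtain ⟨u, rfl⟩ := Submodule.Quotient.mk_surjective _ u
    rw [← Submodule.Quotient.mk_smul, Submodule.Quotient.mk_eq_zero]
    exact (Subtype.ext ((Submodule.mem_torsionBySet_iff _ _).1 u.2 ⟨a, ha⟩) : a • u = 0) ▸
      Submodule.zero_mem _
  · rw [Ideal.span_singleton_le_iff_mem, Module.mem_annihilator]
    intro u
    obtain ⟨u, rfl⟩ := Submodule.Quotient.mk_surjective _ u
    exact (Submodule.Quotient.mk_eq_zero _).2
      ((Submodule.mem_smul_pointwise_iff_exists _ _ _).2 ⟨u, Submodule.mem_top, rfl⟩)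

lemma smul_top_lt_top_of_mem_associatedPrimes {M : Type*} [AddCommGroup M] [Module R M]
    [Module.Finite R M] {p m : Ideal R} (hm : m ≠ ⊤) (hp : p ∈ associatedPrimes R M)
    (hpm : p ≤ m) : m • (⊤ : Submodule R M) < ⊤ := by
  refine lt_top_iff_ne_top.2 fun h => ?_
  obtain ⟨r, hr, hr0⟩ := Submodule.exists_sub_one_mem_and_smul_eq_zero_of_fg_of_le_smul m ⊤
    Module.Finite.fg_top h.ge
  have hrp : r ∈ p := hp.annihilator_le (Submodule.mem_annihilator.2 fun x hx => hr0 x hx)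
  exact hm ((Ideal.eq_top_iff_one m).2 (by simpa using m.sub_mem (hpm hrp) hr))

variable [IsNoetherianRing R]

lemma exists_mem_associatedPrimes_quotSMulTop {M : Type*} [AddCommGroup M] [Module R M]
    [Module.Finite R M] {r : R} (hr : IsSMulRegular M r) {p m : Ideal R} [m.IsPrime]
    (hp : p ∈ associatedPrimes R M) (hpm : p ≤ m) (hrm : r ∈ m) :
    ∃ q ∈ associatedPrimes R (QuotSMulTop r M), p < q ∧ q ≤ m := by
  obtain ⟨hp_prime, x, hx⟩ := isAssociatedPrime_iff.1 hp
  have hpx (a : R) : a ∈ p ↔ a • x = 0 := by rw [hx, Submodule.mem_colon_singleton]; rfl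
  have hann : Module.annihilator R (Submodule.torsionBySet R M (p : Set R)) ≤ p := fun a ha =>
    (hpx a).2 <| congrArg Subtype.val <| Module.mem_annihilator.1 ha
      ⟨x, (Submodule.mem_torsionBySet_iff _ _).2 fun b => (hpx b).1 b.2⟩
  have hrp : r ∉ p := fun h => by
    have hx0 : x = 0 := hr.right_eq_zero_of_smul ((hpx r).1 h)
    exact hp_prime.ne_top ((Ideal.eq_top_iff_one p).2 ((hpx 1).2 (by simp [hx0])))
  obtain ⟨q, hq, hqm⟩ := Ideal.exists_minimalPrimes_le (I := p ⊔ Ideal.span {r}) (J := m)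
    (sup_le hpm (by simpa using hrm))
  have hpq : p ≤ q := le_sup_left.trans hq.1.2
  have hrq : r ∈ q := hq.1.2 (Ideal.mem_sup_right (Ideal.mem_span_singleton_self r))
  have hq_supp : (⟨q, hq.1.1⟩ : PrimeSpectrum R) ∈
      Module.support R (QuotSMulTop r (Submodule.torsionBySet R M (p : Set R))) := by
    rw [Module.support_quotSMulTop, Module.support_eq_zeroLocus]
    exact ⟨hann.trans hpq, by simpa using hrq⟩
  rw [Module.support_eq_zeroLocus] at hq_supp
  refine ⟨q, ?_, lt_of_le_of_ne hpq fun h => hrp (h ▸ hrq), hqm⟩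
  exact associatedPrimes.subset_of_injective (quotSMulTop_map_torsionBySet_injective hr _)
    (Module.associatedPrimes.minimalPrimes_annihilator_subset_associatedPrimes R _
      ⟨⟨hq.1.1, hq_supp⟩, fun q' hq' => hq.2
        ⟨hq'.1, (sup_span_le_annihilator_quotSMulTop_torsionBySet M p r).trans hq'.2⟩⟩)

lemma height_Ici_add_one_le {α : Type*} [Preorder α] {a b c : α} (hab : a < b) (hbc : b ≤ c) :
    Order.height (⟨c, hbc⟩ : Set.Ici b) + 1 ≤
      Order.height (⟨c, hab.le.trans hbc⟩ : Set.Ici a) := by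
  refine ENat.forall_natCast_le_iff_le.1 fun n hn => ?_
  cases n with
  | zero => exact zero_le
  | succ n =>
    obtain ⟨s, hs, hlen⟩ := Order.exists_series_of_le_height (⟨c, hbc⟩ : Set.Ici b) (n := n)
      ((ENat.add_le_add_iff_right ENat.one_ne_top).1 (by exact_mod_cast hn))
    let incl (x : Set.Ici b) : Set.Ici a := ⟨x, hab.le.trans x.2⟩
    let t : LTSeries (Set.Ici a) := s.map incl fun _ _ h => h
    have ht : (⟨a, le_rfl⟩ : Set.Ici a) < t.head := hab.trans_le s.head.2
    have hlast : (t.cons _ ht).last = incl ⟨c, hbc⟩ :=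
      (RelSeries.last_cons ..).trans ((LTSeries.last_map ..).trans (congrArg incl hs))
    have hlength : (t.cons _ ht).length = n + 1 :=
      (RelSeries.cons_length ..).trans (congrArg (· + 1) hlen)
    exact hlength ▸ Order.length_le_height hlast.le

open RingTheory.Sequence in
lemma length_le_height_Ici {m : PrimeSpectrum R} (rs : List R) (hrs : ∀ r ∈ rs, r ∈ m.asIdeal) :
    ∀ {M : Type u} [AddCommGroup M] [Module R M] [Module.Finite R M] (_ : IsWeaklyRegular M rs)
      {p : PrimeSpectrum R} (_ : p.asIdeal ∈ associatedPrimes R M) (hpm : p ≤ m),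
      rs.length ≤ Order.height (⟨m, hpm⟩ : Set.Ici p) := by
  induction rs with
  | nil => simp
  | cons r rs ih =>
    intro M _ _ _ hreg p hp hpm
    obtain ⟨hr, hreg⟩ := isWeaklyRegular_cons_iff M r rs |>.1 hreg
    obtain ⟨q, hq, hpq, hqm⟩ := exists_mem_associatedPrimes_quotSMulTop hr hp hpm
      (hrs r List.mem_cons_self)
    have hlt : p < ⟨q, hq.isPrime⟩ := hpq
    have hqm : ⟨q, hq.isPrime⟩ ≤ m := hqm
    rw [List.length_cons, Nat.cast_add_one]
    exact (add_le_add_left (ih (fun r h => hrs r (List.mem_cons_of_mem _ h)) hreg hq hqm) 1).trans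
      (height_Ici_add_one_le hlt hqm)

lemma DepthAtLeast.le_height_Ici {m : PrimeSpectrum R} {M : Type u} [AddCommGroup M]
    [Module R M] [Module.Finite R M] {n : ℕ}
    (hM : DepthAtLeast (ModuleCat.of R (R ⧸ m.asIdeal)) (ModuleCat.of R M) n)
    {p : PrimeSpectrum R} (hp : p.asIdeal ∈ associatedPrimes R M) (hpm : p ≤ m) :
    n ≤ Order.height (⟨m, hpm⟩ : Set.Ici p) := by
  obtain ⟨rs, rfl, hrs, hreg⟩ := ModuleCat.exists_isRegular_of_exists_subsingleton_ext m.asIdeal n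
    (ModuleCat.of R M) (smul_top_lt_top_of_mem_associatedPrimes m.isPrime.ne_top hp hpm)
    (ModuleCat.of R (R ⧸ m.asIdeal))
    (by rw [Module.support_eq_zeroLocus, Ideal.annihilator_quotient]) hM
  exact length_le_height_Ici rs hrs hreg.toIsWeaklyRegular hp hpm

end Depth

section Dimension

variable {R : Type u} [CommRing R]

lemma heightENat_eq_height (I : Ideal R) : I.heightENat = I.height := by
  simp only [Ideal.heightENat, ← PrimeSpectrum.height_eq_orderHeight]
  refine le_antisymm ?_ (le_iInf₂ fun p hp => Ideal.height_mono hp)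
  rw [Ideal.height_eq_inf_minimalPrimes]
  exact le_iInf₂ fun p hp => iInf₂_le (⟨p, hp.1.1⟩ : PrimeSpectrum R) hp.1.2

lemma coheight_le_ringKrullDim_quotient {I : Ideal R} {p : PrimeSpectrum R}
    (h : I ≤ p.asIdeal) : (Order.coheight p : WithBot ℕ∞) ≤ ringKrullDim (R ⧸ I) := by
  rw [Order.coheight_eq_krullDim_Ici, ringKrullDim_quotient]
  exact Order.krullDim_le_of_strictMono
    (fun q : Set.Ici p => (⟨q, h.trans q.2⟩ : PrimeSpectrum.zeroLocus (I : Set R)))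
    fun _ _ hlt => hlt

lemma height_add_ringKrullDim_quotient_le (I : Ideal R) :
    (I.height : WithBot ℕ∞) + ringKrullDim (R ⧸ I) ≤ ringKrullDim R := by
  rw [ringKrullDim_quotient]
  rcases isEmpty_or_nonempty (PrimeSpectrum.zeroLocus (I : Set R)) with _ | ⟨⟨p₀, hp₀⟩⟩
  · rw [Order.krullDim_eq_bot, WithBot.add_bot]
    exact bot_le
  · have : Nonempty (PrimeSpectrum.zeroLocus (I : Set R)) := ⟨⟨p₀, hp₀⟩⟩
    have : Nonempty (PrimeSpectrum R) := ⟨p₀⟩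
    rw [Order.krullDim_eq_iSup_coheight_of_nonempty, ringKrullDim,
      Order.krullDim_eq_iSup_height_add_coheight_of_nonempty, ← WithBot.coe_add, ENat.add_iSup,
      WithBot.coe_le_coe]
    refine iSup_le fun p => le_iSup_of_le p.1 (add_le_add ?_ ?_)
    · exact (Ideal.height_mono p.2).trans (PrimeSpectrum.height_eq_orderHeight p.1).le
    · exact Order.coheight_le_coheight_apply_of_strictMono Subtype.val (fun _ _ h => h) p

end Dimension

section PolynomialDepth

open MvPolynomial

variable {K : Type u} [Field K]

lemma mem_idealOfVars_iff {σ : Type*} (p : MvPolynomial σ K) :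
    p ∈ idealOfVars σ K ↔ constantCoeff p = 0 := by
  rw [← pow_one (idealOfVars σ K), mem_pow_idealOfVars_iff']
  simp [constantCoeff_eq, Finsupp.degree_eq_zero_iff]

instance idealOfVars_isMaximal (σ : Type*) : (idealOfVars σ K).IsMaximal := by
  have : idealOfVars σ K = RingHom.ker (constantCoeff : MvPolynomial σ K →+* K) := by
    ext p
    rw [mem_idealOfVars_iff, RingHom.mem_ker]
  rw [this]
  exact RingHom.ker_isMaximal_of_surjective _ fun a => ⟨C a, constantCoeff_C _ a⟩

lemma isSMulRegular_X_quotient_span {σ : Type*} {s : Set σ} {i : σ} (hi : i ∉ s) :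
    IsSMulRegular (MvPolynomial σ K ⧸ Ideal.span ((X : σ → MvPolynomial σ K) '' s))
      (X i : MvPolynomial σ K) := by
  refine (isSMulRegular_quotient_iff_mem_of_smul_mem _ _).2 fun u hu => ?_
  rw [smul_eq_mul, mul_comm, mem_ideal_span_X_image] at hu
  refine mem_ideal_span_X_image.2 fun m hm => ?_
  obtain ⟨j, hj, hmj⟩ := hu (m + Finsupp.single i 1) (by
    rw [mem_support_iff, coeff_mul_X]
    exact mem_support_iff.1 hm)
  have hij : i ≠ j := fun e => hi (e ▸ hj)
  exact ⟨j, hj, by simpa [Finsupp.single_apply, hij] using hmj⟩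

variable (K) (N : ℕ)

/-- The residue field of `K[x₁, …, x_N]` at the origin, as a module over the polynomial ring. -/
noncomputable abbrev residueField : ModuleCat.{u} (MvPolynomial (Fin N) K) :=
  ModuleCat.of _ (MvPolynomial (Fin N) K ⧸ idealOfVars (Fin N) K)

variable {K N}

lemma DepthAtLeast.of_isSMulRegular_quotient {J : Ideal (MvPolynomial (Fin N) K)}
    {a : MvPolynomial (Fin N) K} (ha : a ∈ idealOfVars (Fin N) K)
    (hreg : IsSMulRegular (MvPolynomial (Fin N) K ⧸ J) a) {n : ℕ}
    (h : DepthAtLeast (residueField K N)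
      (.of _ (MvPolynomial (Fin N) K ⧸ (J ⊔ Ideal.span {a}))) n) :
    DepthAtLeast (residueField K N) (.of _ (MvPolynomial (Fin N) K ⧸ J)) (n + 1) :=
  of_quotSMulTop (by rwa [Ideal.annihilator_quotient]) hreg
    (h.of_linearEquiv (quotSMulTopQuotientEquiv J a))

lemma DepthAtLeast.isSMulRegular_quotient {J : Ideal (MvPolynomial (Fin N) K)}
    {a : MvPolynomial (Fin N) K} (hreg : IsSMulRegular (MvPolynomial (Fin N) K ⧸ J) a) {n : ℕ}
    (h : DepthAtLeast (residueField K N) (.of _ (MvPolynomial (Fin N) K ⧸ J)) (n + 1)) :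
    DepthAtLeast (residueField K N) (.of _ (MvPolynomial (Fin N) K ⧸ (J ⊔ Ideal.span {a}))) n :=
  (h.quotSMulTop hreg).of_linearEquiv (quotSMulTopQuotientEquiv J a).symm

lemma depthAtLeast_quotient_span_X (n : ℕ) : ∀ s : Finset (Fin N), n + s.card ≤ N →
    DepthAtLeast (residueField K N) (.of _ (MvPolynomial (Fin N) K ⧸
      Ideal.span ((X : Fin N → MvPolynomial (Fin N) K) '' s))) n := by
  induction n with
  | zero => exact fun s _ j hj => absurd hj j.not_lt_zero
  | succ n ih =>
    intro s hs
    obtain ⟨i, hi⟩ : ∃ i, i ∉ s := by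
      by_contra! h
      rw [Finset.eq_univ_of_forall h, Finset.card_univ, Fintype.card_fin] at hs
      lia
    refine .of_isSMulRegular_quotient (Ideal.subset_span ⟨i, rfl⟩)
      (isSMulRegular_X_quotient_span (by simpa using hi)) ?_
    have := ih (insert i s) (by rw [Finset.card_insert_of_notMem hi]; lia)
    rwa [Finset.coe_insert, Set.image_insert_eq, Ideal.span_insert, sup_comm] at this

lemma depthAtLeast_quotient_bot : DepthAtLeast (residueField K N)
    (.of _ (MvPolynomial (Fin N) K ⧸ (⊥ : Ideal (MvPolynomial (Fin N) K)))) N := by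
  have h := depthAtLeast_quotient_span_X (K := K) (N := N) N ∅ (by simp)
  rwa [Finset.coe_empty, Set.image_empty, Ideal.span_empty] at h

lemma depthAtLeast_mvPolynomial :
    DepthAtLeast (residueField K N) (.of _ (MvPolynomial (Fin N) K)) N :=
  depthAtLeast_quotient_bot.of_linearEquiv (Submodule.quotEquivOfEqBot ⊥ rfl).symm

lemma mem_associatedPrimes_quotient_of_mem_minimalPrimes {R : Type*} [CommRing R]
    [IsNoetherianRing R] {I p : Ideal R} (hp : p ∈ I.minimalPrimes) :
    p ∈ associatedPrimes R (R ⧸ I) :=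
  Module.associatedPrimes.minimalPrimes_annihilator_subset_associatedPrimes _ _
    (by rwa [Ideal.annihilator_quotient])

lemma height_add_ringKrullDim_quotient_mvPolynomial_le (I : Ideal (MvPolynomial (Fin N) K)) :
    (I.height : WithBot ℕ∞) + ringKrullDim (MvPolynomial (Fin N) K ⧸ I) ≤ N := by
  have := height_add_ringKrullDim_quotient_le I
  rwa [ringKrullDim_of_isNoetherianRing, ringKrullDim_eq_zero_of_field, zero_add,
    Nat.card_fin] at this

variable {I : Ideal (MvPolynomial (Fin N) K)}

lemma le_ringKrullDim_of_depthAtLeast (hI : I ≤ idealOfVars (Fin N) K) {n : ℕ}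
    (h : DepthAtLeast (residueField K N) (.of _ (MvPolynomial (Fin N) K ⧸ I)) n) :
    n ≤ ringKrullDim (MvPolynomial (Fin N) K ⧸ I) := by
  obtain ⟨p, hp, hpm⟩ := Ideal.exists_minimalPrimes_le hI
  have key := DepthAtLeast.le_height_Ici
    (m := ⟨idealOfVars (Fin N) K, (idealOfVars_isMaximal _).isPrime⟩) (p := ⟨p, hp.1.1⟩) h
    (mem_associatedPrimes_quotient_of_mem_minimalPrimes hp) hpm
  refine le_trans ?_ (coheight_le_ringKrullDim_quotient (p := ⟨p, hp.1.1⟩) hp.1.2)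
  rw [Order.coheight_eq_krullDim_Ici]
  exact le_trans (WithBot.coe_le_coe.2 key) (Order.height_le_krullDim _)

/-- A perfect module is Cohen–Macaulay. -/
theorem ringKrullDim_eq_gradedDepth_and_projDim_eq_height {c : ℕ}
    (hI : I ≤ idealOfVars (Fin N) K) (hc : I.height = c)
    (hpd : HasProjectiveDimensionLE
      (ModuleCat.of (MvPolynomial (Fin N) K) (MvPolynomial (Fin N) K ⧸ I)) c) :
    ringKrullDim (MvPolynomial (Fin N) K ⧸ I) =
        (gradedDepth K N (MvPolynomial (Fin N) K ⧸ I) : WithBot ℕ∞) ∧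
      projDim (MvPolynomial (Fin N) K) (MvPolynomial (Fin N) K ⧸ I) = c := by
  have hdim := height_add_ringKrullDim_quotient_mvPolynomial_le I
  rw [hc] at hdim
  have bound {n : ℕ} (h : DepthAtLeast (residueField K N) (.of _ (MvPolynomial (Fin N) K ⧸ I)) n) :
      c + n ≤ N := by
    have := (add_le_add_right (le_ringKrullDim_of_depthAtLeast hI h) _).trans hdim
    exact_mod_cast this
  have depth_ge (n : ℕ) (h : HasProjectiveDimensionLE
      (ModuleCat.of (MvPolynomial (Fin N) K) (MvPolynomial (Fin N) K ⧸ I)) n) :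
      DepthAtLeast (residueField K N) (.of _ (MvPolynomial (Fin N) K ⧸ I)) (N - n) :=
    depthAtLeast_mvPolynomial.of_hasProjectiveDimensionLE n _ h
  have hcN := bound (n := 0) fun j hj => absurd hj j.not_lt_zero
  have hdepth : gradedDepth K N (MvPolynomial (Fin N) K ⧸ I) = (N - c : ℕ) := by
    refine le_antisymm (ENat.forall_natCast_le_iff_le.1 fun n hn => ?_)
      ((natCast_le_gradedDepth_iff ..).2 (depth_ge c hpd))
    have := bound ((natCast_le_gradedDepth_iff ..).1 hn)
    exact_mod_cast (by lia : n ≤ N - c)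
  refine ⟨?_, le_antisymm ((projDim_le_iff _ c).2 hpd) ?_⟩
  · rw [hdepth]
    refine le_antisymm ?_ (le_ringKrullDim_of_depthAtLeast hI (depth_ge c hpd))
    refine (ENat.WithBot.add_le_add_natCast_left_iff (c := c)).1 (hdim.trans_eq ?_)
    exact_mod_cast (Nat.add_sub_cancel' (by lia : c ≤ N)).symm
  · induction h : projDim (MvPolynomial (Fin N) K) (MvPolynomial (Fin N) K ⧸ I)
        using ENat.recTopCoe with
    | top => exact le_top
    | coe n =>
      have := bound (depth_ge n ((projDim_le_iff _ n).1 h.le))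
      exact_mod_cast (by lia : c ≤ n)

end PolynomialDepth

section RelativeHeight

variable {R : Type*} [CommRing R] [IsNoetherianRing R]

lemma height_Ici_le_card {p m : PrimeSpectrum R} (hpm : p ≤ m) {J : Ideal R} {t : Finset R}
    (hJ : J ≤ p.asIdeal) (hm : m.asIdeal ∈ (J ⊔ Ideal.span t).minimalPrimes) :
    Order.height (⟨m, hpm⟩ : Set.Ici p) ≤ t.card := by
  classical
  let e := p.asIdeal.primeSpectrumQuotientOrderIsoZeroLocus
  let f (q : Set.Ici p) : PrimeSpectrum (R ⧸ p.asIdeal) :=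
    e.symm ⟨q.1, PrimeSpectrum.asIdeal_le_asIdeal _ _ |>.2 q.2⟩
  have hf : StrictMono f := fun _ _ h => e.symm.strictMono h
  refine (Order.height_le_height_apply_of_strictMono f hf _).trans ?_
  rw [← PrimeSpectrum.height_eq_orderHeight]
  refine le_trans (Ideal.height_le_card_of_mem_minimalPrimes_span_finset
    (s := t.image (Ideal.Quotient.mk p.asIdeal)) ?_) (by exact_mod_cast Finset.card_image_le)
  rw [Finset.coe_image, ← Ideal.map_span,
    Ideal.minimalPrimes_map_of_surjective Ideal.Quotient.mk_surjective, Ideal.mk_ker]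
  refine ⟨m.asIdeal, ⟨⟨m.isPrime, sup_le (le_sup_right.trans hm.1.2) hpm⟩, fun q hq => hm.2
    ⟨hq.1, sup_le (hJ.trans (le_sup_right.trans hq.2)) (le_sup_left.trans hq.2)⟩⟩, rfl⟩

end RelativeHeight

section HomogeneousIdeals

open MvPolynomial

attribute [local instance] MvPolynomial.gradedAlgebra

variable {σ : Type*} {K : Type*} [Field K]

lemma homogeneousComponent_mul_of_isHomogeneous {a : MvPolynomial σ K} {e : ℕ}
    (ha : a.IsHomogeneous e) (p : MvPolynomial σ K) (n : ℕ) :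
    homogeneousComponent (e + n) (a * p) = a * homogeneousComponent n p := by
  rw [← decomposition.decompose'_apply, ← decomposition.decompose'_apply]
  exact DirectSum.coe_decompose_mul_add_of_left_mem (homogeneousSubmodule σ K) ha

lemma homogeneousComponent_mul_eq_zero_of_lt {a : MvPolynomial σ K} {e : ℕ}
    (ha : a.IsHomogeneous e) (p : MvPolynomial σ K) {n : ℕ} (hn : n < e) :
    homogeneousComponent n (a * p) = 0 := by
  rw [← decomposition.decompose'_apply]
  exact DirectSum.coe_decompose_mul_of_left_mem_of_not_le (homogeneousSubmodule σ K) ha hn.not_ge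

lemma isHomogeneous_span {s : Set (MvPolynomial σ K)} (hs : ∀ x ∈ s, ∃ n, x.IsHomogeneous n) :
    (Ideal.span s).IsHomogeneous (homogeneousSubmodule σ K) :=
  Ideal.homogeneous_span _ _ hs

variable {J : Ideal (MvPolynomial σ K)} (hJ : J.IsHomogeneous (homogeneousSubmodule σ K))

include hJ

lemma le_idealOfVars_of_isHomogeneous (hJ_top : J ≠ ⊤) : J ≤ idealOfVars σ K := by
  intro p hp
  by_contra hp0
  rw [mem_idealOfVars_iff] at hp0
  have := homogeneousComponent_mem_of_mem hJ hp 0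
  rw [homogeneousComponent_zero] at this
  exact hJ_top (Ideal.eq_top_of_isUnit_mem _ this ((isUnit_iff_ne_zero.2 hp0).map C))

lemma isHomogeneous_sup_span_singleton {a : MvPolynomial σ K} {e : ℕ} (ha : a.IsHomogeneous e) :
    (J ⊔ Ideal.span {a}).IsHomogeneous (homogeneousSubmodule σ K) :=
  hJ.sup (isHomogeneous_span fun _ hx => ⟨e, hx ▸ ha⟩)

lemma isHomogeneous_colon_span_singleton {u : MvPolynomial σ K} {n : ℕ} (hu : u.IsHomogeneous n) :
    (J.colon {u}).IsHomogeneous (homogeneousSubmodule σ K) := by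
  intro i a ha
  suffices homogeneousComponent i a ∈ J.colon {u} by
    rwa [← decomposition.decompose'_apply] at this
  rw [Submodule.mem_colon_singleton, smul_eq_mul, mul_comm] at ha ⊢
  rw [← homogeneousComponent_mul_of_isHomogeneous hu]
  exact homogeneousComponent_mem_of_mem hJ ha _

lemma exists_isHomogeneous_sub_mul_mem {a t : MvPolynomial σ K} {e n : ℕ} (ha : a.IsHomogeneous e)
    (ht : t.IsHomogeneous (e + n)) (h : t ∈ J ⊔ Ideal.span {a}) :
    ∃ c, c.IsHomogeneous n ∧ t - a * c ∈ J := by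
  rw [sup_comm, Ideal.mem_span_singleton_sup] at h
  obtain ⟨c, b, hb, rfl⟩ := h
  refine ⟨homogeneousComponent n c, homogeneousComponent_isHomogeneous _ _, ?_⟩
  rw [← homogeneousComponent_eq_self ht, map_add, mul_comm,
    homogeneousComponent_mul_of_isHomogeneous ha, add_sub_cancel_left]
  exact homogeneousComponent_mem_of_mem hJ hb _

lemma mem_of_mem_sup_span_singleton_of_lt {a t : MvPolynomial σ K} {e n : ℕ}
    (ha : a.IsHomogeneous e) (ht : t.IsHomogeneous n) (hn : n < e) (h : t ∈ J ⊔ Ideal.span {a}) :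
    t ∈ J := by
  rw [sup_comm, Ideal.mem_span_singleton_sup] at h
  obtain ⟨c, b, hb, rfl⟩ := h
  rw [← homogeneousComponent_eq_self ht, map_add, mul_comm,
    homogeneousComponent_mul_eq_zero_of_lt ha _ hn, zero_add]
  exact homogeneousComponent_mem_of_mem hJ hb _

/-- Associated primes outside the irrelevant ideal do not matter, because the annihilator of a
homogeneous element is homogeneous, hence contained in the irrelevant ideal. -/
lemma isSMulRegular_quotient_of_forall_notMem [Finite σ] {f : MvPolynomial σ K} {e : ℕ}
    (hf : f.IsHomogeneous e)
    (h : ∀ p ∈ associatedPrimes (MvPolynomial σ K) (MvPolynomial σ K ⧸ J),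
      p ≤ idealOfVars σ K → f ∉ p) :
    IsSMulRegular (MvPolynomial σ K ⧸ J) f := by
  refine (isSMulRegular_quotient_iff_mem_of_smul_mem _ _).2 fun u hu => ?_
  refine (mem_iff_homogeneousComponent_mem hJ u).2 fun n => by_contra fun hn => ?_
  set v := homogeneousComponent n u
  have hv : v.IsHomogeneous n := homogeneousComponent_isHomogeneous _ _
  have hfv : f ∈ J.colon {v} := by
    rw [Submodule.mem_colon_singleton, smul_eq_mul, ← homogeneousComponent_mul_of_isHomogeneous hf]
    exact homogeneousComponent_mem_of_mem hJ hu _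
  have hle : J.colon {v} ≤ idealOfVars σ K := by
    refine le_idealOfVars_of_isHomogeneous (isHomogeneous_colon_span_singleton hJ hv) fun h => hn ?_
    simpa using (Ideal.eq_top_iff_one _).1 h
  obtain ⟨p, hp, hpm⟩ := Ideal.exists_minimalPrimes_le hle
  refine h p ?_ hpm (hp.1.2 hfv)
  let N : Submodule (MvPolynomial σ K) (MvPolynomial σ K ⧸ J) :=
    Submodule.span _ {Submodule.Quotient.mk v}
  refine associatedPrimes.subset_of_injective N.subtype_injective
    (Module.associatedPrimes.minimalPrimes_annihilator_subset_associatedPrimes _ _ ?_)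
  have hann : Module.annihilator _ N = J.colon {v} := by
    ext a
    rw [← Submodule.annihilator, Submodule.mem_annihilator_span_singleton,
      Submodule.mem_colon_singleton, ← Submodule.Quotient.mk_smul, Submodule.Quotient.mk_eq_zero]
  rwa [hann]

end HomogeneousIdeals

section Parameters

open MvPolynomial

attribute [local instance] MvPolynomial.gradedAlgebra

variable {ι : Type*} {N : ℕ} {K : Type u} [Field K]

/-- A homogeneous system of parameters of `K[x₁, …, x_N]`: forms of positive degrees `e i`, as many
as there are variables, whose common zero locus is supported at the origin. -/
structure IsHomogeneousParameterSystem [Fintype ι] (g : ι → MvPolynomial (Fin N) K) (e : ι → ℕ) :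
    Prop where
  isHomogeneous : ∀ i, (g i).IsHomogeneous (e i)
  pos : ∀ i, 0 < e i
  card_eq : Fintype.card ι = N
  mem_minimalPrimes : idealOfVars (Fin N) K ∈ (Ideal.span (Set.range g)).minimalPrimes

namespace IsHomogeneousParameterSystem

variable [Fintype ι] {g : ι → MvPolynomial (Fin N) K} {e : ι → ℕ}
  (hg : IsHomogeneousParameterSystem g e)
include hg

lemma isHomogeneous_span (s : Set ι) :
    (Ideal.span (g '' s)).IsHomogeneous (homogeneousSubmodule (Fin N) K) :=
  HeightThreeQuadrics.isHomogeneous_span (by rintro _ ⟨i, -, rfl⟩; exact ⟨e i, hg.isHomogeneous i⟩)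

lemma mem_idealOfVars (i : ι) : g i ∈ idealOfVars (Fin N) K :=
  hg.mem_minimalPrimes.1.2 (Ideal.subset_span ⟨i, rfl⟩)

lemma height_Ici_le {s : Finset ι} {p : PrimeSpectrum (MvPolynomial (Fin N) K)}
    (hs : Ideal.span (g '' s) ≤ p.asIdeal)
    (hpm : p ≤ ⟨idealOfVars (Fin N) K, (idealOfVars_isMaximal _).isPrime⟩) :
    Order.height (⟨_, hpm⟩ : Set.Ici p) ≤ (N - s.card : ℕ) := by
  classical
  refine (height_Ici_le_card hpm hs (t := sᶜ.image g) ?_).trans ?_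
  · rw [← Ideal.span_union, Finset.coe_image, ← Set.image_union, Finset.coe_compl,
      Set.union_compl_self, Set.image_univ]
    exact hg.mem_minimalPrimes
  · have hcard : sᶜ.card = N - s.card := by rw [Finset.card_compl, hg.card_eq]
    exact_mod_cast hcard ▸ Finset.card_image_le

lemma isSMulRegular_of_depthAtLeast {s : Finset ι} {i : ι} (hi : i ∉ s)
    (h : DepthAtLeast (residueField K N)
      (.of _ (MvPolynomial (Fin N) K ⧸ Ideal.span (g '' s))) (N - s.card)) :
    IsSMulRegular (MvPolynomial (Fin N) K ⧸ Ideal.span (g '' s)) (g i) := by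
  refine isSMulRegular_quotient_of_forall_notMem (hg.isHomogeneous_span _) (hg.isHomogeneous i)
    fun p hp hpm hip => ?_
  classical
  have hsp : Ideal.span (g '' s) ≤ p := by
    have := IsAssociatedPrime.annihilator_le hp
    rwa [Submodule.annihilator_top, Ideal.annihilator_quotient] at this
  have hle : Ideal.span (g '' ↑(insert i s)) ≤ p := by
    rw [Finset.coe_insert, Set.image_insert_eq, Ideal.span_insert]
    exact sup_le ((Ideal.span_singleton_le_iff_mem _).2 hip) hsp
  have hcard : s.card < N := by
    rw [← hg.card_eq, ← Finset.card_univ]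
    exact Finset.card_lt_card (Finset.ssubset_univ_iff.2 fun hs => hi (hs ▸ Finset.mem_univ i))
  have key := (DepthAtLeast.le_height_Ici
    (m := ⟨idealOfVars (Fin N) K, (idealOfVars_isMaximal _).isPrime⟩) (p := ⟨p, hp.isPrime⟩)
    h hp hpm).trans (hg.height_Ici_le hle hpm)
  rw [Finset.card_insert_of_notMem hi] at key
  have : N - s.card ≤ N - (s.card + 1) := by exact_mod_cast key
  lia

lemma depthAtLeast (s : Finset ι) : DepthAtLeast (residueField K N)
    (.of _ (MvPolynomial (Fin N) K ⧸ Ideal.span (g '' s))) (N - s.card) := by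
  classical
  induction s using Finset.induction_on with
  | empty =>
    rw [Finset.coe_empty, Set.image_empty, Ideal.span_empty]
    exact depthAtLeast_quotient_bot
  | insert i s hi ih =>
    have hreg := hg.isSMulRegular_of_depthAtLeast hi ih
    rw [Finset.coe_insert, Set.image_insert_eq, Ideal.span_insert, sup_comm,
      Finset.card_insert_of_notMem hi]
    have hcard : (insert i s).card ≤ N := hg.card_eq ▸ Finset.card_le_univ _
    rw [Finset.card_insert_of_notMem hi] at hcard
    exact DepthAtLeast.isSMulRegular_quotient hreg
      ((show N - s.card = N - (s.card + 1) + 1 by lia) ▸ ih)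

theorem isSMulRegular {s : Finset ι} {i : ι} (hi : i ∉ s) :
    IsSMulRegular (MvPolynomial (Fin N) K ⧸ Ideal.span (g '' s)) (g i) :=
  hg.isSMulRegular_of_depthAtLeast hi (hg.depthAtLeast s)

end IsHomogeneousParameterSystem

end Parameters

section HilbertSeries

open MvPolynomial Module

attribute [local instance] MvPolynomial.gradedAlgebra

lemma finrank_map_add_finrank_inf_ker {K V W : Type*} [DivisionRing K] [AddCommGroup V] [Module K V]
    [AddCommGroup W] [Module K W] (p : Submodule K V) [FiniteDimensional K p] (f : V →ₗ[K] W) :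
    finrank K (p.map f) + finrank K (p ⊓ LinearMap.ker f : Submodule K V) = finrank K p := by
  rw [← LinearMap.range_domRestrict, ← LinearMap.finrank_range_add_finrank_ker (f.domRestrict p),
    LinearMap.ker_domRestrict, ← Submodule.finrank_map_subtype_eq, Submodule.map_comap_subtype]

variable {K : Type u} [Field K] {N : ℕ}

/-- The piece of degree `n` of `S/J`; its dimension is `hilbertFunction K J n`. -/
noncomputable def gradedPiece (J : Ideal (MvPolynomial (Fin N) K)) (n : ℕ) :
    Submodule K (MvPolynomial (Fin N) K ⧸ J) :=
  (homogeneousSubmodule (Fin N) K n).map (Ideal.Quotient.mkₐ K J).toLinearMap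

instance (n : ℕ) : FiniteDimensional K (homogeneousSubmodule (Fin N) K n) :=
  Module.Finite.iff_fg.2 (homogeneousSubmodule_fg _ K n)

instance (J : Ideal (MvPolynomial (Fin N) K)) (n : ℕ) : FiniteDimensional K (gradedPiece J n) :=
  inferInstanceAs <| FiniteDimensional K
    ((homogeneousSubmodule (Fin N) K n).map (Ideal.Quotient.mkₐ K J).toLinearMap)

variable {J J' : Ideal (MvPolynomial (Fin N) K)}

lemma mk_mem_gradedPiece (J : Ideal (MvPolynomial (Fin N) K)) {t : MvPolynomial (Fin N) K} {n : ℕ}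
    (ht : t.IsHomogeneous n) : Ideal.Quotient.mk J t ∈ gradedPiece J n :=
  ⟨t, ht, rfl⟩

lemma hilbertFunction_add_finrank_ker (h : J ≤ J') (n : ℕ) :
    hilbertFunction K J' n + finrank K (gradedPiece J n ⊓
      LinearMap.ker (Ideal.Quotient.factorₐ K h).toLinearMap :
        Submodule K (MvPolynomial (Fin N) K ⧸ J)) = hilbertFunction K J n := by
  have := finrank_map_add_finrank_inf_ker (gradedPiece J n)
    (Ideal.Quotient.factorₐ K h).toLinearMap
  rwa [gradedPiece, ← Submodule.map_comp] at this

lemma hilbertFunction_le_of_le (h : J ≤ J') (n : ℕ) :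
    hilbertFunction K J' n ≤ hilbertFunction K J n :=
  (Nat.le_add_right _ _).trans_eq (hilbertFunction_add_finrank_ker h n)

lemma hilbertFunction_lt_of_mem_of_notMem (h : J ≤ J') {t : MvPolynomial (Fin N) K} {n : ℕ}
    (ht : t.IsHomogeneous n) (htJ' : t ∈ J') (htJ : t ∉ J) :
    hilbertFunction K J' n < hilbertFunction K J n := by
  rw [← hilbertFunction_add_finrank_ker h, Nat.lt_add_right_iff_pos, finrank_pos_iff]
  refine ⟨⟨⟨Ideal.Quotient.mk J t, mk_mem_gradedPiece J ht, ?_⟩, 0, ?_⟩⟩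
  · simpa [Ideal.Quotient.eq_zero_iff_mem] using htJ'
  · simpa [← Subtype.coe_inj, Ideal.Quotient.eq_zero_iff_mem] using htJ

lemma hilbertFunction_add_sup_span_singleton
    (hJ : J.IsHomogeneous (homogeneousSubmodule (Fin N) K)) {a : MvPolynomial (Fin N) K} {e : ℕ}
    (ha : a.IsHomogeneous e) (hreg : IsSMulRegular (MvPolynomial (Fin N) K ⧸ J) a) (n : ℕ) :
    hilbertFunction K (J ⊔ Ideal.span {a}) (e + n) + hilbertFunction K J n =
      hilbertFunction K J (e + n) := by
  have hle : J ≤ J ⊔ Ideal.span {a} := le_sup_left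
  let μ : (MvPolynomial (Fin N) K ⧸ J) →ₗ[K] (MvPolynomial (Fin N) K ⧸ J) :=
    LinearMap.mulLeft K (Ideal.Quotient.mk J a)
  have hμ : Function.Injective μ := hreg
  rw [← hilbertFunction_add_finrank_ker hle (e + n), hilbertFunction.eq_1 K J n, ← gradedPiece,
    LinearEquiv.finrank_eq (Submodule.equivMapOfInjective μ hμ _)]
  suffices h : (gradedPiece J n).map μ = gradedPiece J (e + n) ⊓
      LinearMap.ker (Ideal.Quotient.factorₐ K hle).toLinearMap by rw [h]
  ext y
  constructor
  · rintro ⟨_, ⟨t, ht, rfl⟩, rfl⟩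
    refine ⟨mk_mem_gradedPiece J (ha.mul ht), ?_⟩
    exact Ideal.Quotient.eq_zero_iff_mem.2
      (Ideal.mul_mem_right _ _ (Ideal.mem_sup_right (Ideal.mem_span_singleton_self a)))
  · rintro ⟨⟨t, ht, rfl⟩, hker⟩
    obtain ⟨c, hc, hmem⟩ := exists_isHomogeneous_sub_mul_mem hJ ha ht
      (Ideal.Quotient.eq_zero_iff_mem.1 hker)
    refine ⟨_, mk_mem_gradedPiece J hc, ?_⟩
    exact ((Ideal.Quotient.mk_eq_mk_iff_sub_mem _ _).2 hmem).symm

lemma hilbertFunction_sup_span_singleton_of_lt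
    (hJ : J.IsHomogeneous (homogeneousSubmodule (Fin N) K)) {a : MvPolynomial (Fin N) K} {e n : ℕ}
    (ha : a.IsHomogeneous e) (hn : n < e) :
    hilbertFunction K (J ⊔ Ideal.span {a}) n = hilbertFunction K J n := by
  have hle : J ≤ J ⊔ Ideal.span {a} := le_sup_left
  rw [← hilbertFunction_add_finrank_ker hle, Nat.left_eq_add, Submodule.finrank_eq_zero, eq_bot_iff]
  rintro _ ⟨⟨t, ht, rfl⟩, hker⟩
  exact Ideal.Quotient.eq_zero_iff_mem.2
    (mem_of_mem_sup_span_singleton_of_lt hJ ha ht hn (Ideal.Quotient.eq_zero_iff_mem.1 hker))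

/-- The Hilbert series of `S/J`. -/
noncomputable def hilbertSeries (J : Ideal (MvPolynomial (Fin N) K)) : PowerSeries ℤ :=
  .mk fun n => (hilbertFunction K J n : ℤ)

lemma coeff_hilbertSeries (J : Ideal (MvPolynomial (Fin N) K)) (n : ℕ) :
    (hilbertSeries J).coeff n = hilbertFunction K J n :=
  PowerSeries.coeff_mk _ _

lemma hilbertSeries_sup_span_singleton
    (hJ : J.IsHomogeneous (homogeneousSubmodule (Fin N) K)) {a : MvPolynomial (Fin N) K} {e : ℕ}
    (ha : a.IsHomogeneous e) (hreg : IsSMulRegular (MvPolynomial (Fin N) K ⧸ J) a) :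
    hilbertSeries (J ⊔ Ideal.span {a}) = (1 - PowerSeries.X ^ e) * hilbertSeries J := by
  ext n
  rw [sub_mul, one_mul, map_sub, PowerSeries.coeff_X_pow_mul', coeff_hilbertSeries,
    coeff_hilbertSeries]
  split_ifs with h
  · obtain ⟨n, rfl⟩ := Nat.exists_eq_add_of_le h
    rw [Nat.add_sub_cancel_left, coeff_hilbertSeries,
      ← hilbertFunction_add_sup_span_singleton hJ ha hreg]
    simp
  · rw [hilbertFunction_sup_span_singleton_of_lt hJ ha (not_le.1 h), sub_zero]

lemma hilbertSeries_idealOfVars : hilbertSeries (idealOfVars (Fin N) K) = 1 := by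
  ext n
  rw [coeff_hilbertSeries, PowerSeries.coeff_one]
  split_ifs with h
  · subst h
    have : gradedPiece (idealOfVars (Fin N) K) 0 = Submodule.span K {1} := by
      rw [gradedPiece, homogeneousSubmodule_zero, Submodule.one_eq_span, Submodule.map_span,
        Set.image_singleton]
      rfl
    rw [hilbertFunction, ← gradedPiece, this, finrank_span_singleton one_ne_zero, Nat.cast_one]
  · rw [Nat.cast_eq_zero, hilbertFunction, ← gradedPiece, Submodule.finrank_eq_zero, eq_bot_iff]
    rintro _ ⟨t, ht, rfl⟩
    refine Ideal.Quotient.eq_zero_iff_mem.2 ((mem_idealOfVars_iff t).2 ?_)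
    exact IsHomogeneous.coeff_eq_zero ht (by simpa using Ne.symm h)

namespace IsHomogeneousParameterSystem

lemma hilbertSeries_span {ι : Type*} [Fintype ι] {g : ι → MvPolynomial (Fin N) K} {e : ι → ℕ}
    (hg : IsHomogeneousParameterSystem g e) (s : Finset ι) :
    hilbertSeries (Ideal.span (g '' s)) =
      (∏ i ∈ s, (1 - PowerSeries.X ^ e i)) *
        hilbertSeries (⊥ : Ideal (MvPolynomial (Fin N) K)) := by
  classical
  induction s using Finset.induction_on with
  | empty => simp
  | insert i s hi ih =>
    rw [Finset.coe_insert, Set.image_insert_eq, Ideal.span_insert, sup_comm,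
      hilbertSeries_sup_span_singleton (hg.isHomogeneous_span _) (hg.isHomogeneous i)
        (hg.isSMulRegular hi), ih, Finset.prod_insert hi, mul_assoc]

end IsHomogeneousParameterSystem

variable (K N) in
lemma isHomogeneousParameterSystem_X :
    IsHomogeneousParameterSystem (X : Fin N → MvPolynomial (Fin N) K) fun _ => 1 where
  isHomogeneous := isHomogeneous_X K
  pos _ := one_pos
  card_eq := Fintype.card_fin N
  mem_minimalPrimes := ⟨⟨(idealOfVars_isMaximal _).isPrime, le_rfl⟩, fun _ h _ => h.2⟩

lemma one_sub_X_pow_mul_hilbertSeries_bot :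
    (1 - PowerSeries.X) ^ N * hilbertSeries (⊥ : Ideal (MvPolynomial (Fin N) K)) = 1 := by
  have := (isHomogeneousParameterSystem_X K N).hilbertSeries_span Finset.univ
  rw [Finset.coe_univ, Set.image_univ, ← idealOfVars, hilbertSeries_idealOfVars] at this
  simpa using this.symm

end HilbertSeries

section Avoidance

open MvPolynomial

lemma exists_mem_forall_notMem_ideal {K A : Type*} [Field K] [Infinite K] [CommRing A] [Algebra K A]
    (V : Submodule K A) {P : Set (Ideal A)} (hP : P.Finite) (h : ∀ p ∈ P, ∃ v ∈ V, v ∉ p) :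
    ∃ v ∈ V, ∀ p ∈ P, v ∉ p := by
  classical
  let f : Ideal A → Subspace K V := fun p => (p.restrictScalars K).comap V.subtype
  have hf : ⊤ ∉ hP.toFinset.image f := by
    intro htop
    obtain ⟨p, hp, hpt⟩ := Finset.mem_image.1 htop
    obtain ⟨v, hv, hvp⟩ := h p (hP.mem_toFinset.1 hp)
    exact hvp (show (⟨v, hv⟩ : V) ∈ f p from hpt ▸ trivial)
  obtain ⟨⟨v, hv⟩, hvP⟩ :=
    (Set.ne_univ_iff_exists_notMem _).1 (Subspace.biUnion_ne_univ_of_top_notMem hf)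
  refine ⟨v, hv, fun p hp hvp => hvP ?_⟩
  simp only [Set.mem_iUnion]
  exact ⟨f p, Finset.mem_image_of_mem f (hP.mem_toFinset.2 hp), hvp⟩

end Avoidance

section Socle

open MvPolynomial

attribute [local instance] MvPolynomial.gradedAlgebra

variable {K : Type u} [Field K] {N : ℕ}

lemma mem_of_hilbertFunction_eq_zero {J : Ideal (MvPolynomial (Fin N) K)} {n : ℕ}
    (h : hilbertFunction K J n = 0) {t : MvPolynomial (Fin N) K} (ht : t.IsHomogeneous n) :
    t ∈ J := by
  rw [hilbertFunction, ← gradedPiece, Submodule.finrank_eq_zero] at h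
  have := mk_mem_gradedPiece J ht
  rwa [h, Submodule.mem_bot, Ideal.Quotient.eq_zero_iff_mem] at this

lemma mul_mem_of_forall_X_mul_mem {σ : Type*} {J : Ideal (MvPolynomial σ K)}
    {u l : MvPolynomial σ K} (hu : ∀ i, X i * u ∈ J) (hl : l ∈ idealOfVars σ K) : l * u ∈ J := by
  have : idealOfVars σ K ≤ J.colon {u} :=
    Ideal.span_le.2 (by rintro _ ⟨i, rfl⟩; exact Submodule.mem_colon_singleton.2 (hu i))
  exact Submodule.mem_colon_singleton.1 (this hl)

lemma mem_sup_span_singleton_of_isSMulRegular {R : Type*} [CommRing R] {J : Ideal R} {a b x y : R}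
    (ha : IsSMulRegular (R ⧸ J) a) (h : a * x - b * y ∈ J) (hy : y ∈ J ⊔ Ideal.span {a}) :
    x ∈ J ⊔ Ideal.span {b} := by
  rw [sup_comm, Ideal.mem_span_singleton_sup] at hy ⊢
  obtain ⟨c, j, hj, rfl⟩ := hy
  refine ⟨c, x - c * b, ?_, by ring⟩
  refine mem_of_isSMulRegular_quotient_of_smul_mem ha ?_
  rw [smul_eq_mul, show a * (x - c * b) = a * x - b * (c * a + j) + b * j by ring]
  exact J.add_mem h (J.mul_mem_left _ hj)

lemma span_range_update {R ι : Type*} [CommRing R] [Fintype ι] [DecidableEq ι]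
    (g : ι → R) (i : ι)
    (l : R) : Ideal.span (Set.range (Function.update g i l)) =
      Ideal.span (g '' ({i}ᶜ : Finset ι)) ⊔ Ideal.span {l} := by
  rw [← Set.image_univ, ← Set.compl_union_self {i}, Set.image_union, Set.image_singleton,
    Function.update_self, Ideal.span_union, Finset.coe_compl, Finset.coe_singleton]
  congr 2
  exact Set.image_congr fun j hj => Function.update_of_ne hj _ _

namespace IsHomogeneousParameterSystem

variable {ι : Type*} [Fintype ι] {g : ι → MvPolynomial (Fin N) K} {e : ι → ℕ}

lemma mem_minimalPrimes_sup_span_singleton [DecidableEq ι] (hg : IsHomogeneousParameterSystem g e)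
    (i : ι) {l : MvPolynomial (Fin N) K} (hl : l ∈ idealOfVars (Fin N) K)
    (hlp : ∀ p ∈ (Ideal.span (g '' ({i}ᶜ : Finset ι))).minimalPrimes,
      p ≠ idealOfVars (Fin N) K → l ∉ p) :
    idealOfVars (Fin N) K ∈
      (Ideal.span (g '' ({i}ᶜ : Finset ι)) ⊔ Ideal.span {l}).minimalPrimes := by
  let m : PrimeSpectrum (MvPolynomial (Fin N) K) :=
    ⟨idealOfVars (Fin N) K, (idealOfVars_isMaximal _).isPrime⟩
  refine ⟨⟨m.2, sup_le ((Ideal.span_mono (Set.image_subset_range _ _)).trans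
    hg.mem_minimalPrimes.1.2) ((Ideal.span_singleton_le_iff_mem _).2 hl)⟩, fun q hq hqm => ?_⟩
  by_contra hmq
  have hq_prime := hq.1
  obtain ⟨p, hp, hpq⟩ := Ideal.exists_minimalPrimes_le (le_sup_left.trans hq.2)
  have hlq : l ∈ q := hq.2 (Ideal.mem_sup_right (Ideal.mem_span_singleton_self l))
  have hlt : (⟨p, hp.1.1⟩ : PrimeSpectrum _) < ⟨q, hq.1⟩ :=
    lt_of_le_not_ge hpq fun h => hlp p hp (fun h => hmq (h ▸ hpq)) (h hlq)
  have hlt' : (⟨q, hq.1⟩ : PrimeSpectrum _) < m := lt_of_le_not_ge hqm hmq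
  have key := (hg.height_Ici_le (p := ⟨p, hp.1.1⟩) hp.1.2 (hlt.le.trans hqm)).trans' <|
    (add_le_add_left (height_Ici_add_one_le hlt' le_rfl) 1).trans
      (height_Ici_add_one_le hlt hlt'.le)
  rw [Finset.card_compl, Finset.card_singleton, hg.card_eq] at key
  have : 1 + 1 ≤ N - (N - 1) := by
    exact_mod_cast (add_le_add_left le_add_self 1).trans key
  lia

lemma exists_update [Infinite K] [DecidableEq ι] (hg : IsHomogeneousParameterSystem g e) (i : ι) :
    ∃ l, IsHomogeneousParameterSystem (Function.update g i l) (Function.update e i 1) := by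
  set J := Ideal.span (g '' ({i}ᶜ : Finset ι)) with hJ
  obtain ⟨l, hl, hlp⟩ := exists_mem_forall_notMem_ideal (homogeneousSubmodule (Fin N) K 1)
    (P := J.minimalPrimes \ {idealOfVars (Fin N) K})
    (Ideal.finite_minimalPrimes_of_isNoetherianRing _ J).sdiff fun p hp => by
      by_contra! h
      exact hp.2 ((idealOfVars_isMaximal _).eq_of_le hp.1.1.1.ne_top
        (Ideal.span_le.2 (by rintro _ ⟨j, rfl⟩; exact h _ (isHomogeneous_X K j)))).symm
  have hlm : l ∈ idealOfVars (Fin N) K := by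
    rw [mem_idealOfVars_iff]
    exact IsHomogeneous.coeff_eq_zero hl (by simp)
  refine ⟨l, fun j => ?_, fun j => ?_, hg.card_eq, ?_⟩
  · by_cases hj : j = i
    · subst hj; simpa using hl
    · simpa [hj] using hg.isHomogeneous j
  · by_cases hj : j = i <;> simp [hj, hg.pos]
  · rw [span_range_update]
    exact hg.mem_minimalPrimes_sup_span_singleton i hlm fun p hp hne => hlp p ⟨hp, hne⟩

lemma isSMulRegular_of_update [DecidableEq ι] {i : ι} {l : MvPolynomial (Fin N) K} {e' : ι → ℕ}
    (hl : IsHomogeneousParameterSystem (Function.update g i l) e') :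
    IsSMulRegular (MvPolynomial (Fin N) K ⧸ Ideal.span (g '' ({i}ᶜ : Finset ι))) l := by
  have := hl.isSMulRegular (s := {i}ᶜ) (i := i) (by simp)
  rwa [Function.update_self, Set.image_congr (g := g) fun j hj =>
    Function.update_of_ne (by simpa using hj) _ _] at this

lemma eq_zero_of_forall_eq_one (hg : IsHomogeneousParameterSystem g e) (he : ∀ i, e i = 1)
    {u : MvPolynomial (Fin N) K} {n : ℕ} (hu : u.IsHomogeneous n)
    (hu_notMem : u ∉ Ideal.span (Set.range g)) : n = 0 := by
  by_contra hn
  refine hu_notMem (mem_of_hilbertFunction_eq_zero (n := n) ?_ hu)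
  have := hg.hilbertSeries_span Finset.univ
  simp only [he, pow_one, Finset.prod_const, Finset.card_univ, hg.card_eq, Finset.coe_univ,
    Set.image_univ, one_sub_X_pow_mul_hilbertSeries_bot] at this
  simpa [coeff_hilbertSeries, PowerSeries.coeff_one, hn] using congr(($this).coeff n)

lemma exists_socle_update [DecidableEq ι] (hg : IsHomogeneousParameterSystem g e) {i : ι}
    {l : MvPolynomial (Fin N) K}
    (hl : IsHomogeneousParameterSystem (Function.update g i l) (Function.update e i 1))
    {u : MvPolynomial (Fin N) K} {n : ℕ} (hu : u.IsHomogeneous n)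
    (hX : ∀ i, X i * u ∈ Ideal.span (Set.range g)) (hu_notMem : u ∉ Ideal.span (Set.range g)) :
    ∃ v n', n + 1 = e i + n' ∧ v.IsHomogeneous n' ∧
      (∀ j, X j * v ∈ Ideal.span (Set.range (Function.update g i l))) ∧
      v ∉ Ideal.span (Set.range (Function.update g i l)) := by
  set J := Ideal.span (g '' ({i}ᶜ : Finset ι)) with hJ
  have hspan : Ideal.span (Set.range g) = J ⊔ Ideal.span {g i} := by
    rw [← span_range_update, Function.update_eq_self]
  have hli : IsSMulRegular (_ ⧸ J) l := hl.isSMulRegular_of_update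
  have hgi : IsSMulRegular (_ ⧸ J) (g i) := hg.isSMulRegular (s := {i}ᶜ) (by simp)
  rw [hspan] at hX hu_notMem
  rw [span_range_update]
  have hlu : l * u ∈ J ⊔ Ideal.span {g i} :=
    mul_mem_of_forall_X_mul_mem hX (by simpa using hl.mem_idealOfVars i)
  have hlu_hom : (l * u).IsHomogeneous (n + 1) :=
    add_comm 1 n ▸ IsHomogeneous.mul (by simpa using hl.isHomogeneous i) hu
  have hle : e i ≤ n + 1 := by
    by_contra! hlt
    refine hu_notMem (le_sup_left (a := J) (mem_of_isSMulRegular_quotient_of_smul_mem hli ?_))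
    exact mem_of_mem_sup_span_singleton_of_lt (hg.isHomogeneous_span _) (hg.isHomogeneous i)
      hlu_hom hlt hlu
  obtain ⟨n', hn'⟩ := Nat.exists_eq_add_of_le hle
  obtain ⟨v, hv, hluv⟩ := exists_isHomogeneous_sub_mul_mem (hg.isHomogeneous_span _)
    (hg.isHomogeneous i) (hn' ▸ hlu_hom) hlu
  refine ⟨v, n', hn', hv, fun j => ?_, fun hvJ => hu_notMem ?_⟩
  · refine mem_sup_span_singleton_of_isSMulRegular hgi (y := X j * u) ?_ (hX j)
    rw [show g i * (X j * v) - l * (X j * u) = -X j * (l * u - g i * v) by ring]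
    exact J.mul_mem_left _ hluv
  · exact mem_sup_span_singleton_of_isSMulRegular hli hluv hvJ

/-- The socle of `S/(g)` sits in degree `∑ (e i - 1)`. For a general linear form `l`, if `u` is a
socle element then `l u ≡ g i * v` modulo the other parameters, where `v` is a socle element once
`g i` is replaced by `l`; this reduces to the case of linear parameters. -/
theorem add_card_eq_sum_of_forall_X_mul_mem [Infinite K] (hg : IsHomogeneousParameterSystem g e)
    {u : MvPolynomial (Fin N) K} {n : ℕ} (hu : u.IsHomogeneous n)
    (hX : ∀ i, X i * u ∈ Ideal.span (Set.range g)) (hu_notMem : u ∉ Ideal.span (Set.range g)) :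
    n + N = ∑ i, e i := by
  classical
  induction h : ∑ i, e i using Nat.strong_induction_on generalizing g e u n with | _ s ih
  by_cases he : ∀ i, e i = 1
  · rw [hg.eq_zero_of_forall_eq_one he hu hu_notMem, ← h]
    simp [he, hg.card_eq]
  push Not at he
  obtain ⟨i, hi⟩ := he
  have hei := hg.pos i
  obtain ⟨l, hl⟩ := hg.exists_update i
  obtain ⟨v, n', hn', hv, hXv, hv_notMem⟩ := hg.exists_socle_update hl hu hX hu_notMem
  have hsum : ∑ j, Function.update e i 1 j + e i = s + 1 := by
    rw [Finset.sum_update_of_mem (Finset.mem_univ i), ← h,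
      ← Finset.sum_sdiff (Finset.subset_univ {i}), Finset.sum_singleton]
    ring
  have := ih _ (by lia) hl hv hXv hv_notMem rfl
  lia

end IsHomogeneousParameterSystem
end Socle

section ParameterChoice

open MvPolynomial

attribute [local instance] MvPolynomial.gradedAlgebra

section

variable {K A : Type*} [Field K] [Infinite K] [CommRing A] [IsNoetherianRing A] [Algebra K A]
  (V : Submodule K A)

lemma exists_mem_le_height_sup_span_singleton {J : Ideal A} {i : ℕ} (hJ : i ≤ J.height)
    (hV : i + 1 ≤ (J ⊔ Ideal.span V).height) :
    ∃ v ∈ V, i + 1 ≤ (J ⊔ Ideal.span {v}).height := by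
  obtain ⟨v, hv, hvP⟩ := exists_mem_forall_notMem_ideal V
    (P := {p ∈ J.minimalPrimes | p.height ≤ i})
    ((Ideal.finite_minimalPrimes_of_isNoetherianRing _ J).subset fun p hp => hp.1) fun p hp => by
      by_contra! h
      have := hV.trans ((Ideal.height_mono (sup_le hp.1.1.2 (Ideal.span_le.2 h))).trans hp.2)
      exact absurd this (by exact_mod_cast Nat.not_succ_le_self i)
  refine ⟨v, hv, ?_⟩
  rw [Ideal.height_eq_inf_minimalPrimes]
  refine le_iInf₂ fun q hq => ?_
  have := hq.1.1
  obtain ⟨p, hp, hpq⟩ := Ideal.exists_minimalPrimes_le (le_sup_left.trans hq.1.2)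
  have := hp.1.1
  by_cases hpi : p.height ≤ i
  · have hlt : p < q := lt_of_le_not_ge hpq fun h => hvP p ⟨hp, hpi⟩
      (h (hq.1.2 (Ideal.mem_sup_right (Ideal.mem_span_singleton_self v))))
    have hip : (i : ℕ∞) ≤ p.height := hJ.trans (Ideal.height_mono hp.1.2)
    exact (add_le_add_left hip 1).trans (Ideal.height_add_one_le_of_lt_of_isPrime hlt)
  · exact (Order.add_one_le_of_lt (not_le.1 hpi)).trans (Ideal.height_mono hpq)

lemma exists_fin_le_height_sup_span_range {J : Ideal A} {i : ℕ} (hJ : i ≤ J.height) (n : ℕ)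
    (hV : (i + n : ℕ) ≤ (J ⊔ Ideal.span V).height) :
    ∃ v : Fin n → A, (∀ j, v j ∈ V) ∧ (i + n : ℕ) ≤ (J ⊔ Ideal.span (Set.range v)).height := by
  induction n with
  | zero => exact ⟨Fin.elim0, nofun, by simpa using hJ⟩
  | succ n ih =>
    obtain ⟨v, hv, hvJ⟩ := ih (le_trans (by exact_mod_cast Nat.le_succ _) hV)
    obtain ⟨w, hw, hwJ⟩ := exists_mem_le_height_sup_span_singleton V hvJ
      (le_trans (by exact_mod_cast hV) (Ideal.height_mono (sup_le_sup_right le_sup_left _)))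
    refine ⟨Fin.snoc v w, Fin.lastCases (by simpa using hw) (by simpa using hv), ?_⟩
    rw [Fin.range_snoc, Ideal.span_insert, sup_comm (Ideal.span {w}), ← sup_assoc]
    exact_mod_cast hwJ

end

variable {K : Type u} [Field K] {N : ℕ}

lemma le_height_idealOfVars : N ≤ (idealOfVars (Fin N) K).height := by
  let m : PrimeSpectrum (MvPolynomial (Fin N) K) :=
    ⟨idealOfVars (Fin N) K, (idealOfVars_isMaximal _).isPrime⟩
  have hbot : (⊥ : Ideal (MvPolynomial (Fin N) K)) ∈
      associatedPrimes _ (MvPolynomial (Fin N) K ⧸ (⊥ : Ideal (MvPolynomial (Fin N) K))) :=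
    mem_associatedPrimes_quotient_of_mem_minimalPrimes
      (by rw [Ideal.minimalPrimes_eq_subsingleton_self]; rfl)
  have hle : (⟨⊥, Ideal.isPrime_bot⟩ : PrimeSpectrum (MvPolynomial (Fin N) K)) ≤ m :=
    bot_le (a := m.asIdeal)
  refine (DepthAtLeast.le_height_Ici (m := m) (p := ⟨⊥, Ideal.isPrime_bot⟩)
    depthAtLeast_quotient_bot hbot hle).trans ?_
  rw [show idealOfVars (Fin N) K = m.asIdeal from rfl, PrimeSpectrum.height_eq_orderHeight]
  exact Order.height_le_height_apply_of_strictMono _ (Subtype.strictMono_coe _) _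

lemma height_idealOfVars_le : (idealOfVars (Fin N) K).height ≤ N := by
  have hm := idealOfVars_isMaximal (K := K) (Fin N)
  have := Ideal.height_le_ringKrullDim_of_isPrime (I := idealOfVars (Fin N) K)
  rw [MvPolynomial.ringKrullDim_of_isNoetherianRing] at this
  rw [ringKrullDim_eq_zero_of_field, Nat.card_fin, zero_add] at this
  exact_mod_cast this

theorem exists_isHomogeneousParameterSystem [Infinite K] {I : Ideal (MvPolynomial (Fin N) K)}
    {e c d : ℕ} (he : 0 < e) (hN : c + d = N)
    (hI : c ≤ (Ideal.span {f ∈ I | f.IsHomogeneous e}).height) :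
    ∃ (f : Fin c → MvPolynomial (Fin N) K) (z : Fin d → MvPolynomial (Fin N) K),
      (∀ i, f i ∈ I) ∧ c ≤ (Ideal.span (Set.range f)).height ∧
      IsHomogeneousParameterSystem (Sum.elim f z) (Sum.elim (fun _ => e) fun _ => 1) := by
  have hm := idealOfVars_isMaximal (K := K) (Fin N)
  obtain ⟨f, hf, hfh⟩ := exists_fin_le_height_sup_span_range
    (I.restrictScalars K ⊓ homogeneousSubmodule (Fin N) K e) (J := ⊥) (i := 0) (by simp) c
    (by rw [bot_sup_eq, zero_add]; exact hI)
  have hvars : idealOfVars (Fin N) K ≤ Ideal.span (homogeneousSubmodule (Fin N) K 1) :=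
    Ideal.span_mono (by rintro _ ⟨i, rfl⟩; exact isHomogeneous_X K i)
  obtain ⟨z, hz, hzh⟩ := exists_fin_le_height_sup_span_range
    (homogeneousSubmodule (Fin N) K 1) (J := Ideal.span (Set.range f)) (by simpa using hfh) d
    (le_trans (by exact_mod_cast hN.le)
      (le_height_idealOfVars.trans (Ideal.height_mono (hvars.trans le_sup_right))))
  have hhom : ∀ i, (Sum.elim f z i).IsHomogeneous
      (Sum.elim (fun _ => e) (fun _ => 1) i : ℕ) := by
    rintro (i | i)
    exacts [(hf i).2, hz i]
  have hpos : ∀ i : Fin c ⊕ Fin d, 0 < (Sum.elim (fun _ => e) (fun _ => 1) i : ℕ) := by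
    rintro (_ | _)
    exacts [he, one_pos]
  refine ⟨f, z, fun i => (hf i).1, by simpa using hfh, hhom, hpos, by simp [hN], ?_⟩
  refine Ideal.mem_minimalPrimes_of_height_le (Ideal.span_le.2 ?_) ?_
  · rintro _ ⟨i, rfl⟩
    exact (mem_idealOfVars_iff _).2 ((hhom i).coeff_eq_zero (by simpa using (hpos i).ne))
  · rw [Set.Sum.elim_range, Ideal.span_union]
    exact height_idealOfVars_le.trans (le_trans (by exact_mod_cast hN.ge) hzh)

end ParameterChoice

section FilteredPieces

open MvPolynomial Module

attribute [local instance] MvPolynomial.gradedAlgebra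

lemma restrictTotalDegree_succ (σ K : Type*) [CommSemiring K] (n : ℕ) :
    restrictTotalDegree σ K (n + 1) =
      restrictTotalDegree σ K n ⊔ homogeneousSubmodule σ K (n + 1) := by
  refine le_antisymm (fun p hp => ?_) (sup_le (fun p hp => ?_) fun p hp => ?_)
  · rw [mem_restrictTotalDegree] at hp
    rw [← sum_homogeneousComponent p]
    refine Submodule.sum_mem _ fun i hi => ?_
    obtain hi' | rfl := (Finset.mem_range_succ_iff.1 hi).trans hp |>.lt_or_eq
    · exact Submodule.mem_sup_left ((mem_restrictTotalDegree ..).2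
        ((homogeneousComponent_isHomogeneous i p).totalDegree_le.trans (Nat.lt_succ_iff.1 hi')))
    · exact Submodule.mem_sup_right (homogeneousComponent_mem _ p)
  · exact (mem_restrictTotalDegree ..).2 (((mem_restrictTotalDegree ..).1 hp).trans n.le_succ)
  · exact (mem_restrictTotalDegree ..).2 (IsHomogeneous.totalDegree_le hp)

variable {K : Type u} [Field K] {N : ℕ}

/-- The degree filtration on `S ⧸ J`: the classes of the polynomials of total degree at most `n`. -/
noncomputable def filteredPiece (J : Ideal (MvPolynomial (Fin N) K)) (n : ℕ) :
    Submodule K (MvPolynomial (Fin N) K ⧸ J) :=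
  (restrictTotalDegree (Fin N) K n).map (Ideal.Quotient.mkₐ K J).toLinearMap

instance (J : Ideal (MvPolynomial (Fin N) K)) (n : ℕ) : FiniteDimensional K (filteredPiece J n) :=
  inferInstanceAs <| FiniteDimensional K
    ((restrictTotalDegree (Fin N) K n).map (Ideal.Quotient.mkₐ K J).toLinearMap)

variable {J : Ideal (MvPolynomial (Fin N) K)}

lemma filteredPiece_zero : filteredPiece J 0 = gradedPiece J 0 := by
  rw [filteredPiece, gradedPiece]
  congr 1
  ext p
  rw [mem_restrictTotalDegree, mem_homogeneousSubmodule, Nat.le_zero,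
    ← totalDegree_zero_iff_isHomogeneous]

lemma filteredPiece_succ (n : ℕ) :
    filteredPiece J (n + 1) = filteredPiece J n ⊔ gradedPiece J (n + 1) := by
  rw [filteredPiece, restrictTotalDegree_succ, Submodule.map_sup, filteredPiece, gradedPiece]

lemma disjoint_filteredPiece_gradedPiece (hJ : J.IsHomogeneous (homogeneousSubmodule (Fin N) K))
    (n : ℕ) : Disjoint (filteredPiece J n) (gradedPiece J (n + 1)) := by
  rw [Submodule.disjoint_def]
  rintro _ ⟨p, hp, rfl⟩ ⟨t, ht, htp⟩
  have hpt : homogeneousComponent (n + 1) (t - p) ∈ J :=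
    homogeneousComponent_mem_of_mem hJ (Ideal.Quotient.eq.1 htp) _
  rw [map_sub, homogeneousComponent_of_mem ht, if_pos rfl, homogeneousComponent_eq_zero _ _
    (Nat.lt_succ_of_le ((mem_restrictTotalDegree ..).1 hp)), sub_zero] at hpt
  rw [← htp]
  exact Ideal.Quotient.eq_zero_iff_mem.2 hpt

lemma finrank_filteredPiece (hJ : J.IsHomogeneous (homogeneousSubmodule (Fin N) K)) (n : ℕ) :
    finrank K (filteredPiece J n) = ∑ i ∈ Finset.range (n + 1), hilbertFunction K J i := by
  induction n with
  | zero => rw [filteredPiece_zero, Finset.sum_range_one, hilbertFunction, ← gradedPiece]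
  | succ n ih =>
    have h := Submodule.finrank_sup_add_finrank_inf_eq (filteredPiece J n) (gradedPiece J (n + 1))
    rw [(disjoint_filteredPiece_gradedPiece hJ n).eq_bot, finrank_bot, add_zero] at h
    rw [filteredPiece_succ, h, ih, Finset.sum_range_succ _ (n + 1), Nat.add_left_cancel_iff,
      hilbertFunction, ← gradedPiece]

variable (K N) in
lemma finrank_restrictTotalDegree (n : ℕ) :
    finrank K (restrictTotalDegree (Fin N) K n) = (N + n).choose N := by
  let D : PowerSeries ℤ := PowerSeries.mk fun n => (finrank K (restrictTotalDegree (Fin N) K n) : ℤ)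
  have hfin (n : ℕ) : finrank K (restrictTotalDegree (Fin N) K n) =
      ∑ i ∈ Finset.range (n + 1), hilbertFunction K (⊥ : Ideal (MvPolynomial (Fin N) K)) i := by
    rw [← finrank_filteredPiece (Ideal.IsHomogeneous.bot _), filteredPiece]
    exact (LinearEquiv.finrank_eq (Submodule.equivMapOfInjective _
      ((RingHom.injective_iff_ker_eq_bot (Ideal.Quotient.mk _)).2 Ideal.mk_ker) _))
  have hD : D = hilbertSeries (⊥ : Ideal (MvPolynomial (Fin N) K)) * PowerSeries.mk 1 := by
    ext n
    simp [D, hfin, PowerSeries.coeff_mul, Finset.Nat.sum_antidiagonal_eq_sum_range_succ_mk,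
      coeff_hilbertSeries]
  have hD_mul : D * (1 - PowerSeries.X) ^ (N + 1) = 1 := by
    rw [hD, pow_succ, mul_mul_mul_comm, PowerSeries.mk_one_mul_one_sub_eq_one, mul_one, mul_comm,
      one_sub_X_pow_mul_hilbertSeries_bot]
  have h := left_inv_eq_right_inv hD_mul ((mul_comm _ _).trans
    (PowerSeries.mk_add_choose_mul_one_sub_pow_eq_one ℤ N))
  simpa [D] using congr(PowerSeries.coeff n $h)

end FilteredPieces

section Growth

open Filter Topology Asymptotics

lemma tendsto_choose_div_pow (d : ℕ) :
    Tendsto (fun n : ℕ => (n.choose d : ℝ) / n ^ d) atTop (𝓝 (1 / d.factorial)) := by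
  refine ((isEquivalent_choose d).div IsEquivalent.refl).symm.tendsto_nhds
    (tendsto_const_nhds.congr' ?_)
  filter_upwards [eventually_gt_atTop 0] with n hn
  simp [field]

lemma tendsto_add_choose_div_add_pow (a b d : ℕ) :
    Tendsto (fun n : ℕ => ((n + a).choose d : ℝ) / (n + b : ℕ) ^ d) atTop
      (𝓝 (1 / d.factorial)) := by
  have hratio : Tendsto (fun n : ℕ => ((n + a : ℕ) : ℝ) / (n + b : ℕ)) atTop (𝓝 1) := by
    have ha := tendsto_natCast_div_add_atTop (a : ℝ) |>.inv₀ one_ne_zero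
    have hb := tendsto_natCast_div_add_atTop (b : ℝ)
    refine (by simpa using ha.mul hb : Tendsto _ _ (𝓝 (1 : ℝ))).congr' ?_
    filter_upwards [eventually_gt_atTop 0] with n hn
    push_cast
    field_simp
  have := ((tendsto_choose_div_pow d).comp (tendsto_add_atTop_nat a)).mul (hratio.pow d)
  rw [one_pow, mul_one] at this
  refine this.congr' ?_
  filter_upwards [eventually_gt_atTop 0] with n hn
  have : ((n + a : ℕ) : ℝ) ≠ 0 := by positivity
  simp only [Function.comp_apply, div_pow]
  field_simp

lemma tendsto_sum_range_div_pow {f : ℕ → ℝ} {D : ℕ} {c : ℝ}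
    (hf : Tendsto (fun n : ℕ => f n / n ^ D) atTop (𝓝 (c / D.factorial))) :
    Tendsto (fun n : ℕ => (∑ i ∈ Finset.range (n + 1), f i) / n ^ (D + 1)) atTop
      (𝓝 (c / (D + 1).factorial)) := by
  let g (i : ℕ) : ℝ := (i + D).choose D
  have hg (n : ℕ) : ∑ i ∈ Finset.range (n + 1), g i = (n + D + 1).choose (D + 1) :=
    by
    simp only [g, ← Nat.sum_range_add_choose, Nat.cast_sum]
  have one_le_g (n : ℕ) : 1 ≤ g n := Nat.one_le_cast.2 (Nat.choose_pos (Nat.le_add_left D n))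
  have hg_pos (n : ℕ) : 0 < g n := one_pos.trans_le (one_le_g n)
  have hg_lim := tendsto_add_choose_div_add_pow (D + 1) 0 (D + 1)
  have hfg : (fun n => f n - c * g n) =o[atTop] g := by
    rw [isLittleO_iff_tendsto fun n hn => absurd hn (hg_pos n).ne']
    have := (hf.div (tendsto_add_choose_div_add_pow D 0 D) (by positivity)).sub_const c
    rw [div_div_div_cancel_right₀ (by positivity), div_one, sub_self] at this
    refine this.congr' ?_
    filter_upwards [eventually_gt_atTop 0] with n hn
    have := (hg_pos n).ne'
    simp only [Pi.div_apply, add_zero, g] at this ⊢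
    field_simp
  have hg_atTop : Tendsto (fun n => ∑ i ∈ Finset.range n, g i) atTop atTop := by
    refine tendsto_atTop_mono (fun n => ?_) tendsto_natCast_atTop_atTop
    simpa using Finset.card_nsmul_le_sum (Finset.range n) g 1 fun i _ => one_le_g i
  have hsum := (hfg.sum_range (fun n => (hg_pos n).le) hg_atTop).comp_tendsto
    (tendsto_add_atTop_nat 1)
  have hlim := (hsum.tendsto_div_nhds_zero.mul hg_lim).add (hg_lim.const_mul c)
  rw [zero_mul, zero_add, mul_one_div] at hlim
  refine hlim.congr fun n => ?_
  have h0 : ((n + (D + 1)).choose (D + 1) : ℝ) ≠ 0 :=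
    mod_cast (Nat.choose_pos (Nat.le_add_left _ _)).ne'
  simp only [Function.comp_apply, hg, Finset.sum_sub_distrib, ← Finset.mul_sum, add_zero, add_assoc]
  field_simp
  ring

end Growth

section Multiplicity

open Filter Topology Asymptotics

lemma le_of_tendsto_div_pow {u : ℕ → ℝ} {a b : ℕ} {x y : ℝ} (hy : y ≠ 0)
    (ha : Tendsto (fun n : ℕ => u n / n ^ a) atTop (𝓝 x))
    (hb : Tendsto (fun n : ℕ => u n / n ^ b) atTop (𝓝 y)) : b ≤ a := by
  by_contra! hab
  have hpow : Tendsto (fun n : ℕ => ((n : ℝ) ^ (b - a))⁻¹) atTop (𝓝 0) :=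
    (tendsto_pow_neg_atTop (Nat.sub_ne_zero_of_lt hab)).comp tendsto_natCast_atTop_atTop |>.congr
      fun n => by simp
  refine hy (tendsto_nhds_unique hb (((mul_zero x) ▸ ha.mul hpow).congr' ?_))
  filter_upwards with n
  rw [← div_eq_mul_inv, div_div, ← pow_add, Nat.add_sub_cancel' hab.le]

lemma tendsto_eval_div_pow_natDegree (P : Polynomial ℚ) :
    Tendsto (fun n : ℕ => ((P.eval (n : ℚ) : ℚ) : ℝ) / n ^ P.natDegree) atTop
      (𝓝 P.leadingCoeff) := by
  have := (((P.map (algebraMap ℚ ℝ)).isEquivalent_atTop_lead.comp_tendsto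
    tendsto_natCast_atTop_atTop).div (IsEquivalent.refl (u := fun n : ℕ => (n : ℝ) ^ P.natDegree)))
  refine (this.symm.tendsto_nhds (tendsto_const_nhds.congr' ?_)).congr fun n => ?_
  · filter_upwards [eventually_ne_atTop 0] with n hn
    have : (n : ℝ) ≠ 0 := Nat.cast_ne_zero.2 hn
    simp [field]
  · simp [Polynomial.eval_map, Polynomial.eval₂_at_natCast]

variable {K : Type u} [Field K] {N : ℕ} {J : Ideal (MvPolynomial (Fin N) K)}

lemma hilbertSamuelMultiplicity_eq_of_tendsto {d m : ℕ} (hm : m ≠ 0)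
    (hmult : hilbertSamuelMultiplicity K J ≠ 0)
    (hlim : Tendsto (fun n : ℕ => (∑ i ∈ Finset.range (n + 1), hilbertFunction K J i : ℝ) / n ^ d)
      atTop (𝓝 (m / d.factorial))) :
    hilbertSamuelMultiplicity K J = m := by
  classical
  rw [hilbertSamuelMultiplicity] at hmult ⊢
  split_ifs at hmult ⊢ with hP
  swap
  · exact absurd rfl hmult
  set P := hP.choose
  set c := P.natDegree.factorial * P.leadingCoeff with hc
  have hHF : Tendsto (fun n : ℕ => (hilbertFunction K J n : ℝ) / n ^ P.natDegree) atTop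
      (𝓝 ((c : ℝ) / P.natDegree.factorial)) := by
    have hlead : (c : ℝ) / P.natDegree.factorial = P.leadingCoeff := by
      rw [hc]
      push_cast
      field_simp
    rw [hlead]
    refine (tendsto_eval_div_pow_natDegree P).congr' ?_
    filter_upwards [hP.choose_spec] with n hn
    rw [← hn, Rat.cast_natCast]
  have hsum := tendsto_sum_range_div_pow hHF
  have hd : P.natDegree + 1 = d := by
    refine le_antisymm (le_of_tendsto_div_pow ?_ hlim hsum) (le_of_tendsto_div_pow ?_ hsum hlim)
    · exact div_ne_zero (Rat.cast_ne_zero.2 hmult) (by positivity)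
    · positivity
  rw [hd] at hsum
  have := tendsto_nhds_unique hsum hlim
  field_simp at this
  exact_mod_cast this

end Multiplicity

section GoodFiltration

open MvPolynomial Module

lemma exists_disjoint_sup_eq {K V : Type*} [DivisionRing K] [AddCommGroup V] [Module K V]
    {p q : Submodule K V} (hpq : p ≤ q) : ∃ w, Disjoint p w ∧ p ⊔ w = q := by
  obtain ⟨w, hw⟩ := exists_isCompl p
  refine ⟨w ⊓ q, hw.disjoint.mono_right inf_le_left, ?_⟩
  rw [← sup_inf_assoc_of_le _ hpq, hw.sup_eq_top, top_inf_eq]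

variable {K : Type u} [Field K] {d : ℕ} {M : Type*} [AddCommGroup M] [Module K M]
  [Module (MvPolynomial (Fin d) K) M]

/-- A good filtration of a module `M` over `R = K[z₁, …, z_d]`, where `R` is filtered by the total
degree: it is exhaustive, compatible with the filtration of `R`, and each piece `G n` consists of
combinations of a fixed finite family with coefficients of degree at most `n`. -/
structure IsGoodFiltration (G : ℕ → Submodule K M) : Prop where
  smul_mem {a b : ℕ} {p : MvPolynomial (Fin d) K} {x : M} :
    p.totalDegree ≤ a → x ∈ G b → p • x ∈ G (a + b)
  exists_mem (x : M) : ∃ n, x ∈ G n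
  exists_generators : ∃ (s : ℕ) (e : Fin s → M), ∀ n, ∀ x ∈ G n,
    ∃ r : Fin s → MvPolynomial (Fin d) K, (∀ j, (r j).totalDegree ≤ n) ∧ ∑ j, r j • e j = x

lemma exists_linearIndependent_forall_exists_smul_mem (R : Type*) {M : Type*} [CommRing R]
    [IsDomain R] [AddCommGroup M] [Module R M] [Module.Finite R M] :
    ∃ x : Fin (finrank R M) → M, LinearIndependent R x ∧
      ∀ y, ∃ a : R, a ≠ 0 ∧ a • y ∈ Submodule.span R (Set.range x) := by
  obtain ⟨x, hx⟩ := exists_linearIndependent_of_le_finrank (le_refl (finrank R M))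
  refine ⟨x, hx, fun y => ?_⟩
  have hquot : finrank R (M ⧸ Submodule.span R (Set.range x)) = 0 := by
    have := Submodule.finrank_quotient_add_finrank (Submodule.span R (Set.range x))
    rw [finrank_span_eq_card hx, Fintype.card_fin] at this
    lia
  obtain ⟨a, ha, hay⟩ := finrank_eq_zero_iff.1 hquot (Submodule.Quotient.mk y)
  exact ⟨a, ha, (Submodule.Quotient.mk_eq_zero _).1 hay⟩

lemma exists_smul_mem_of_forall_exists_smul_mem {R M ι : Type*} [CommRing R] [IsDomain R]
    [AddCommGroup M] [Module R M] [Finite ι] {L : Submodule R M} {e : ι → M}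
    (h : ∀ j, ∃ a : R, a ≠ 0 ∧ a • e j ∈ L) : ∃ a : R, a ≠ 0 ∧ ∀ j, a • e j ∈ L := by
  classical
  have := Fintype.ofFinite ι
  choose a ha haL using h
  refine ⟨∏ j, a j, Finset.prod_ne_zero_iff.2 fun j _ => ha j, fun j => ?_⟩
  rw [← Finset.prod_erase_mul _ _ (Finset.mem_univ j), mul_smul]
  exact L.smul_mem _ (haL j)

section Combination

variable {K R M : Type*} [Field K] [CommRing R] [Algebra K R] [AddCommGroup M] [Module K M]
  [Module R M] [IsScalarTower K R M] {r : ℕ}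

/-- The `K`-linear map sending coefficients in a subspace `W` of the `K`-algebra `R` to the
`R`-linear combination of the elements `x k` that they define. -/
noncomputable def combination (W : Submodule K R) (x : Fin r → M) : (Fin r → W) →ₗ[K] M :=
  (Fintype.linearCombination R x).restrictScalars K ∘ₗ W.subtype.compLeft (Fin r)

lemma combination_apply (W : Submodule K R) (x : Fin r → M) (w : Fin r → W) :
    combination W x w = ∑ k, (w k : R) • x k := by
  simp [combination, Fintype.linearCombination_apply]

lemma mem_range_combination {W : Submodule K R} {x : Fin r → M} {w : Fin r → R}
    (hw : ∀ k, w k ∈ W) : ∑ k, w k • x k ∈ LinearMap.range (combination W x) :=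
  ⟨fun k => ⟨w k, hw k⟩, combination_apply ..⟩

lemma finrank_range_combination_le (W : Submodule K R) [FiniteDimensional K W] (x : Fin r → M) :
    finrank K (LinearMap.range (combination W x)) ≤ r * finrank K W := by
  refine (LinearMap.finrank_range_le _).trans_eq ?_
  rw [finrank_pi_fintype, Finset.sum_const, Finset.card_univ, Fintype.card_fin, smul_eq_mul]

lemma finrank_range_combination_of_linearIndependent (W : Submodule K R) [FiniteDimensional K W]
    {x : Fin r → M} (hx : LinearIndependent R x) :
    finrank K (LinearMap.range (combination W x)) = r * finrank K W := by
  rw [LinearMap.finrank_range_of_inj, finrank_pi_fintype, Finset.sum_const, Finset.card_univ,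
    Fintype.card_fin, smul_eq_mul]
  exact hx.fintypeLinearCombination_injective.comp
    fun _ _ h => funext fun k => Subtype.ext (congrFun h k)

end Combination

lemma exists_finrank_add_choose_eq {a : MvPolynomial (Fin d) K} (ha : a ≠ 0) (n : ℕ) :
    ∃ W : Submodule K (MvPolynomial (Fin d) K), FiniteDimensional K W ∧
      finrank K W + (d + n).choose d = (d + (n + a.totalDegree)).choose d ∧
      ∀ p : MvPolynomial (Fin d) K, p.totalDegree ≤ n + a.totalDegree →
        ∃ q : MvPolynomial (Fin d) K, q.totalDegree ≤ n ∧ p - a * q ∈ W := by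
  let aR : Submodule K (MvPolynomial (Fin d) K) :=
    (restrictTotalDegree (Fin d) K n).map (LinearMap.mulLeft K a)
  have haR : aR ≤ restrictTotalDegree (Fin d) K (n + a.totalDegree) := by
    rintro _ ⟨p, hp, rfl⟩
    rw [SetLike.mem_coe, mem_restrictTotalDegree] at hp
    exact (mem_restrictTotalDegree ..).2 ((totalDegree_mul ..).trans (by lia))
  have haR_finrank : finrank K aR = (d + n).choose d := by
    rw [← finrank_restrictTotalDegree K d]
    exact (Submodule.equivMapOfInjective _ (mul_right_injective₀ ha) _).finrank_eq.symm
  obtain ⟨W, hW_disj, hW⟩ := exists_disjoint_sup_eq haR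
  have hW_fin : FiniteDimensional K W :=
    Submodule.finiteDimensional_of_le (le_sup_right.trans_eq hW)
  refine ⟨W, hW_fin, ?_, fun p hp => ?_⟩
  · have h := Submodule.finrank_sup_add_finrank_inf_eq aR W
    rw [hW, hW_disj.eq_bot, finrank_bot, finrank_restrictTotalDegree, haR_finrank] at h
    lia
  · rw [← mem_restrictTotalDegree, ← hW, Submodule.mem_sup] at hp
    obtain ⟨_, ⟨q, hq, rfl⟩, w, hw, rfl⟩ := hp
    exact ⟨q, (mem_restrictTotalDegree ..).1 hq, by simpa using hw⟩

lemma sum_smul_mem_sup_range_combination [IsScalarTower K (MvPolynomial (Fin d) K) M]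
    {W : Submodule K (MvPolynomial (Fin d) K)} {r s n β : ℕ}
    {x : Fin r → M} {e : Fin s → M} {a : MvPolynomial (Fin d) K}
    {b : Fin s → Fin r → MvPolynomial (Fin d) K} (hb : ∀ j, ∑ k, b j k • x k = a • e j)
    (hβ : ∀ j k, (b j k).totalDegree ≤ β) {p : Fin s → MvPolynomial (Fin d) K}
    (hp : ∀ j, ∃ q : MvPolynomial (Fin d) K, q.totalDegree ≤ n ∧ p j - a * q ∈ W) :
    ∑ j, p j • e j ∈ LinearMap.range (combination W e) ⊔
      LinearMap.range (combination (restrictTotalDegree (Fin d) K (n + β)) x) := by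
  choose q hq hqW using hp
  have hsum : ∑ j, p j • e j =
      ∑ j, (p j - a * q j) • e j + ∑ k, (∑ j, q j * b j k) • x k := by
    have (j : Fin s) : p j • e j = (p j - a * q j) • e j + ∑ k, (q j * b j k) • x k := by
      simp_rw [sub_smul, mul_smul, ← Finset.smul_sum, hb, smul_smul, mul_comm a, sub_add_cancel]
    simp_rw [this, Finset.sum_add_distrib, Finset.sum_smul]
    rw [Finset.sum_comm (γ := Fin r)]
  rw [hsum]
  refine add_mem (Submodule.mem_sup_left (mem_range_combination hqW))
    (Submodule.mem_sup_right (mem_range_combination fun k => Submodule.sum_mem _ fun j _ => ?_))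
  exact (mem_restrictTotalDegree ..).2
    ((totalDegree_mul ..).trans (add_le_add (hq j) (hβ j k)))

namespace IsGoodFiltration

variable {G : ℕ → Submodule K M}

lemma monotone (hG : IsGoodFiltration (d := d) G) : Monotone G :=
  monotone_nat_of_le_succ fun n x hx => by
    simpa [add_comm] using hG.smul_mem (p := (1 : MvPolynomial (Fin d) K)) (a := 1) (by simp) hx

lemma module_finite (hG : IsGoodFiltration (d := d) G) :
    Module.Finite (MvPolynomial (Fin d) K) M := by
  obtain ⟨s, e, he⟩ := hG.exists_generators
  refine ⟨Submodule.fg_def.2 ⟨Set.range e, Set.finite_range e, eq_top_iff.2 fun x _ => ?_⟩⟩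
  obtain ⟨n, hn⟩ := hG.exists_mem x
  obtain ⟨r, -, rfl⟩ := he n x hn
  exact Submodule.sum_mem _ fun j _ => Submodule.smul_mem _ _ (Submodule.subset_span (by simp))

variable [IsScalarTower K (MvPolynomial (Fin d) K) M]

lemma finiteDimensional (hG : IsGoodFiltration (d := d) G) (n : ℕ) : FiniteDimensional K (G n) := by
  obtain ⟨s, e, he⟩ := hG.exists_generators
  refine Submodule.finiteDimensional_of_le
    (S₂ := LinearMap.range (combination (restrictTotalDegree (Fin d) K n) e)) fun x hx => ?_
  obtain ⟨r, hr, rfl⟩ := he n x hx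
  exact mem_range_combination fun j => (mem_restrictTotalDegree ..).2 (hr j)

lemma exists_mul_choose_le (hG : IsGoodFiltration (d := d) G) {r : ℕ} {x : Fin r → M}
    (hx : LinearIndependent (MvPolynomial (Fin d) K) x) :
    ∃ b, ∀ n, r * (d + n).choose d ≤ finrank K (G (n + b)) := by
  choose b hb using fun k => hG.exists_mem (x k)
  refine ⟨Finset.univ.sup b, fun n => ?_⟩
  have := hG.finiteDimensional (n + Finset.univ.sup b)
  rw [← finrank_restrictTotalDegree K, ← finrank_range_combination_of_linearIndependent _ hx]
  refine Submodule.finrank_mono ?_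
  rintro _ ⟨p, rfl⟩
  rw [combination_apply]
  exact Submodule.sum_mem _ fun k _ => hG.smul_mem ((mem_restrictTotalDegree ..).1 (p k).2)
    (hG.monotone (Finset.le_sup (Finset.mem_univ k)) (hb k))

lemma exists_finrank_le (hG : IsGoodFiltration (d := d) G) {r : ℕ} {x : Fin r → M}
    (hx : ∀ y, ∃ a : MvPolynomial (Fin d) K, a ≠ 0 ∧
      a • y ∈ Submodule.span (MvPolynomial (Fin d) K) (Set.range x)) :
    ∃ s c β : ℕ, ∀ n, finrank K (G (n + c)) + s * (d + n).choose d ≤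
      s * (d + (n + c)).choose d + r * (d + (n + β)).choose d := by
  obtain ⟨s, e, he⟩ := hG.exists_generators
  obtain ⟨a, ha, hae⟩ := exists_smul_mem_of_forall_exists_smul_mem fun j => hx (e j)
  simp only [Submodule.mem_span_range_iff_exists_fun] at hae
  choose b hb using hae
  let β := Finset.univ.sup fun jk : Fin s × Fin r => (b jk.1 jk.2).totalDegree
  have hβ (j : Fin s) (k : Fin r) : (b j k).totalDegree ≤ β :=
    Finset.le_sup (f := fun jk : Fin s × Fin r => (b jk.1 jk.2).totalDegree)
      (Finset.mem_univ (j, k))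
  refine ⟨s, a.totalDegree, β, fun n => ?_⟩
  obtain ⟨W, hW_fin, hW, hWp⟩ := exists_finrank_add_choose_eq ha n
  have hle : G (n + a.totalDegree) ≤ LinearMap.range (combination W e) ⊔
      LinearMap.range (combination (restrictTotalDegree (Fin d) K (n + β)) x) := fun y hy => by
    obtain ⟨p, hp, rfl⟩ := he _ y hy
    exact sum_smul_mem_sup_range_combination hb hβ fun j => hWp _ (hp j)
  have hsup := (Submodule.finrank_mono hle).trans (Submodule.finrank_add_le_finrank_add_finrank _ _)
  have he := finrank_range_combination_le W e
  have hx := finrank_range_combination_le (restrictTotalDegree (Fin d) K (n + β)) x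
  rw [finrank_restrictTotalDegree] at hx
  rw [← hW, mul_add]
  lia

end IsGoodFiltration

end GoodFiltration

section RankTheorem

open MvPolynomial Module Filter Topology

theorem IsGoodFiltration.tendsto_finrank_div_pow {K : Type u} [Field K] {d : ℕ} {M : Type*}
    [AddCommGroup M] [Module K M] [Module (MvPolynomial (Fin d) K) M]
    [IsScalarTower K (MvPolynomial (Fin d) K) M] {G : ℕ → Submodule K M}
    (hG : IsGoodFiltration (d := d) G) :
    Tendsto (fun n : ℕ => (finrank K (G n) : ℝ) / n ^ d) atTop
      (𝓝 (finrank (MvPolynomial (Fin d) K) M / d.factorial)) := by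
  have := hG.module_finite
  obtain ⟨x, hx, hx_span⟩ :=
    exists_linearIndependent_forall_exists_smul_mem (MvPolynomial (Fin d) K) (M := M)
  set r := finrank (MvPolynomial (Fin d) K) M
  obtain ⟨b, hlower⟩ := hG.exists_mul_choose_le hx
  obtain ⟨s, c, β, hupper⟩ := hG.exists_finrank_le hx_span
  have hlim (a : ℕ) := tendsto_add_choose_div_add_pow a (b + c) d
  refine (tendsto_add_atTop_iff_nat (b + c)).1 (tendsto_of_tendsto_of_tendsto_of_le_of_le
    (g := fun n => r * (((n + (d + c)).choose d : ℝ) / (n + (b + c) : ℕ) ^ d))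
    (h := fun n => s * (((n + (d + b + c)).choose d : ℝ) / (n + (b + c) : ℕ) ^ d) +
      r * (((n + (d + b + β)).choose d : ℝ) / (n + (b + c) : ℕ) ^ d) -
      s * (((n + (d + b)).choose d : ℝ) / (n + (b + c) : ℕ) ^ d)) ?_ ?_ (fun n => ?_) fun n => ?_)
  · simpa only [mul_one_div] using (hlim (d + c)).const_mul (r : ℝ)
  · have := (((hlim (d + b + c)).const_mul (s : ℝ)).add
      ((hlim (d + b + β)).const_mul (r : ℝ))).sub ((hlim (d + b)).const_mul (s : ℝ))
    rwa [add_sub_cancel_left, mul_one_div] at this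
  · have h := hlower (n + c)
    rw [show d + (n + c) = n + (d + c) by ring, show n + c + b = n + (b + c) by ring] at h
    simp only [← mul_div_assoc]
    gcongr
    exact_mod_cast h
  · have h := hupper (n + b)
    rw [show d + (n + b) = n + (d + b) by ring, show d + (n + b + c) = n + (d + b + c) by ring,
      show d + (n + b + β) = n + (d + b + β) by ring, show n + b + c = n + (b + c) by ring] at h
    simp only [← mul_div_assoc, ← add_div, ← sub_div]
    gcongr
    rw [le_sub_iff_add_le]
    exact_mod_cast h

end RankTheorem

section Generators

open MvPolynomial Module

attribute [local instance] MvPolynomial.gradedAlgebra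

variable {K : Type u} [Field K] {N d : ℕ}

lemma exists_isHomogeneous_forall_exists_sub_sum_mem (J : Ideal (MvPolynomial (Fin N) K)) (n : ℕ) :
    ∃ B : Fin (hilbertFunction K J n) → MvPolynomial (Fin N) K, (∀ j, (B j).IsHomogeneous n) ∧
      ∀ t : MvPolynomial (Fin N) K, t.IsHomogeneous n → ∃ c : Fin (hilbertFunction K J n) → K,
        t - ∑ j, c j • B j ∈ J := by
  let b : Basis (Fin (hilbertFunction K J n)) K (gradedPiece J n) := finBasisOfFinrankEq K _ rfl
  choose B hB hBb using fun j => (b j).2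
  refine ⟨B, hB, fun t ht => ⟨b.repr ⟨_, mk_mem_gradedPiece J ht⟩, ?_⟩⟩
  have hsum := congrArg Subtype.val (b.sum_repr ⟨_, mk_mem_gradedPiece J ht⟩)
  refine Ideal.Quotient.eq.1 (hsum.symm.trans
    (.trans ?_ (map_sum (Ideal.Quotient.mkₐ K J) _ _).symm))
  simp only [Submodule.coe_sum, Submodule.coe_smul, ← hBb, map_smul]
  rfl

lemma exists_isHomogeneous_sum_smul_sub_mem {J : Ideal (MvPolynomial (Fin N) K)} {m : ℕ}
    (hm : ∀ n, m ≤ n → hilbertFunction K J n = 0) :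
    ∃ B : Fin (∑ i ∈ Finset.range m, hilbertFunction K J i) → MvPolynomial (Fin N) K,
      ∀ n, ∀ t : MvPolynomial (Fin N) K, t.IsHomogeneous n → ∃ c : _ → K,
        (∑ j, c j • B j).IsHomogeneous n ∧ t - ∑ j, c j • B j ∈ J := by
  classical
  choose B hB hB_span using exists_isHomogeneous_forall_exists_sub_sum_mem J
  let ι := Σ i : Fin m, Fin (hilbertFunction K J i)
  let ε : Fin (∑ i ∈ Finset.range m, hilbertFunction K J i) ≃ ι :=
    Fintype.equivOfCardEq (by simp [ι, Finset.sum_range])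
  refine ⟨fun j => B (ε j).1 (ε j).2, fun n t ht => ?_⟩
  obtain hn | hn := le_or_gt m n
  · exact ⟨0, by simp [isHomogeneous_zero], by
      simpa using mem_of_hilbertFunction_eq_zero (hm n hn) ht⟩
  · obtain ⟨c, hc⟩ := hB_span n t ht
    let c' : ∀ i : Fin m, Fin (hilbertFunction K J i) → K := Pi.single ⟨n, hn⟩ c
    have hsum : ∑ j, c' (ε j).1 (ε j).2 • B (ε j).1 (ε j).2 = ∑ j, c j • B n j := by
      rw [ε.sum_comp fun j : ι => c' j.1 j.2 • B j.1 j.2, Fintype.sum_sigma,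
        Finset.sum_eq_single (⟨n, hn⟩ : Fin m) (fun i _ hi => by simp [c', hi]) (by simp)]
      simp [c']
    refine ⟨fun j => c' (ε j).1 (ε j).2, ?_, ?_⟩ <;> rw [hsum]
    · exact IsHomogeneous.sum _ _ _ fun j _ => (homogeneousSubmodule _ K n).smul_mem _ (hB n j)
    · exact hc

variable [Algebra (MvPolynomial (Fin d) K) (MvPolynomial (Fin N) K)]
  {J : Ideal (MvPolynomial (Fin N) K)}

lemma mem_sup_map_idealOfVars_iff {t : MvPolynomial (Fin N) K} :
    t ∈ J ⊔ (idealOfVars (Fin d) K).map (algebraMap _ _) ↔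
      ∃ u : Fin d → MvPolynomial (Fin N) K,
        t - ∑ k, (X k : MvPolynomial (Fin d) K) • u k ∈ J := by
  rw [idealOfVars, Ideal.map_span, ← Set.range_comp, sup_comm, Submodule.mem_sup]
  simp only [Ideal.mem_span_range_iff_exists_fun, Function.comp_apply]
  constructor
  · rintro ⟨_, ⟨u, rfl⟩, j, hj, rfl⟩
    exact ⟨u, by simpa [Algebra.smul_def, mul_comm] using hj⟩
  · rintro ⟨u, hu⟩
    exact ⟨_, ⟨u, rfl⟩, _, hu, by simp [Algebra.smul_def, mul_comm]⟩

variable (hz : ∀ k,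
  (algebraMap (MvPolynomial (Fin d) K) (MvPolynomial (Fin N) K) (X k)).IsHomogeneous 1)
  (hJ : J.IsHomogeneous (homogeneousSubmodule (Fin N) K))

include hz hJ

lemma mem_of_isHomogeneous_zero_of_mem_sup_map_idealOfVars {t : MvPolynomial (Fin N) K}
    (ht : t.IsHomogeneous 0)
    (htJ : t ∈ J ⊔ (idealOfVars (Fin d) K).map (algebraMap _ _)) : t ∈ J := by
  obtain ⟨u, hu⟩ := mem_sup_map_idealOfVars_iff.1 htJ
  simpa only [map_sub, map_sum, Algebra.smul_def, homogeneousComponent_eq_self ht,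
    homogeneousComponent_mul_eq_zero_of_lt (hz _) _ one_pos, Finset.sum_const_zero, sub_zero]
    using homogeneousComponent_mem_of_mem hJ hu 0

lemma exists_isHomogeneous_sub_sum_smul_mem {t : MvPolynomial (Fin N) K} {n : ℕ}
    (ht : t.IsHomogeneous (n + 1))
    (htJ : t ∈ J ⊔ (idealOfVars (Fin d) K).map (algebraMap _ _)) :
    ∃ u : Fin d → MvPolynomial (Fin N) K, (∀ k, (u k).IsHomogeneous n) ∧
      t - ∑ k, (X k : MvPolynomial (Fin d) K) • u k ∈ J := by
  obtain ⟨u, hu⟩ := mem_sup_map_idealOfVars_iff.1 htJ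
  refine
    ⟨fun k => homogeneousComponent n (u k), fun k => homogeneousComponent_isHomogeneous _ _, ?_⟩
  have := homogeneousComponent_mem_of_mem hJ hu (1 + n)
  simpa only [map_sub, map_sum, Algebra.smul_def, homogeneousComponent_mul_of_isHomogeneous (hz _),
    homogeneousComponent_eq_self (add_comm n 1 ▸ ht)] using this

variable {ι : Type*} [Fintype ι] [IsScalarTower K (MvPolynomial (Fin d) K) (MvPolynomial (Fin N) K)]

lemma exists_totalDegree_le_sub_sum_smul_mem {B : ι → MvPolynomial (Fin N) K}
    (hB : ∀ n, ∀ t : MvPolynomial (Fin N) K, t.IsHomogeneous n → ∃ c : ι → K,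
      (∑ j, c j • B j).IsHomogeneous n ∧
      t - ∑ j, c j • B j ∈ J ⊔ (idealOfVars (Fin d) K).map (algebraMap _ _))
    {n : ℕ} {t : MvPolynomial (Fin N) K} (ht : t.IsHomogeneous n) :
    ∃ r : ι → MvPolynomial (Fin d) K, (∀ j, (r j).totalDegree ≤ n) ∧ t - ∑ j, r j • B j ∈ J := by
  induction n generalizing t with
  | zero =>
    obtain ⟨c, hc, htc⟩ := hB 0 t ht
    exact ⟨fun j => algebraMap K _ (c j), by simp [algebraMap_eq], by
      simpa only [algebraMap_smul] using
      mem_of_isHomogeneous_zero_of_mem_sup_map_idealOfVars hz hJ (ht.sub hc) htc⟩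
  | succ n ih =>
    obtain ⟨c, hc, htc⟩ := hB _ t ht
    obtain ⟨u, hu, htu⟩ := exists_isHomogeneous_sub_sum_smul_mem hz hJ (ht.sub hc) htc
    choose r hr hur using fun k => ih (hu k)
    refine ⟨fun j => algebraMap K _ (c j) + ∑ k, X k * r k j, fun j => ?_, ?_⟩
    · rw [← mem_restrictTotalDegree]
      refine add_mem ((mem_restrictTotalDegree ..).2 (by simp [algebraMap_eq]))
        (Submodule.sum_mem _ fun k _ => (mem_restrictTotalDegree ..).2
          ((totalDegree_mul ..).trans ?_))
      rw [totalDegree_X, add_comm]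
      exact Nat.succ_le_succ (hr k j)
    · have h := add_mem htu (Submodule.sum_mem J fun k (_ : k ∈ Finset.univ) =>
        J.mul_mem_left (algebraMap (MvPolynomial (Fin d) K) _ (X k)) (hur k))
      convert h using 1
      simp only [add_smul, Finset.sum_add_distrib, algebraMap_smul, Finset.sum_smul, mul_smul,
        ← Algebra.smul_def, smul_sub, Finset.sum_sub_distrib, Finset.smul_sum]
      rw [Finset.sum_comm (γ := Fin d)]
      abel

lemma exists_generators_filteredPiece {m : ℕ}
    (hm : ∀ n, m ≤ n → hilbertFunction K (J ⊔ (idealOfVars (Fin d) K).map (algebraMap _ _)) n = 0) :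
    ∃ e : Fin (∑ i ∈ Finset.range m,
        hilbertFunction K (J ⊔ (idealOfVars (Fin d) K).map (algebraMap _ _)) i) →
        MvPolynomial (Fin N) K ⧸ J,
      ∀ n, ∀ x ∈ filteredPiece J n, ∃ r : _ → MvPolynomial (Fin d) K,
        (∀ j, (r j).totalDegree ≤ n) ∧ ∑ j, r j • e j = x := by
  obtain ⟨B, hB⟩ := exists_isHomogeneous_sum_smul_sub_mem hm
  refine ⟨fun j => Ideal.Quotient.mk J (B j), ?_⟩
  rintro n _ ⟨p, hp, rfl⟩
  choose r hr hpr using fun i =>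
    exists_totalDegree_le_sub_sum_smul_mem hz hJ hB (homogeneousComponent_isHomogeneous i p)
  refine ⟨fun j => ∑ i ∈ Finset.range (p.totalDegree + 1), r i j, fun j => ?_, ?_⟩
  · refine (mem_restrictTotalDegree ..).1 (Submodule.sum_mem _ fun i hi =>
      (mem_restrictTotalDegree ..).2 ((hr i j).trans ?_))
    exact (Finset.mem_range_succ_iff.1 hi).trans ((mem_restrictTotalDegree ..).1 hp)
  · have h := Submodule.sum_mem J fun i (_ : i ∈ Finset.range (p.totalDegree + 1)) => hpr i
    rw [Finset.sum_sub_distrib, sum_homogeneousComponent] at h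
    refine .trans ?_ (Ideal.Quotient.eq.2 h).symm
    simp only [Finset.sum_smul, map_sum]
    rw [Finset.sum_comm]
    rfl

end Generators

section RankOfQuotient

open MvPolynomial Module Filter Topology

attribute [local instance] MvPolynomial.gradedAlgebra

lemma injective_of_span_range_eq_top {R M M' ι : Type*} [CommRing R] [AddCommGroup M] [Module R M]
    [AddCommGroup M'] [Module R M'] [Finite ι] {e : ι → M}
    (he : Submodule.span R (Set.range e) = ⊤) {φ : M →ₗ[R] M'}
    (hφ : LinearIndependent R (φ ∘ e)) : Function.Injective φ := by
  have := Fintype.ofFinite ι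
  refine LinearMap.ker_eq_bot.1 (eq_bot_iff.2 fun x hx => ?_)
  obtain ⟨a, rfl⟩ := (Submodule.mem_span_range_iff_exists_fun R).1 (he ▸ Submodule.mem_top (x := x))
  rw [LinearMap.mem_ker, map_sum] at hx
  simp only [map_smul] at hx
  simp [Fintype.linearIndependent_iff.1 hφ a hx]

variable {K : Type u} [Field K] {N d : ℕ}
  [Algebra (MvPolynomial (Fin d) K) (MvPolynomial (Fin N) K)]
  [IsScalarTower K (MvPolynomial (Fin d) K) (MvPolynomial (Fin N) K)]
  {J : Ideal (MvPolynomial (Fin N) K)}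
  (hz : ∀ k, (algebraMap (MvPolynomial (Fin d) K) (MvPolynomial (Fin N) K) (X k)).IsHomogeneous 1)
include hz

lemma totalDegree_algebraMap_le (p : MvPolynomial (Fin d) K) :
    (algebraMap _ (MvPolynomial (Fin N) K) p).totalDegree ≤ p.totalDegree := by
  have halg : algebraMap _ (MvPolynomial (Fin N) K) p = aeval (fun k => algebraMap _ _ (X k)) p :=
    congr($(aeval_unique (IsScalarTower.toAlgHom K (MvPolynomial (Fin d) K) _)) p)
  rw [halg, aeval_def, eval₂_eq]
  refine totalDegree_finsetSum_le fun s hs => (totalDegree_mul ..).trans ?_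
  rw [algebraMap_eq, totalDegree_C, zero_add]
  have := IsHomogeneous.prod s.support (fun i => algebraMap _ _ (X i) ^ s i) _ fun i _ =>
    (hz i).pow (s i)
  refine this.totalDegree_le.trans (le_trans ?_ (le_totalDegree hs))
  simp [Finsupp.sum]

variable (hJ : J.IsHomogeneous (homogeneousSubmodule (Fin N) K)) {m : ℕ}
    (hm : ∀ n, m ≤ n → hilbertFunction K (J ⊔ (idealOfVars (Fin d) K).map (algebraMap _ _)) n = 0)
include hJ hm

lemma isGoodFiltration_filteredPiece : IsGoodFiltration (d := d) (filteredPiece J) where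
  smul_mem := by
    rintro a b p _ hp ⟨t, ht, rfl⟩
    refine ⟨algebraMap _ _ p * t, (mem_restrictTotalDegree ..).2 ((totalDegree_mul ..).trans
      (add_le_add ((totalDegree_algebraMap_le hz p).trans hp)
        ((mem_restrictTotalDegree ..).1 ht))), ?_⟩
    exact congrArg (Ideal.Quotient.mk J) (Algebra.smul_def p t).symm
  exists_mem x := by
    obtain ⟨t, rfl⟩ := Ideal.Quotient.mk_surjective x
    exact ⟨t.totalDegree, t, (mem_restrictTotalDegree ..).2 le_rfl, rfl⟩
  exists_generators := by
    obtain ⟨e, he⟩ := exists_generators_filteredPiece hz hJ hm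
    exact ⟨_, e, he⟩

lemma exists_span_range_eq_top :
    ∃ e : Fin (∑ i ∈ Finset.range m,
        hilbertFunction K (J ⊔ (idealOfVars (Fin d) K).map (algebraMap _ _)) i) →
        MvPolynomial (Fin N) K ⧸ J, Submodule.span (MvPolynomial (Fin d) K) (Set.range e) = ⊤ := by
  obtain ⟨e, he⟩ := exists_generators_filteredPiece hz hJ hm
  refine ⟨e, eq_top_iff.2 fun x _ => ?_⟩
  obtain ⟨n, hn⟩ := (isGoodFiltration_filteredPiece hz hJ hm).exists_mem x
  obtain ⟨r, -, rfl⟩ := he n x hn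
  exact (Submodule.mem_span_range_iff_exists_fun _).2 ⟨r, rfl⟩

lemma tendsto_sum_hilbertFunction_div_pow :
    Tendsto (fun n : ℕ => (∑ i ∈ Finset.range (n + 1), hilbertFunction K J i : ℝ) / n ^ d)
      atTop (𝓝 (finrank (MvPolynomial (Fin d) K) (MvPolynomial (Fin N) K ⧸ J) / d.factorial)) := by
  simpa only [finrank_filteredPiece hJ, Nat.cast_sum] using
    (isGoodFiltration_filteredPiece hz hJ hm).tendsto_finrank_div_pow

lemma eq_and_free_quotient_of_sum_hilbertFunction_le {I : Ideal (MvPolynomial (Fin N) K)}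
    (hJI : J ≤ I)
    (hsum : ∑ n ∈ Finset.range m,
      hilbertFunction K (J ⊔ (idealOfVars (Fin d) K).map (algebraMap _ _)) n ≤
        finrank (MvPolynomial (Fin d) K) (MvPolynomial (Fin N) K ⧸ I)) :
    J = I ∧ Module.Free (MvPolynomial (Fin d) K) (MvPolynomial (Fin N) K ⧸ I) := by
  obtain ⟨e, he⟩ := exists_span_range_eq_top hz hJ hm
  let φ := (Ideal.Quotient.factorₐ (MvPolynomial (Fin d) K) hJI).toLinearMap
  have hφ : Function.Surjective φ := Ideal.Quotient.factor_surjective hJI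
  have hspan : ⊤ ≤ Submodule.span (MvPolynomial (Fin d) K) (Set.range (φ ∘ e)) := by
    rw [Set.range_comp, ← Submodule.map_span, he, Submodule.map_top, LinearMap.range_eq_top.2 hφ]
  have hind := linearIndependent_of_top_le_span_of_card_le_finrank hspan
    (by rwa [Fintype.card_fin])
  refine ⟨le_antisymm hJI fun t ht => ?_, .of_basis (.mk hind hspan)⟩
  refine Ideal.Quotient.eq_zero_iff_mem.1 (injective_of_span_range_eq_top he hind ?_)
  rw [map_zero]
  exact Ideal.Quotient.eq_zero_iff_mem.2 ht

end RankOfQuotient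

section Independence

open MvPolynomial Module

variable {K : Type u} [Field K] {d : ℕ} {ι κ : Type*} [Fintype ι]

lemma exists_matrix_mul_eq_one [Fintype κ] [DecidableEq ι] {P : Matrix κ ι K}
    (hP : ∀ c, P.mulVec c = 0 → c = 0) : ∃ Q : Matrix ι κ K, Q * P = 1 := by
  classical
  obtain ⟨f, hf⟩ := (Matrix.toLin' P).exists_leftInverse_of_injective (LinearMap.ker_eq_bot'.2 hP)
  refine ⟨LinearMap.toMatrix' f, ?_⟩
  rw [← LinearMap.toMatrix'_toLin' P, ← LinearMap.toMatrix'_comp, hf, LinearMap.toMatrix'_id]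

/-- Restriction of a polynomial function to the `k₀`-th coordinate axis. -/
noncomputable def axisRestriction (K : Type u) [Field K] {d : ℕ} (k₀ : Fin d) :
    MvPolynomial (Fin d) K →ₐ[K] Polynomial K :=
  aeval (Pi.single k₀ Polynomial.X)

lemma eval_zero_axisRestriction (k₀ : Fin d) (p : MvPolynomial (Fin d) K) :
    (axisRestriction K k₀ p).eval 0 = constantCoeff p := by
  suffices (Polynomial.evalRingHom 0).comp (axisRestriction K k₀ : _ →+* Polynomial K) =
    constantCoeff from congr($this p)
  refine MvPolynomial.ringHom_ext (by simp [axisRestriction]) fun k => ?_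
  obtain rfl | hk := eq_or_ne k k₀ <;> simp [axisRestriction, *]

/-- On the `k₀`-th axis a maximal minor of `Y` is a power of `X` times a unit at the origin. -/
lemma eq_zero_of_mulVec_eq_zero_of_map_eq_smul [Finite κ]
    {Y V : Matrix κ ι (MvPolynomial (Fin d) K)} {k₀ : Fin d}
    (hYV : Y.map (axisRestriction K k₀) =
      (Polynomial.X : Polynomial K) • V.map (axisRestriction K k₀))
    (hV : ∀ c, (V.map constantCoeff).mulVec c = 0 → c = 0) {w : ι → MvPolynomial (Fin d) K}
    (hw : Y.mulVec w = 0) : w = 0 := by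
  classical
  have := Fintype.ofFinite κ
  obtain ⟨Q, hQ⟩ := exists_matrix_mul_eq_one hV
  let φ := axisRestriction K k₀
  suffices (Q.map (C : K → MvPolynomial (Fin d) K) * Y).det ≠ 0 from
    Matrix.eq_zero_of_mulVec_eq_zero this (by rw [← Matrix.mulVec_mulVec, hw, Matrix.mulVec_zero])
  have hφC : (Q.map C).map φ = Q.map Polynomial.C := by
    ext1; simp [φ, axisRestriction]
  have hunit : (Q.map Polynomial.C * V.map φ).map (Polynomial.evalRingHom 0) = 1 := by
    rw [Matrix.map_mul, Matrix.map_map, Matrix.map_map, ← hQ]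
    congr 1
    all_goals ext1; simp [φ, eval_zero_axisRestriction]
  have hdet : (Q.map Polynomial.C * V.map φ).det ≠ 0 := fun h => by
    have := congr(Polynomial.evalRingHom 0 $h)
    rw [RingHom.map_det, RingHom.mapMatrix_apply, hunit] at this
    simp at this
  intro h
  have := congr(φ $h)
  rw [AlgHom.map_det, AlgHom.mapMatrix_apply, Matrix.map_mul, hφC, hYV, Matrix.mul_smul,
    Matrix.det_smul, map_zero] at this
  exact mul_ne_zero (pow_ne_zero _ Polynomial.X_ne_zero) hdet this

variable {M : Type*} [AddCommGroup M] [Module (MvPolynomial (Fin d) K) M]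

theorem linearIndependent_sum_X_smul [Finite κ] (b : Basis κ (MvPolynomial (Fin d) K) M)
    {u : ι → Fin d → M} {k₀ : Fin d}
    (hu : ∀ c : ι → K, ∑ o, (C (c o) : MvPolynomial (Fin d) K) • u o k₀ ∈
      idealOfVars (Fin d) K • (⊤ : Submodule (MvPolynomial (Fin d) K) M) → c = 0) :
    LinearIndependent (MvPolynomial (Fin d) K)
      fun o => ∑ k, (X k : MvPolynomial (Fin d) K) • u o k := by
  have := Fintype.ofFinite κ
  refine Fintype.linearIndependent_iff.2 fun w hw => congrFun
    (eq_zero_of_mulVec_eq_zero_of_map_eq_smul (k₀ := k₀)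
      (Y := .of fun j o => b.repr (∑ k, (X k : MvPolynomial (Fin d) K) • u o k) j)
      (V := .of fun j o => b.repr (u o k₀) j) ?_ (fun c hc => hu c ?_) ?_)
  · ext1 j o
    simp only [Matrix.map_apply, Matrix.of_apply, Matrix.smul_apply, map_sum, map_smul,
      Finsupp.finsetSum_apply, Finsupp.smul_apply, smul_eq_mul, map_mul]
    simp only [axisRestriction, aeval_X]
    rw [Finset.sum_eq_single k₀ (fun k _ hk => by simp [hk]) (by simp), Pi.single_eq_same]
  · rw [← b.sum_repr (∑ o, (C (c o) : MvPolynomial (Fin d) K) • u o k₀)]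
    refine Submodule.sum_mem _ fun j _ => Submodule.smul_mem_smul
      ((mem_idealOfVars_iff _).2 ?_) trivial
    have := congrFun hc j
    simpa [Matrix.mulVec, dotProduct, mul_comm] using this
  · ext1 j
    have := congr(b.repr $hw j)
    simpa [Matrix.mulVec, dotProduct, mul_comm] using this

end Independence

section CompleteIntersection

open MvPolynomial Module Filter Topology

attribute [local instance] MvPolynomial.gradedAlgebra

lemma coeff_one_add_X_pow {A : Type*} [CommSemiring A] (c n : ℕ) :
    ((1 + PowerSeries.X : PowerSeries A) ^ c).coeff n = c.choose n := by
  have : ((1 + PowerSeries.X : PowerSeries A) ^ c) = ((1 + Polynomial.X) ^ c : Polynomial A) := by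
    simp
  rw [this, Polynomial.coeff_coe, Polynomial.coeff_one_add_X_pow]

lemma coeff_add_one_add_X_pow_mul {A : Type*} [CommSemiring A] (c n : ℕ) (φ : PowerSeries A) :
    ((1 + PowerSeries.X) ^ c * φ).coeff (n + c) =
      ∑ j ∈ Finset.range (c + 1), c.choose j * φ.coeff (n + (c - j)) := by
  rw [add_comm (1 : PowerSeries A), add_pow, Finset.sum_mul, map_sum]
  refine Finset.sum_congr rfl fun j hj => ?_
  rw [one_pow, mul_one, mul_assoc, show n + c = n + (c - j) + j by grind,
    PowerSeries.coeff_X_pow_mul, ← map_natCast (PowerSeries.C (R := A)), PowerSeries.coeff_C_mul]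

variable {K : Type u} [Field K] {N c d : ℕ} {f : Fin c → MvPolynomial (Fin N) K}
  {z : Fin d → MvPolynomial (Fin N) K}
  (hg : IsHomogeneousParameterSystem (Sum.elim f z) (Sum.elim (fun _ => 2) fun _ => 1))
include hg

lemma hilbertSeries_span_range_sumElim :
    hilbertSeries (Ideal.span (Set.range (Sum.elim f z))) = (1 + PowerSeries.X) ^ c := by
  have hcard : c + d = N := by simpa using hg.card_eq
  have hbot := one_sub_X_pow_mul_hilbertSeries_bot (K := K) (N := N)
  have h := hg.hilbertSeries_span Finset.univ
  simp only [Finset.coe_univ, Set.image_univ, Fintype.prod_sum_type, Sum.elim_inl, Sum.elim_inr,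
    Finset.prod_const, Finset.card_univ, Fintype.card_fin, pow_one] at h
  have hsq : (1 - PowerSeries.X ^ 2 : PowerSeries ℤ) ^ c =
      (1 + PowerSeries.X) ^ c * (1 - PowerSeries.X) ^ c := by
    rw [← mul_pow]
    ring
  rw [h, hsq, mul_assoc ((1 + PowerSeries.X) ^ c), ← pow_add, hcard, mul_assoc, hbot, mul_one]

lemma hilbertSeries_span_range_mul_one_sub_X_pow :
    hilbertSeries (Ideal.span (Set.range f)) * (1 - PowerSeries.X) ^ d =
      (1 + PowerSeries.X) ^ c := by
  have h₁ := hg.hilbertSeries_span (Finset.univ.map ⟨Sum.inl, Sum.inl_injective⟩)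
  have h₂ := hg.hilbertSeries_span Finset.univ
  simp only [Finset.coe_map, Finset.coe_univ, Set.image_univ, Function.Embedding.coeFn_mk,
    ← Set.range_comp, Sum.elim_comp_inl, Fintype.prod_sum_type, Sum.elim_inl, Sum.elim_inr,
    Finset.prod_const, Finset.card_univ, Fintype.card_fin, pow_one, Finset.prod_map] at h₁ h₂
  rw [h₁, mul_right_comm, ← h₂, hilbertSeries_span_range_sumElim hg]

lemma hilbertFunction_span_range_sumElim (n : ℕ) :
    hilbertFunction K (Ideal.span (Set.range (Sum.elim f z))) n = c.choose n := by
  rw [← Nat.cast_inj (R := ℤ), ← coeff_hilbertSeries, hilbertSeries_span_range_sumElim hg,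
    coeff_one_add_X_pow]

lemma sum_hilbertFunction_span_range (n : ℕ) :
    ∑ i ∈ Finset.range (n + c + 1), hilbertFunction K (Ideal.span (Set.range f)) i =
      ∑ j ∈ Finset.range (c + 1), c.choose j * (n + (c - j + d)).choose d := by
  have hF := hilbertSeries_span_range_mul_one_sub_X_pow hg
  have hgeom := PowerSeries.mk_one_mul_one_sub_eq_one ℤ
  have h : hilbertSeries (Ideal.span (Set.range f)) * PowerSeries.mk 1 =
      (1 + PowerSeries.X) ^ c * PowerSeries.mk 1 ^ (d + 1) := by
    rw [← hF, pow_succ, mul_assoc, ← mul_assoc _ _ (PowerSeries.mk 1), ← mul_pow, mul_comm (1 - _),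
      hgeom, one_pow, one_mul]
  have hcoeff := congr(PowerSeries.coeff (n + c) $h)
  rw [coeff_add_one_add_X_pow_mul, PowerSeries.mk_one_pow_eq_mk_choose_add, PowerSeries.coeff_mul,
    Finset.Nat.sum_antidiagonal_eq_sum_range_succ_mk] at hcoeff
  simp only [PowerSeries.coeff_mk, coeff_hilbertSeries, Pi.one_apply, mul_one] at hcoeff
  rw [← Nat.cast_inj (R := ℤ), Nat.cast_sum, hcoeff, Nat.cast_sum]
  refine Finset.sum_congr rfl fun j _ => ?_
  rw [Nat.cast_mul, show d + (n + (c - j)) = n + (c - j + d) by ring]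

lemma tendsto_sum_hilbertFunction_span_range_div_pow :
    Tendsto (fun n : ℕ => (∑ i ∈ Finset.range (n + 1),
      hilbertFunction K (Ideal.span (Set.range f)) i : ℝ) / n ^ d) atTop
      (𝓝 ((2 ^ c : ℕ) / d.factorial)) := by
  refine (tendsto_add_atTop_iff_nat c).1 ?_
  have hsum (n : ℕ) := congr((($(sum_hilbertFunction_span_range hg n) : ℕ) : ℝ))
  push_cast at hsum
  simp only [hsum, Finset.sum_div, mul_div_assoc]
  have h := tendsto_finsetSum (Finset.range (c + 1)) fun j _ =>
    (tendsto_add_choose_div_add_pow (c - j + d) c d).const_mul (c.choose j : ℝ)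
  rw [← Finset.sum_mul, ← Nat.cast_sum, Nat.sum_range_choose, mul_one_div] at h
  exact h

end CompleteIntersection

section NoetherNormalization

open MvPolynomial Module

attribute [local instance] MvPolynomial.gradedAlgebra

variable {K : Type u} [Field K] {N c d : ℕ} {f : Fin c → MvPolynomial (Fin N) K}
  {z : Fin d → MvPolynomial (Fin N) K}
  [Algebra (MvPolynomial (Fin d) K) (MvPolynomial (Fin N) K)]
  (hz : ∀ k, algebraMap (MvPolynomial (Fin d) K) (MvPolynomial (Fin N) K) (X k) = z k)
include hz

lemma span_range_sup_map_idealOfVars :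
    Ideal.span (Set.range f) ⊔ (idealOfVars (Fin d) K).map (algebraMap _ (MvPolynomial (Fin N) K)) =
      Ideal.span (Set.range (Sum.elim f z)) := by
  rw [Set.Sum.elim_range, Ideal.span_union, idealOfVars, Ideal.map_span, ← Set.range_comp]
  simp only [Function.comp_def, hz]

variable (hg : IsHomogeneousParameterSystem (Sum.elim f z) (Sum.elim (fun _ => 2) fun _ => 1))
include hg

lemma isHomogeneous_algebraMap_X (k : Fin d) :
    (algebraMap (MvPolynomial (Fin d) K) (MvPolynomial (Fin N) K) (X k)).IsHomogeneous 1 :=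
  hz k ▸ hg.isHomogeneous (.inr k)

lemma hilbertFunction_sup_map_idealOfVars_le {J : Ideal (MvPolynomial (Fin N) K)}
    (hJ : Ideal.span (Set.range f) ≤ J) (n : ℕ) :
    hilbertFunction K (J ⊔ (idealOfVars (Fin d) K).map (algebraMap _ _)) n ≤ c.choose n := by
  rw [← hilbertFunction_span_range_sumElim hg, ← span_range_sup_map_idealOfVars hz]
  exact hilbertFunction_le_of_le (sup_le_sup_right hJ _) n

lemma hilbertFunction_sup_map_idealOfVars_eq_zero {J : Ideal (MvPolynomial (Fin N) K)}
    (hJ : Ideal.span (Set.range f) ≤ J) {n : ℕ} (hn : c < n) :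
    hilbertFunction K (J ⊔ (idealOfVars (Fin d) K).map (algebraMap _ _)) n = 0 :=
  Nat.eq_zero_of_le_zero
    ((hilbertFunction_sup_map_idealOfVars_le hz hg hJ n).trans_eq (Nat.choose_eq_zero_of_lt hn))

end NoetherNormalization

section NoetherNormalization

open MvPolynomial Module

attribute [local instance] MvPolynomial.gradedAlgebra

variable {K : Type u} [Field K] {N c d : ℕ} {f : Fin c → MvPolynomial (Fin N) K}
  {z : Fin d → MvPolynomial (Fin N) K}
  (hg : IsHomogeneousParameterSystem (Sum.elim f z) (Sum.elim (fun _ => 2) fun _ => 1))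
include hg

lemma isHomogeneous_span_range_inl :
    (Ideal.span (Set.range f)).IsHomogeneous (homogeneousSubmodule (Fin N) K) :=
  isHomogeneous_span (by rintro _ ⟨i, rfl⟩; exact ⟨2, hg.isHomogeneous (.inl i)⟩)

variable [Algebra (MvPolynomial (Fin d) K) (MvPolynomial (Fin N) K)]
  [IsScalarTower K (MvPolynomial (Fin d) K) (MvPolynomial (Fin N) K)]
  (hz : ∀ k, algebraMap (MvPolynomial (Fin d) K) (MvPolynomial (Fin N) K) (X k) = z k)
include hz

lemma finrank_quotient_span_range :
    finrank (MvPolynomial (Fin d) K) (MvPolynomial (Fin N) K ⧸ Ideal.span (Set.range f)) =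
      2 ^ c := by
  have h := tendsto_nhds_unique
    (tendsto_sum_hilbertFunction_div_pow (isHomogeneous_algebraMap_X hz hg)
      (isHomogeneous_span_range_inl hg) fun n hn =>
        hilbertFunction_sup_map_idealOfVars_eq_zero hz hg le_rfl hn)
    (tendsto_sum_hilbertFunction_span_range_div_pow hg)
  exact_mod_cast (div_left_inj' (by positivity)).1 h

lemma free_quotient_span_range :
    Module.Free (MvPolynomial (Fin d) K) (MvPolynomial (Fin N) K ⧸ Ideal.span (Set.range f)) := by
  refine (eq_and_free_quotient_of_sum_hilbertFunction_le (isHomogeneous_algebraMap_X hz hg)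
    (isHomogeneous_span_range_inl hg) (fun n hn =>
      hilbertFunction_sup_map_idealOfVars_eq_zero hz hg le_rfl hn) le_rfl ?_).2
  simp only [span_range_sup_map_idealOfVars hz, hilbertFunction_span_range_sumElim hg,
    Nat.succ_eq_add_one, Nat.sum_range_choose, finrank_quotient_span_range hg hz, le_refl]

variable {I : Ideal (MvPolynomial (Fin N) K)} (hfI : Ideal.span (Set.range f) ≤ I)
include hfI

lemma module_finite_quotient (hI : I.IsHomogeneous (homogeneousSubmodule (Fin N) K)) :
    Module.Finite (MvPolynomial (Fin d) K) (MvPolynomial (Fin N) K ⧸ I) := by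
  obtain ⟨e, he⟩ := exists_span_range_eq_top (isHomogeneous_algebraMap_X hz hg) hI fun n hn =>
    hilbertFunction_sup_map_idealOfVars_eq_zero hz hg hfI hn
  exact ⟨Submodule.fg_def.2 ⟨_, Set.finite_range e, he⟩⟩

variable (hf : c ≤ (Ideal.span (Set.range f)).height) (hIc : I.height = c)
include hf hIc

lemma eq_zero_of_algebraMap_mem {p : MvPolynomial (Fin d) K}
    (hp : algebraMap _ (MvPolynomial (Fin N) K) p ∈ I) : p = 0 := by
  by_contra hp0
  have := free_quotient_span_range hg hz
  have hreg : IsSMulRegular (MvPolynomial (Fin N) K ⧸ Ideal.span (Set.range f))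
      (algebraMap _ (MvPolynomial (Fin N) K) p) := by
    simpa only [IsSMulRegular, Function.Injective, algebraMap_smul] using
      fun x y h => smul_right_injective _ hp0 h
  obtain ⟨P, hP, hIP, hPc⟩ := Ideal.exists_isPrime_height_eq hIc
  refine hreg.notMem_of_mem_minimalPrimes ?_ (hIP hp)
  rw [Ideal.annihilator_quotient]
  exact Ideal.mem_minimalPrimes_of_height_le (hfI.trans hIP) (hPc.trans_le hf)

lemma finrank_quotient_eq_hilbertSamuelMultiplicity
    (hI : I.IsHomogeneous (homogeneousSubmodule (Fin N) K))
    (hmult : hilbertSamuelMultiplicity K I ≠ 0) :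
    hilbertSamuelMultiplicity K I =
      finrank (MvPolynomial (Fin d) K) (MvPolynomial (Fin N) K ⧸ I) := by
  have := module_finite_quotient hg hz hfI hI
  refine hilbertSamuelMultiplicity_eq_of_tendsto (fun h => ?_) hmult
    (tendsto_sum_hilbertFunction_div_pow (isHomogeneous_algebraMap_X hz hg) hI fun n hn =>
      hilbertFunction_sup_map_idealOfVars_eq_zero hz hg hfI hn)
  obtain ⟨a, ha, ha1⟩ := finrank_eq_zero_iff.1 h 1
  exact ha (eq_zero_of_algebraMap_mem hg hz hfI hf hIc
    (Ideal.Quotient.eq_zero_iff_mem.1 ((Algebra.algebraMap_eq_smul_one a).trans ha1)))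

end NoetherNormalization

section ExtraQuadric

open MvPolynomial Module

attribute [local instance] MvPolynomial.gradedAlgebra

lemma card_add_finrank_le_finrank {R M M' ι : Type*} [CommRing R] [IsDomain R] [IsNoetherianRing R]
    [AddCommGroup M] [Module R M] [Module.Finite R M] [AddCommGroup M'] [Module R M'] [Fintype ι]
    {g : M →ₗ[R] M'} (hg : Function.Surjective g) {v : ι → M} (hv : LinearIndependent R v)
    (hgv : ∀ i, g (v i) = 0) : Fintype.card ι + finrank R M' ≤ finrank R M := by
  have hv' : LinearIndependent R fun i => (⟨v i, hgv i⟩ : LinearMap.ker g) :=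
    .of_comp (LinearMap.ker g).subtype hv
  have := hv'.fintype_card_le_finrank
  rw [← Submodule.finrank_quotient_add_finrank (LinearMap.ker g),
    (g.quotKerEquivOfSurjective hg).finrank_eq, add_comm]
  gcongr

lemma eq_zero_of_sum_smul_mem_of_injective {K : Type u} [Field K] {N : ℕ} {ι : Type*} [Fintype ι]
    {J : Ideal (MvPolynomial (Fin N) K)}
    (hJ : J.IsHomogeneous (homogeneousSubmodule (Fin N) K)) {v : ι → MvPolynomial (Fin N) K}
    {n : ι → ℕ} (hn : Function.Injective n) (hv : ∀ i, (v i).IsHomogeneous (n i))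
    (hvJ : ∀ i, v i ∉ J) {c : ι → K} (hc : ∑ i, c i • v i ∈ J) : c = 0 := by
  classical
  funext i
  by_contra hci
  have h := homogeneousComponent_mem_of_mem hJ hc (n i)
  simp only [map_sum, map_smul, homogeneousComponent_of_mem (hv _), hn.eq_iff, smul_ite, smul_zero,
    Finset.sum_ite_eq, Finset.mem_univ, if_true] at h
  exact hvJ i ((J.restrictScalars K).smul_mem_iff hci |>.1 h)

variable {K : Type u} [Field K] {N c d : ℕ}
  [Algebra (MvPolynomial (Fin d) K) (MvPolynomial (Fin N) K)]

lemma mem_sup_map_idealOfVars_of_mk_mem {J : Ideal (MvPolynomial (Fin N) K)}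
    {t : MvPolynomial (Fin N) K} (ht : Ideal.Quotient.mk J t ∈ idealOfVars (Fin d) K •
      (⊤ : Submodule (MvPolynomial (Fin d) K) (MvPolynomial (Fin N) K ⧸ J))) :
    t ∈ J ⊔ (idealOfVars (Fin d) K).map (algebraMap _ _) := by
  let J' := J ⊔ (idealOfVars (Fin d) K).map (algebraMap _ (MvPolynomial (Fin N) K))
  have hle : idealOfVars (Fin d) K • ⊤ ≤
      (J'.map (Ideal.Quotient.mk J)).restrictScalars (MvPolynomial (Fin d) K) := by
    refine Submodule.smul_le.2 fun p hp x _ => ?_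
    obtain ⟨y, rfl⟩ := Ideal.Quotient.mk_surjective x
    rw [Submodule.restrictScalars_mem, ← algebraMap_smul (MvPolynomial (Fin N) K) p]
    exact Ideal.mem_map_of_mem _ (J'.mul_mem_right y
      (Ideal.mem_sup_right (Ideal.mem_map_of_mem _ hp)))
  exact (Ideal.mem_quotient_iff_mem le_sup_left).1 (hle ht)

variable {f : Fin c → MvPolynomial (Fin N) K}
  {z : Fin d → MvPolynomial (Fin N) K}
  (hg : IsHomogeneousParameterSystem (Sum.elim f z) (Sum.elim (fun _ => 2) fun _ => 1))
  (hz : ∀ k, algebraMap (MvPolynomial (Fin d) K) (MvPolynomial (Fin N) K) (X k) = z k)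
  [IsScalarTower K (MvPolynomial (Fin d) K) (MvPolynomial (Fin N) K)]
  {I : Ideal (MvPolynomial (Fin N) K)} (hfI : Ideal.span (Set.range f) ≤ I)
  {q : MvPolynomial (Fin N) K} (hqI : q ∈ I)
include hg hz hfI hqI

/-- If a quadric `q ∈ I` were in `(f, z)` but not in `(f)`, then the multiples `w o * q` would be
linearly independent elements of `I / (f)`. -/
lemma card_add_finrank_quotient_le {u : Fin d → MvPolynomial (Fin N) K}
    (hu : q - ∑ k, (X k : MvPolynomial (Fin d) K) • u k ∈ Ideal.span (Set.range f)) {k₀ : Fin d}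
    {ι : Type*} [Fintype ι] {w : ι → MvPolynomial (Fin N) K} {n : ι → ℕ}
    (hn : Function.Injective n) (hw : ∀ o, (w o * u k₀).IsHomogeneous (n o))
    (hw_notMem : ∀ o, w o * u k₀ ∉ Ideal.span (Set.range (Sum.elim f z))) :
    Fintype.card ι + finrank (MvPolynomial (Fin d) K) (MvPolynomial (Fin N) K ⧸ I) ≤ 2 ^ c := by
  have := free_quotient_span_range hg hz
  have := module_finite_quotient hg hz le_rfl (isHomogeneous_span_range_inl hg)
  have hind := linearIndependent_sum_X_smul (K := K) (ι := ι) (k₀ := k₀)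
    (Module.Free.chooseBasis (MvPolynomial (Fin d) K)
      (MvPolynomial (Fin N) K ⧸ Ideal.span (Set.range f)))
    (u := fun o k => Ideal.Quotient.mk _ (w o * u k)) fun a ha =>
      eq_zero_of_sum_smul_mem_of_injective (hg.isHomogeneous_span (Set.univ)) hn hw
        (by simpa using hw_notMem) (by
          rw [Set.image_univ, ← span_range_sup_map_idealOfVars hz]
          refine mem_sup_map_idealOfVars_of_mk_mem (Set.mem_of_eq_of_mem ?_ ha)
          rw [map_sum]
          refine Finset.sum_congr rfl fun o _ => ?_
          rw [← algebraMap_eq, algebraMap_smul]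
          rfl)
  rw [← finrank_quotient_span_range hg hz]
  refine card_add_finrank_le_finrank
    (g := (Ideal.Quotient.factorₐ (MvPolynomial (Fin d) K) hfI).toLinearMap)
    (Ideal.Quotient.factor_surjective hfI) hind fun o => ?_
  rw [map_sum]
  simp only [map_smul]
  have h : w o * ∑ k, (X k : MvPolynomial (Fin d) K) • u k ∈ I := by
    rw [← sub_sub_cancel q (∑ k, _), mul_sub]
    exact I.sub_mem (I.mul_mem_left _ hqI) (I.mul_mem_left _ (hfI hu))
  rw [← Ideal.Quotient.eq_zero_iff_mem, Finset.mul_sum, map_sum] at h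
  simp only [mul_smul_comm] at h
  exact h

variable (hq : q.IsHomogeneous 2) (hqf : q ∉ Ideal.span (Set.range f))
  (hf : c ≤ (Ideal.span (Set.range f)).height) (hIc : I.height = c)
include hq hqf hf hIc

lemma exists_sub_sum_smul_mem_and_notMem
    (hqz : q ∈ Ideal.span (Set.range (Sum.elim f z))) :
    ∃ (u : Fin d → MvPolynomial (Fin N) K) (k₀ : Fin d), (u k₀).IsHomogeneous 1 ∧
      q - ∑ k, (X k : MvPolynomial (Fin d) K) • u k ∈ Ideal.span (Set.range f) ∧
      u k₀ ∉ Ideal.span (Set.range (Sum.elim f z)) := by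
  have hz1 := isHomogeneous_algebraMap_X hz hg
  have hF := isHomogeneous_span_range_inl hg
  rw [← span_range_sup_map_idealOfVars hz] at hqz ⊢
  obtain ⟨u, hu, hqu⟩ := exists_isHomogeneous_sub_sum_smul_mem hz1 hF hq hqz
  by_contra! h
  choose v hv huv using fun k => exists_isHomogeneous_sub_sum_smul_mem hz1 hF (hu k)
    (h u k (hu k) hqu)
  have hvC (k l) : v k l = C (coeff 0 (v k l)) :=
    totalDegree_eq_zero_iff_eq_C.1 ((totalDegree_zero_iff_isHomogeneous _).2 (hv k l))
  let p : MvPolynomial (Fin d) K := ∑ k, X k * ∑ l, X l * C (coeff 0 (v k l))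
  have hqp : q - algebraMap _ _ p ∈ Ideal.span (Set.range f) := by
    have hp : algebraMap _ _ p = ∑ k, (X k : MvPolynomial (Fin d) K) •
        ∑ l, (X l : MvPolynomial (Fin d) K) • v k l := by
      simp only [p, map_sum, map_mul, Algebra.smul_def]
      refine Finset.sum_congr rfl fun k _ => congrArg _ (Finset.sum_congr rfl fun l _ => ?_)
      conv_rhs => rw [hvC k l]
      rw [← algebraMap_eq, ← IsScalarTower.algebraMap_apply, algebraMap_eq]
    rw [hp, ← sub_add_sub_cancel _ (∑ k, (X k : MvPolynomial (Fin d) K) • u k),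
      ← Finset.sum_sub_distrib]
    simp only [← smul_sub]
    exact add_mem hqu (sum_mem fun k _ => Submodule.smul_of_tower_mem _ _ (huv k))
  have hp : p = 0 := eq_zero_of_algebraMap_mem hg hz hfI hf hIc <| by
    simpa using I.sub_mem hqI (hfI hqp)
  exact hqf (by simpa [hp] using hqp)

end ExtraQuadric

section AlmostCompleteIntersection

open MvPolynomial Module

attribute [local instance] MvPolynomial.gradedAlgebra

lemma IsHomogeneousParameterSystem.exists_isHomogeneous_mul_notMem {K : Type u} [Field K]
    [Infinite K] {N : ℕ} {ι : Type*} [Fintype ι] {g : ι → MvPolynomial (Fin N) K} {e : ι → ℕ}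
    (hg : IsHomogeneousParameterSystem g e) {b : MvPolynomial (Fin N) K} {n : ℕ}
    (hb : b.IsHomogeneous n) (hbg : b ∉ Ideal.span (Set.range g)) (j : ℕ)
    (hj : n + j + N ≤ ∑ i, e i) :
    ∃ w : MvPolynomial (Fin N) K, w.IsHomogeneous j ∧ w * b ∉ Ideal.span (Set.range g) := by
  induction j with
  | zero => exact ⟨1, isHomogeneous_one _ _, by rwa [one_mul]⟩
  | succ j ih =>
    obtain ⟨w, hw, hwb⟩ := ih (by omega)
    by_contra! h
    have := hg.add_card_eq_sum_of_forall_X_mul_mem (hw.mul hb) (fun i => ?_) hwb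
    · omega
    · rw [← mul_assoc]
      exact h _ (add_comm 1 j ▸ (isHomogeneous_X K i).mul hw)

variable {K : Type u} [Field K] [Infinite K] {N c d : ℕ} {f : Fin c → MvPolynomial (Fin N) K}
  {z : Fin d → MvPolynomial (Fin N) K}
  (hg : IsHomogeneousParameterSystem (Sum.elim f z) (Sum.elim (fun _ => 2) fun _ => 1))
include hg

lemma exists_isHomogeneous_mul_notMem_span_range_sumElim {b : MvPolynomial (Fin N) K} {n : ℕ}
    (hb : b.IsHomogeneous n) (hbg : b ∉ Ideal.span (Set.range (Sum.elim f z))) (j : ℕ)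
    (hj : n + j ≤ c) : ∃ w : MvPolynomial (Fin N) K, w.IsHomogeneous j ∧
      w * b ∉ Ideal.span (Set.range (Sum.elim f z)) := by
  refine hg.exists_isHomogeneous_mul_notMem hb hbg j ?_
  have := hg.card_eq
  simp only [Fintype.card_sum, Fintype.card_fin] at this
  simp only [Fintype.sum_sum_type, Sum.elim_inl, Sum.elim_inr, Finset.sum_const, Finset.card_univ,
    Fintype.card_fin, smul_eq_mul]
  omega

variable [Algebra (MvPolynomial (Fin d) K) (MvPolynomial (Fin N) K)]
  (hz : ∀ k, algebraMap (MvPolynomial (Fin d) K) (MvPolynomial (Fin N) K) (X k) = z k)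
include hz

lemma hilbertFunction_sup_map_idealOfVars_lt {J : Ideal (MvPolynomial (Fin N) K)}
    (hJ : Ideal.span (Set.range f) ≤ J) {q : MvPolynomial (Fin N) K} {m n : ℕ} (hqJ : q ∈ J)
    (hq : q.IsHomogeneous m) (hqg : q ∉ Ideal.span (Set.range (Sum.elim f z)))
    (hmn : m ≤ n) (hnc : n ≤ c) :
    hilbertFunction K (J ⊔ (idealOfVars (Fin d) K).map (algebraMap _ _)) n < c.choose n := by
  obtain ⟨j, rfl⟩ := Nat.exists_eq_add_of_le hmn
  obtain ⟨w, hw, hwq⟩ := exists_isHomogeneous_mul_notMem_span_range_sumElim hg hq hqg j hnc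
  rw [← hilbertFunction_span_range_sumElim hg]
  refine hilbertFunction_lt_of_mem_of_notMem ?_ (add_comm m j ▸ hw.mul hq)
    (Ideal.mem_sup_left (J.mul_mem_left w hqJ)) hwq
  rw [← span_range_sup_map_idealOfVars hz]
  exact sup_le_sup_right hJ _

lemma sum_hilbertFunction_sup_map_idealOfVars_le {J : Ideal (MvPolynomial (Fin N) K)}
    (hJ : Ideal.span (Set.range f) ≤ J) {q : MvPolynomial (Fin N) K} (hqJ : q ∈ J)
    (hq : q.IsHomogeneous 2) (hqg : q ∉ Ideal.span (Set.range (Sum.elim f z))) (hc : 2 ≤ c) :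
    c + ∑ n ∈ Finset.range c,
      hilbertFunction K (J ⊔ (idealOfVars (Fin d) K).map (algebraMap _ _)) n ≤ 2 ^ c + 1 := by
  obtain ⟨c, rfl⟩ := Nat.exists_eq_add_of_le' hc
  have h₀ := hilbertFunction_sup_map_idealOfVars_le hz hg hJ 0
  have h₁ := hilbertFunction_sup_map_idealOfVars_le hz hg hJ 1
  have h₂ : ∑ n ∈ Finset.range c, (hilbertFunction K
        (J ⊔ (idealOfVars (Fin d) K).map (algebraMap _ (MvPolynomial (Fin N) K))) (n + 2) + 1) ≤
      ∑ n ∈ Finset.range c, (c + 2).choose (n + 2) := Finset.sum_le_sum fun n hn =>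
    hilbertFunction_sup_map_idealOfVars_lt hg hz hJ hqJ hq hqg (by omega)
      (by have := Finset.mem_range.1 hn; omega)
  have hsum := Nat.sum_range_choose (c + 2)
  rw [Finset.sum_range_succ, Nat.choose_self, Finset.sum_range_succ', Finset.sum_range_succ']
    at hsum
  rw [Finset.sum_range_succ', Finset.sum_range_succ']
  rw [Finset.sum_add_distrib, Finset.sum_const, Finset.card_range, smul_eq_mul, mul_one] at h₂
  simp only [zero_add, add_assoc, Nat.reduceAdd] at hsum ⊢
  omega

variable [IsScalarTower K (MvPolynomial (Fin d) K) (MvPolynomial (Fin N) K)]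
  {I : Ideal (MvPolynomial (Fin N) K)} (hfI : Ideal.span (Set.range f) ≤ I)
  (hf : c ≤ (Ideal.span (Set.range f)).height) (hIc : I.height = c)
include hfI hf hIc

lemma notMem_span_range_sumElim_of_notMem {q : MvPolynomial (Fin N) K} (hqI : q ∈ I)
    (hq : q.IsHomogeneous 2) (hqf : q ∉ Ideal.span (Set.range f))
    (hI : 2 ^ c < c + finrank (MvPolynomial (Fin d) K) (MvPolynomial (Fin N) K ⧸ I)) :
    q ∉ Ideal.span (Set.range (Sum.elim f z)) := by
  intro hqg
  obtain ⟨u, k₀, hu, hqu, hug⟩ :=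
    exists_sub_sum_smul_mem_and_notMem hg hz hfI hqI hq hqf hf hIc hqg
  choose w hw hwg using fun o : Fin c =>
    exists_isHomogeneous_mul_notMem_span_range_sumElim hg hu hug o (by omega)
  refine hI.not_ge ?_
  simpa using card_add_finrank_quotient_le hg hz hfI hqI hqu
    ((add_left_injective 1).comp Fin.val_injective) (fun o => (hw o).mul hu) hwg

/-- The value `2 ^ c - c + 1` of the rank is both large enough to force a quadric of `I` outside
`(f)` to be nonzero modulo the linear parameters and small enough to leave no room between
`(f, q)` and `I`. -/
theorem exists_eq_sup_span_singleton_and_free {Q : Set (MvPolynomial (Fin N) K)}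
    (hQ : ∀ q ∈ Q, q.IsHomogeneous 2) (hI : I = Ideal.span Q) (hc : 2 ≤ c)
    (hrank : c + finrank (MvPolynomial (Fin d) K) (MvPolynomial (Fin N) K ⧸ I) = 2 ^ c + 1) :
    ∃ q, q.IsHomogeneous 2 ∧ I = Ideal.span (Set.range f) ⊔ Ideal.span {q} ∧
      Module.Free (MvPolynomial (Fin d) K) (MvPolynomial (Fin N) K ⧸ I) := by
  obtain ⟨q, hqQ, hqf⟩ : ∃ q ∈ Q, q ∉ Ideal.span (Set.range f) := by
    by_contra! h
    have hIf : I = Ideal.span (Set.range f) := hfI.antisymm' (hI ▸ Ideal.span_le.2 h)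
    have := finrank_quotient_span_range hg hz
    rw [← hIf] at this
    omega
  have hqI : q ∈ I := hI ▸ Ideal.subset_span hqQ
  have hqg := notMem_span_range_sumElim_of_notMem hg hz hfI hf hIc hqI (hQ q hqQ) hqf (by omega)
  let J := Ideal.span (Set.range f) ⊔ Ideal.span {q}
  have hqJ : q ∈ J := Ideal.mem_sup_right (Ideal.mem_span_singleton_self q)
  have hsum := sum_hilbertFunction_sup_map_idealOfVars_le hg hz le_sup_left hqJ (hQ q hqQ) hqg hc
  have h := eq_and_free_quotient_of_sum_hilbertFunction_le (isHomogeneous_algebraMap_X hz hg)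
    (isHomogeneous_sup_span_singleton (isHomogeneous_span_range_inl hg) (hQ q hqQ)) (fun n hn => ?_)
    (sup_le hfI ((Ideal.span_singleton_le_iff_mem I).2 hqI)) (m := c) (by omega)
  · exact ⟨q, hQ q hqQ, h.1.symm, h.2⟩
  obtain rfl | hn := hn.eq_or_lt
  · exact Nat.lt_one_iff.1 ((hilbertFunction_sup_map_idealOfVars_lt hg hz le_sup_left hqJ
      (hQ q hqQ) hqg hc le_rfl).trans_eq (Nat.choose_self c))
  · exact hilbertFunction_sup_map_idealOfVars_eq_zero hz hg le_sup_left hn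

end AlmostCompleteIntersection

section ProjectiveDimension

open Polynomial
open scoped TensorProduct

lemma hasProjectiveDimensionLE_zero_iff {R : Type u} [CommRing R] {M : Type u} [AddCommGroup M]
    [Module R M] :
    HasProjectiveDimensionLE (ModuleCat.of R M) 0 ↔ Module.Projective R M :=
  (projective_iff_hasProjectiveDimensionLE_zero _).symm.trans (IsProjective.iff_projective M).symm

lemma hasProjectiveDimensionLE_succ_iff_of_exact {R : Type u} [CommRing R] {L P M : Type u}
    [AddCommGroup L] [Module R L] [AddCommGroup P] [Module R P] [Module.Projective R P]
    [AddCommGroup M] [Module R M] {f : L →ₗ[R] P} {g : P →ₗ[R] M} (hfg : Function.Exact f g)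
    (hf : Function.Injective f) (hg : Function.Surjective g) (n : ℕ) :
    HasProjectiveDimensionLE (ModuleCat.of R M) (n + 1) ↔
      HasProjectiveDimensionLE (ModuleCat.of R L) n :=
  (ModuleCat.shortComplex_shortExact (ModuleCat.shortComplexOfCompEqZero f g
    hfg.linearMap_comp_eq_zero) hfg hf hg).hasProjectiveDimensionLT_X₃_iff n
    ((IsProjective.iff_projective P).1 inferInstance)

lemma hasProjectiveDimensionLE_succ_iff_ker {R : Type u} [CommRing R] {P M : Type u}
    [AddCommGroup P] [Module R P] [Module.Projective R P] [AddCommGroup M] [Module R M]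
    {f : P →ₗ[R] M} (hf : Function.Surjective f) (n : ℕ) :
    HasProjectiveDimensionLE (ModuleCat.of R M) (n + 1) ↔
      HasProjectiveDimensionLE (ModuleCat.of R (LinearMap.ker f)) n :=
  hasProjectiveDimensionLE_succ_iff_of_exact (LinearMap.exact_subtype_ker_map f)
    Subtype.val_injective hf n

section BaseChange

variable {R : Type u} [CommRing R] (A : Type u) [CommRing A] [Algebra R A]

lemma hasProjectiveDimensionLE_succ_baseChange_iff_ker [Module.Flat R A] {P M : Type u}
    [AddCommGroup P] [Module R P] [Module.Projective R P] [AddCommGroup M] [Module R M]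
    {f : P →ₗ[R] M} (hf : Function.Surjective f) (n : ℕ) :
    HasProjectiveDimensionLE (ModuleCat.of A (A ⊗[R] M)) (n + 1) ↔
      HasProjectiveDimensionLE (ModuleCat.of A (A ⊗[R] LinearMap.ker f)) n :=
  hasProjectiveDimensionLE_succ_iff_of_exact (f := (LinearMap.ker f).subtype.baseChange A)
    (g := f.baseChange A) (lTensor_exact A (LinearMap.exact_subtype_ker_map f) hf)
    (Module.Flat.lTensor_preserves_injective_linearMap _ Subtype.val_injective)
    (LinearMap.lTensor_surjective A hf) n

lemma hasProjectiveDimensionLE_baseChange [Module.Flat R A] (n : ℕ) :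
    ∀ {M : Type u} [AddCommGroup M] [Module R M],
      HasProjectiveDimensionLE (ModuleCat.of R M) n →
        HasProjectiveDimensionLE (ModuleCat.of A (A ⊗[R] M)) n := by
  induction n with
  | zero =>
    intro M _ _ hM
    rw [hasProjectiveDimensionLE_zero_iff] at hM ⊢
    infer_instance
  | succ n ih =>
    intro M _ _ hM
    have hf : Function.Surjective (Finsupp.linearCombination R (id : M → M)) :=
      Finsupp.linearCombination_id_surjective R M
    rw [hasProjectiveDimensionLE_succ_iff_ker hf] at hM
    exact (hasProjectiveDimensionLE_succ_baseChange_iff_ker A hf n).2 (ih hM)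

lemma hasProjectiveDimensionLE_of_baseChange [IsNoetherianRing R] [Module.FaithfullyFlat R A]
    (n : ℕ) : ∀ {M : Type u} [AddCommGroup M] [Module R M] [Module.Finite R M],
      HasProjectiveDimensionLE (ModuleCat.of A (A ⊗[R] M)) n →
        HasProjectiveDimensionLE (ModuleCat.of R M) n := by
  induction n with
  | zero =>
    intro M _ _ _ hM
    rw [hasProjectiveDimensionLE_zero_iff] at hM ⊢
    have : Module.Flat R M := Module.Flat.of_flat_tensorProduct R M A
    have : Module.FinitePresentation R M := Module.finitePresentation_of_finite R M
    exact Module.Flat.projective_of_finitePresentation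
  | succ n ih =>
    intro M _ _ _ hM
    obtain ⟨m, f, hf⟩ := Module.Finite.exists_fin' R M
    rw [hasProjectiveDimensionLE_succ_baseChange_iff_ker A hf] at hM
    exact (hasProjectiveDimensionLE_succ_iff_ker hf n).2 (ih hM)

end BaseChange

section RingEquiv

attribute [local instance] RingHomInvPair.of_ringEquiv

lemma hasProjectiveDimensionLE_of_ringEquiv {R R' : Type u} [CommRing R] [CommRing R']
    (e : R ≃+* R') {M : Type u} [AddCommGroup M] [Module R M] [Module R' M]
    (he : ∀ (r : R) (m : M), e r • m = r • m) (n : ℕ)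
    (_ : HasProjectiveDimensionLE (ModuleCat.of R M) n) :
    HasProjectiveDimensionLE (ModuleCat.of R' M) n :=
  let e' : M ≃ₛₗ[RingHomClass.toRingHom e] M :=
    { AddEquiv.refl M with map_smul' := fun r m => (he r m).symm }
  ModuleCat.hasProjectiveDimensionLE_of_semiLinearEquiv (M := ModuleCat.of R M)
    (N := ModuleCat.of R' M) e e' n

end RingEquiv

section Polynomial

variable (A M : Type u) [CommRing A] [AddCommGroup M] [Module A M] [Module A[X] M]
  [IsScalarTower A A[X] M]

/-- The endomorphism `X ⊗ 1 - 1 ⊗ X` of `A[X] ⊗[A] M`, whose cokernel is `M`. -/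
noncomputable def tensorXSubX : A[X] ⊗[A] M →ₗ[A[X]] A[X] ⊗[A] M :=
  (X : A[X]) • LinearMap.id - (Module.toModuleEnd A (S := A[X]) M X).baseChange A[X]

lemma tensorXSubX_tmul (p : A[X]) (m : M) :
    tensorXSubX A M (p ⊗ₜ m) = (X * p) ⊗ₜ m - p ⊗ₜ ((X : A[X]) • m) := by
  simp [tensorXSubX, TensorProduct.smul_tmul']

lemma sub_tmul_smul_mem_range_tensorXSubX (p : A[X]) (m : M) :
    p ⊗ₜ[A] m - 1 ⊗ₜ[A] (p • m) ∈ LinearMap.range (tensorXSubX A M) := by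
  induction p using Polynomial.induction_on generalizing m with
  | C a =>
    have hC : (C a : A[X]) ⊗ₜ[A] m = 1 ⊗ₜ ((C a : A[X]) • m) := by
      rw [← mul_one (C a), ← Polynomial.smul_eq_C_mul, TensorProduct.smul_tmul, smul_assoc,
        one_smul]
    rw [hC, sub_self]
    exact zero_mem _
  | add p q hp hq =>
    rw [add_smul, TensorProduct.tmul_add, TensorProduct.add_tmul, add_sub_add_comm]
    exact add_mem (hp m) (hq m)
  | monomial n a ih =>
    have hmem : tensorXSubX A M ((C a * X ^ n) ⊗ₜ m) + ((C a * X ^ n) ⊗ₜ[A] ((X : A[X]) • m) -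
        1 ⊗ₜ ((C a * X ^ n) • (X : A[X]) • m)) ∈ LinearMap.range (tensorXSubX A M) :=
      add_mem ⟨_, rfl⟩ (ih (X • m))
    rwa [tensorXSubX_tmul, smul_smul, sub_add_sub_cancel, mul_comm X, mul_assoc, ← pow_succ]
      at hmem

lemma exact_tensorXSubX_liftBaseChange :
    Function.Exact (tensorXSubX A M)
      (LinearMap.liftBaseChange A[X] (LinearMap.id : M →ₗ[A] M)) := by
  have sub_mem (t : A[X] ⊗[A] M) :
      t - 1 ⊗ₜ LinearMap.liftBaseChange A[X] (LinearMap.id : M →ₗ[A] M) t ∈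
        LinearMap.range (tensorXSubX A M) := by
    induction t with
    | zero => simp
    | tmul p m => simpa using sub_tmul_smul_mem_range_tensorXSubX A M p m
    | add s t hs ht =>
      rw [map_add, TensorProduct.tmul_add, add_sub_add_comm]
      exact add_mem hs ht
  refine fun t => ⟨fun ht => by simpa [ht] using sub_mem t, ?_⟩
  rintro ⟨t, rfl⟩
  induction t with
  | zero => simp
  | tmul p m => simp [tensorXSubX_tmul, smul_smul, mul_comm]
  | add s t hs ht => rw [map_add, map_add, hs, ht, add_zero]

lemma equivFinsuppOfBasisLeft_tensorXSubX (t : A[X] ⊗[A] M) (n : ℕ) :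
    TensorProduct.equivFinsuppOfBasisLeft (basisMonomials A) (tensorXSubX A M t) (n + 1) =
      TensorProduct.equivFinsuppOfBasisLeft (basisMonomials A) t n -
        (X : A[X]) • TensorProduct.equivFinsuppOfBasisLeft (basisMonomials A) t (n + 1) := by
  have repr_apply (p : A[X]) (i : ℕ) : (basisMonomials A).repr p i = p.coeff i := rfl
  induction t with
  | zero => simp
  | tmul p m =>
    rw [tensorXSubX_tmul, map_sub, Finsupp.sub_apply]
    simp only [TensorProduct.equivFinsuppOfBasisLeft_apply_tmul_apply, repr_apply, coeff_X_mul,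
      smul_comm (p.coeff (n + 1))]
  | add s t hs ht =>
    simp only [map_add, Finsupp.add_apply, hs, ht, smul_add]
    abel

lemma tensorXSubX_injective : Function.Injective (tensorXSubX A M) := by
  rw [injective_iff_map_eq_zero]
  intro t ht
  set v := TensorProduct.equivFinsuppOfBasisLeft (basisMonomials A) t
  have coeff_eq (n : ℕ) : v n = (X : A[X]) • v (n + 1) := by
    have := equivFinsuppOfBasisLeft_tensorXSubX A M t n
    rwa [ht, map_zero, Finsupp.zero_apply, eq_comm, sub_eq_zero] at this
  obtain ⟨b, hb⟩ := v.support.bddAbove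
  have eq_zero (n : ℕ) (hn : n ≤ b + 1) : v n = 0 := by
    induction hn using Nat.decreasingInduction with
    | self => exact Finsupp.notMem_support_iff.1 fun h => absurd (hb h) (by simp)
    | of_succ n _ ih => rw [coeff_eq, ih, smul_zero]
  have hv0 : v = 0 := Finsupp.ext fun n => by
    by_cases hn : n ≤ b + 1
    · exact eq_zero n hn
    · exact Finsupp.notMem_support_iff.1 fun h => hn (le_add_right (hb h))
  exact (LinearEquiv.map_eq_zero_iff _).1 hv0

variable {A M}

lemma hasProjectiveDimensionLE_polynomial {n : ℕ}
    (hM : HasProjectiveDimensionLE (ModuleCat.of A M) n) :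
    HasProjectiveDimensionLE (ModuleCat.of A[X] M) (n + 1) :=
  have hexact := exact_tensorXSubX_liftBaseChange A M
  have hbase := hasProjectiveDimensionLE_baseChange A[X] n hM
  (ModuleCat.shortComplex_shortExact (ModuleCat.shortComplexOfCompEqZero _ _
    hexact.linearMap_comp_eq_zero) hexact (tensorXSubX_injective A M)
    fun m => ⟨1 ⊗ₜ m, by simp⟩).hasProjectiveDimensionLT_X₃ (n + 1) hbase
      (hasProjectiveDimensionLT_of_ge _ (n + 1) (n + 2) (Nat.le_succ _))

end Polynomial

lemma hasProjectiveDimensionLE_mvPolynomial {A : Type u} [CommRing A] (n m : ℕ) :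
    ∀ {M : Type u} [AddCommGroup M] [Module A M] [Module (MvPolynomial (Fin m) A) M]
      [IsScalarTower A (MvPolynomial (Fin m) A) M],
      HasProjectiveDimensionLE (ModuleCat.of A M) n →
        HasProjectiveDimensionLE (ModuleCat.of (MvPolynomial (Fin m) A) M) (n + m) := by
  induction m with
  | zero =>
    intro M _ _ _ _ hM
    refine hasProjectiveDimensionLE_of_ringEquiv
      (MvPolynomial.isEmptyRingEquiv A (Fin 0)).symm (fun r m => ?_) n hM
    rw [MvPolynomial.isEmptyRingEquiv_symm_apply, ← MvPolynomial.algebraMap_eq, algebraMap_smul]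
  | succ m ih =>
    intro M _ _ _ _ hM
    let B := MvPolynomial (Fin m) A
    let φ := MvPolynomial.finSuccEquiv A m
    let _ : Module B[X] M := Module.compHom M φ.symm.toRingEquiv.toRingHom
    let _ : Module B M := Module.compHom M (algebraMap B B[X])
    have : IsScalarTower B B[X] M := IsScalarTower.of_algebraMap_smul fun _ _ => rfl
    have : IsScalarTower A B M := IsScalarTower.of_algebraMap_smul fun r m => by
      change φ.symm (algebraMap B B[X] (algebraMap A B r)) • m = r • m
      rw [← IsScalarTower.algebraMap_apply A B B[X], AlgEquiv.commutes, algebraMap_smul]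
    exact hasProjectiveDimensionLE_of_ringEquiv φ.symm.toRingEquiv (fun _ _ => rfl) (n + (m + 1))
      (hasProjectiveDimensionLE_polynomial (A := B) (ih hM))

end ProjectiveDimension

section LinearCoordinates

open MvPolynomial Module

lemma exists_basis_sum_of_linearIndependent {K V : Type*} [Field K] [AddCommGroup V] [Module K V]
    [Module.Finite K V] {c d : ℕ} (hV : finrank K V = c + d) {v : Fin d → V}
    (hv : LinearIndependent K v) :
    ∃ b : Basis (Fin c ⊕ Fin d) K V, ∀ k, b (.inr k) = v k := by
  obtain ⟨W, hW⟩ := (Submodule.span K (Set.range v)).exists_isCompl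
  have hfinrank : finrank K W = c := by
    have := Submodule.finrank_add_eq_of_isCompl hW
    rw [finrank_span_eq_card hv, Fintype.card_fin] at this
    lia
  exact ⟨((finBasisOfFinrankEq K W hfinrank).prod (Basis.span hv)).map
    (Submodule.prodEquivOfIsCompl W _ hW.symm), fun k => by simp [Basis.span_apply]⟩

lemma exists_algEquiv_of_linearIndependent {K : Type*} [Field K] {N c d : ℕ} (hN : c + d = N)
    {z : Fin d → MvPolynomial (Fin N) K} (hz : ∀ k, (z k).IsHomogeneous 1)
    (hli : LinearIndependent K z) :
    ∃ φ : MvPolynomial (Fin N) K ≃ₐ[K] MvPolynomial (Fin c ⊕ Fin d) K,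
      ∀ k, φ (z k) = X (.inr k) := by
  let L := Fintype.linearCombination K (X : Fin N → MvPolynomial (Fin N) K)
  have hrange (k : Fin d) : ∃ v, L v = z k := by
    rw [← LinearMap.mem_range, Fintype.range_linearCombination,
      ← homogeneousSubmodule_one_eq_span_X]
    exact hz k
  choose v hv using hrange
  obtain ⟨b, hb⟩ := exists_basis_sum_of_linearIndependent (c := c) (by simp [hN])
    (LinearIndependent.of_comp L (v := v) (by simpa only [Function.comp_def, hv] using hli))
  let ψ := SymmetricAlgebra.equivMvPolynomial (Pi.basisFun K (Fin N))
  have hψ (w : Fin N → K) : ψ (SymmetricAlgebra.ι K _ w) = L w := by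
    refine LinearMap.congr_fun (f := ψ.toLinearMap ∘ₗ SymmetricAlgebra.ι K _)
      ((Pi.basisFun K (Fin N)).ext fun i => ?_) w
    simpa [ψ, L, Fintype.linearCombination_apply_single] using
      SymmetricAlgebra.equivMvPolynomial_ι_apply (Pi.basisFun K (Fin N)) i
  refine ⟨ψ.symm.trans (SymmetricAlgebra.equivMvPolynomial b), fun k => ?_⟩
  rw [AlgEquiv.trans_apply, ← hv, ← hψ, AlgEquiv.symm_apply_apply, ← hb,
    SymmetricAlgebra.equivMvPolynomial_ι_apply]

lemma nonempty_algEquiv_mvPolynomial {K : Type*} [Field K] {N c d : ℕ} (hN : c + d = N)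
    [Algebra (MvPolynomial (Fin d) K) (MvPolynomial (Fin N) K)]
    [IsScalarTower K (MvPolynomial (Fin d) K) (MvPolynomial (Fin N) K)]
    (hX : ∀ k : Fin d, (algebraMap (MvPolynomial (Fin d) K) (MvPolynomial (Fin N) K)
      (X k)).IsHomogeneous 1)
    (hinj : Function.Injective (algebraMap (MvPolynomial (Fin d) K) (MvPolynomial (Fin N) K))) :
    Nonempty (MvPolynomial (Fin c) (MvPolynomial (Fin d) K) ≃ₐ[MvPolynomial (Fin d) K]
      MvPolynomial (Fin N) K) := by
  let ι := IsScalarTower.toAlgHom K (MvPolynomial (Fin d) K) (MvPolynomial (Fin N) K)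
  obtain ⟨φ, hφ⟩ := exists_algEquiv_of_linearIndependent hN hX
    ((linearIndependent_X (Fin d) K).map' ι.toLinearMap (LinearMap.ker_eq_bot.2 hinj))
  let e := φ.trans (sumAlgEquiv K (Fin c) (Fin d))
  have he : e.toAlgHom.comp ι = IsScalarTower.toAlgHom K _ _ := by
    ext1 k
    simp [e, ι, hφ, algebraMap_eq]
  refine ⟨.ofRingEquiv (f := e.symm.toRingEquiv) fun p => ?_⟩
  exact e.symm_apply_eq.2 (AlgHom.congr_fun he p).symm

lemma hasProjectiveDimensionLE_of_algEquiv_mvPolynomial {R S : Type u} [CommRing R] [CommRing S]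
    [Algebra R S] {c : ℕ} (e : MvPolynomial (Fin c) R ≃ₐ[R] S) (M : Type u) [AddCommGroup M]
    [Module R M] [Module S M] [IsScalarTower R S M] [Module.Projective R M] :
    HasProjectiveDimensionLE (ModuleCat.of S M) c := by
  let _ : Module (MvPolynomial (Fin c) R) M := Module.compHom M e.toRingEquiv.toRingHom
  have : IsScalarTower R (MvPolynomial (Fin c) R) M := .of_algebraMap_smul fun r m => by
    change e (algebraMap R _ r) • m = r • m
    rw [AlgEquiv.commutes, algebraMap_smul]
  have := hasProjectiveDimensionLE_mvPolynomial 0 c (hasProjectiveDimensionLE_zero_iff.2 ‹_›)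
  rw [zero_add] at this
  exact hasProjectiveDimensionLE_of_ringEquiv e.toRingEquiv (fun _ _ => rfl) c this

end LinearCoordinates

section BaseChange

open MvPolynomial Module TensorProduct

lemma height_map_quotientMk_of_mem_minimalPrimes {R : Type*} [CommRing R] {I P : Ideal R}
    (hP : P ∈ I.minimalPrimes) : (P.map (Ideal.Quotient.mk I)).height = 0 := by
  rw [Ideal.minimalPrimes_eq_comap] at hP
  obtain ⟨q, hq, rfl⟩ := hP
  have := hq.1.1
  rwa [Ideal.map_comap_of_surjective _ Ideal.Quotient.mk_surjective, Ideal.height_eq_zero_iff]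

section

variable {R A : Type*} [CommRing R] [CommRing A] [Algebra R A] [IsNoetherianRing R]
  [IsNoetherianRing A]

lemma height_le_height_map [Module.Flat R A] (I : Ideal R) :
    I.height ≤ (I.map (algebraMap R A)).height := by
  rw [Ideal.height_eq_inf_minimalPrimes (I.map _)]
  refine le_iInf₂ fun P hP => ?_
  have := hP.1.1
  have : P.LiesOver (P.comap (algebraMap R A)) := ⟨rfl⟩
  rw [Ideal.height_eq_height_add_of_liesOver_of_hasGoingDown (P.comap (algebraMap R A)) P]
  exact (Ideal.height_mono (Ideal.map_le_iff_le_comap.1 hP.1.2)).trans le_self_add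

lemma height_map_le_height [Module.FaithfullyFlat R A] (I : Ideal R) :
    (I.map (algebraMap R A)).height ≤ I.height := by
  rw [Ideal.height_eq_inf_minimalPrimes I]
  refine le_iInf₂ fun p hp => ?_
  have := hp.1.1
  obtain ⟨P, hP, hPp⟩ := Ideal.exists_minimalPrimes_comap_eq (I := p.map (algebraMap R A))
    (algebraMap R A) p (by
      rw [Ideal.comap_map_eq_self_of_faithfullyFlat, Ideal.minimalPrimes_eq_subsingleton_self]
      rfl)
  have := hP.1.1
  have : P.LiesOver p := ⟨hPp.symm⟩
  calc (I.map (algebraMap R A)).height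
      ≤ P.height := Ideal.height_mono ((Ideal.map_mono hp.1.2).trans hP.1.2)
    _ ≤ p.height + (P.map (Ideal.Quotient.mk (p.map (algebraMap R A)))).height :=
      Ideal.height_le_height_add_of_liesOver p P
    _ = p.height := by rw [height_map_quotientMk_of_mem_minimalPrimes hP, add_zero]

lemma height_map [Module.FaithfullyFlat R A] (I : Ideal R) :
    (I.map (algebraMap R A)).height = I.height :=
  (height_map_le_height I).antisymm (height_le_height_map I)

end

lemma hasProjectiveDimensionLE_quotient_of_map {R : Type u} (A : Type u) [CommRing R] [CommRing A]
    [Algebra R A] [IsNoetherianRing R] [Module.FaithfullyFlat R A] {I : Ideal R} {n : ℕ}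
    (_ : HasProjectiveDimensionLE (ModuleCat.of A (A ⧸ I.map (algebraMap R A))) n) :
    HasProjectiveDimensionLE (ModuleCat.of R (R ⧸ I)) n :=
  hasProjectiveDimensionLE_of_baseChange A n
    (hasProjectiveDimensionLT_of_iso (I.qoutMapEquivTensorQout A).toModuleIso _)

lemma finrank_span_image_of_isBaseChange {k K V W : Type*} [Field k] [Field K] [Algebra k K]
    [AddCommGroup V] [Module k V] [AddCommGroup W] [Module k W] [Module K W] [IsScalarTower k K W]
    {f : V →ₗ[k] W} (hf : IsBaseChange K f) (p : Submodule k V) :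
    finrank K (Submodule.span K (f '' p)) = finrank k p := by
  have : Submodule.span K (f '' p) = (p.baseChange K).map hf.equiv.toLinearMap := by
    rw [Submodule.baseChange_eq_span, Submodule.map_span, Submodule.map_coe, Set.image_image]
    congr 1
    refine Set.image_congr fun x _ => ?_
    simp
  rw [this, LinearEquiv.finrank_map_eq, ← (Submodule.toBaseChange.toLinearEquiv K p).finrank_eq,
    finrank_baseChange]

lemma exists_isBaseChange_quotient_map (k K : Type*) {R A : Type*} [CommRing k] [CommRing K]
    [CommRing R] [CommRing A] [Algebra k K] [Algebra k R] [Algebra R A] [Algebra K A] [Algebra k A]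
    [IsScalarTower k R A] [IsScalarTower k K A] [Algebra.IsPushout k K R A] (I : Ideal R) :
    ∃ f : (R ⧸ I) →ₗ[k] (A ⧸ I.map (algebraMap R A)), IsBaseChange K f ∧
      ∀ r, f (Ideal.Quotient.mk I r) = Ideal.Quotient.mk _ (algebraMap R A r) := by
  let e : K ⊗[k] (R ⧸ I) ≃ₗ[K] (A ⧸ I.map (algebraMap R A)) :=
    (Algebra.IsPushout.cancelBaseChange k K R A (R ⧸ I)).symm ≪≫ₗ
      (Algebra.TensorProduct.quotIdealMapEquivTensorQuot A I).symm.toLinearEquiv.restrictScalars K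
  refine ⟨(e.restrictScalars k).toLinearMap ∘ₗ TensorProduct.mk k K (R ⧸ I) 1,
    .of_equiv e fun _ => rfl, fun r => ?_⟩
  have : e (1 ⊗ₜ Ideal.Quotient.mk I r) = Ideal.Quotient.mk _ (r • (1 : A)) := by
    simp only [e, LinearEquiv.trans_apply, Algebra.IsPushout.cancelBaseChange_symm_tmul, map_one]
    exact Algebra.TensorProduct.quotIdealMapEquivTensorQuot_symm_tmul A I 1 r
  rw [Algebra.algebraMap_eq_smul_one, ← this]
  rfl

section

attribute [local instance] MvPolynomial.algebraMvPolynomial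

variable {k : Type u} (K : Type u) [Field k] [Field K] [Algebra k K] {N : ℕ}

instance faithfullyFlat_mvPolynomial {σ : Type*} :
    Module.FaithfullyFlat (MvPolynomial σ k) (MvPolynomial σ K) :=
  have : Module.Free (MvPolynomial σ k) (MvPolynomial σ K) :=
    IsBaseChange.free (Algebra.IsPushout.out (R := k) (S := MvPolynomial σ k) (R' := K))
  inferInstance

lemma homogeneousSubmodule_eq_span_map {σ : Type*} (n : ℕ) :
    homogeneousSubmodule σ K n =
      Submodule.span K (MvPolynomial.map (algebraMap k K) '' homogeneousSubmodule σ k n) := by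
  refine le_antisymm (fun p hp => ?_) (Submodule.span_le.2 ?_)
  · rw [p.as_sum]
    refine sum_mem fun m hm => ?_
    rw [← mul_one (coeff m p), ← smul_eq_mul, ← smul_monomial]
    refine Submodule.smul_mem _ _ (Submodule.subset_span ⟨monomial m 1, ?_, ?_⟩)
    · refine isHomogeneous_monomial 1 ?_
      rw [Finsupp.degree_eq_weight_one]
      exact hp (mem_support_iff.1 hm)
    · rw [map_monomial, map_one]
  · rintro _ ⟨p, hp, rfl⟩
    exact IsHomogeneous.map hp _

lemma hilbertFunction_map (I : Ideal (MvPolynomial (Fin N) k)) (n : ℕ) :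
    hilbertFunction K (I.map (algebraMap _ (MvPolynomial (Fin N) K))) n =
      hilbertFunction k I n := by
  obtain ⟨f, hf, hfI⟩ := exists_isBaseChange_quotient_map k K (A := MvPolynomial (Fin N) K) I
  rw [hilbertFunction, hilbertFunction, ← finrank_span_image_of_isBaseChange hf,
    homogeneousSubmodule_eq_span_map (k := k), Submodule.map_span, Submodule.map_coe,
    Set.image_image, Set.image_image]
  exact congrArg (fun s => finrank K (Submodule.span K s)) (Set.image_congr fun p _ => (hfI p).symm)

lemma hilbertSamuelMultiplicity_map (I : Ideal (MvPolynomial (Fin N) k)) :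
    hilbertSamuelMultiplicity K (I.map (algebraMap _ (MvPolynomial (Fin N) K))) =
      hilbertSamuelMultiplicity k I := by
  have := funext (hilbertFunction_map K I)
  unfold hilbertSamuelMultiplicity
  rw [this]

end

end BaseChange

section EquigeneratedIdeals

open MvPolynomial Module

lemma exists_span_range_eq_of_finrank_le {K V : Type*} [DivisionRing K] [AddCommGroup V]
    [Module K V] (p : Submodule K V) [FiniteDimensional K p] {m : ℕ} (hp : finrank K p ≤ m) :
    ∃ g : Fin m → V, Submodule.span K (Set.range g) = p := by
  let b := finBasis K p
  refine ⟨Function.extend (Fin.castLE hp) (fun i => (b i : V)) 0, le_antisymm ?_ ?_⟩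
  · refine Submodule.span_le.2 ((Set.range_extend_subset _ _ _).trans (Set.union_subset ?_ ?_))
    · rintro _ ⟨i, rfl⟩
      exact (b i).2
    · rintro _ ⟨_, _, rfl⟩
      exact p.zero_mem
  · rw [Set.range_extend (Fin.castLE_injective hp), Submodule.span_union]
    refine le_sup_of_le_left ?_
    have := congrArg (Submodule.map p.subtype) b.span_eq
    rw [Submodule.map_span, Submodule.map_top, Submodule.range_subtype, ← Set.range_comp] at this
    exact this.ge

lemma mem_span_of_mem_ideal_span {σ K : Type*} [Field K] {s : Set (MvPolynomial σ K)} {e : ℕ}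
    (hs : ∀ q ∈ s, q.IsHomogeneous e) {p : MvPolynomial σ K} (hp : p.IsHomogeneous e)
    (hps : p ∈ Ideal.span s) : p ∈ Submodule.span K s := by
  suffices ∀ a, homogeneousComponent e (a * p) ∈ Submodule.span K s by
    simpa [homogeneousComponent_eq_self hp] using this 1
  clear hp
  induction hps using Submodule.span_induction with
  | zero => simp
  | add p q _ _ hp hq => exact fun a => by simpa only [mul_add, map_add] using add_mem (hp a) (hq a)
  | smul b p _ hp => exact fun a => by simpa only [smul_eq_mul, mul_assoc] using hp (a * b)
  | mem q hq =>
    intro a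
    have h := homogeneousComponent_mul_of_isHomogeneous (hs q hq) a 0
    rw [add_zero, homogeneousComponent_zero, mul_comm, mul_comm q, ← smul_eq_C_mul] at h
    rw [h]
    exact Submodule.smul_mem _ _ (Submodule.subset_span hq)

variable {K : Type u} [Field K] {N : ℕ}

lemma finrank_inf_add_hilbertFunction (I : Ideal (MvPolynomial (Fin N) K)) (n : ℕ) :
    finrank K (homogeneousSubmodule (Fin N) K n ⊓ I.restrictScalars K : Submodule K _) +
      hilbertFunction K I n = finrank K (homogeneousSubmodule (Fin N) K n) := by
  have hker : LinearMap.ker (Ideal.Quotient.mkₐ K I).toLinearMap = I.restrictScalars K :=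
    Submodule.ext fun _ => Ideal.Quotient.eq_zero_iff_mem
  rw [← hker, add_comm]
  exact finrank_map_add_finrank_inf_ker _ _

lemma finrank_inf_le_of_span_range {ι : Type*} [Fintype ι] {g : ι → MvPolynomial (Fin N) K} {e : ℕ}
    (hg : ∀ i, (g i).IsHomogeneous e) :
    finrank K (homogeneousSubmodule (Fin N) K e ⊓
      (Ideal.span (Set.range g)).restrictScalars K : Submodule K _) ≤ Fintype.card ι := by
  have := FiniteDimensional.span_of_finite K (Set.finite_range g)
  refine (Submodule.finrank_mono (t := Submodule.span K (Set.range g)) fun p hp => ?_).trans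
    (finrank_range_le_card g)
  exact mem_span_of_mem_ideal_span (by rintro _ ⟨i, rfl⟩; exact hg i) hp.1 hp.2

lemma exists_span_range_eq_of_finrank_inf_le {Q : Set (MvPolynomial (Fin N) K)} {e m : ℕ}
    (hQ : ∀ q ∈ Q, q.IsHomogeneous e)
    (hm : finrank K (homogeneousSubmodule (Fin N) K e ⊓
      (Ideal.span Q).restrictScalars K : Submodule K _) ≤ m) :
    ∃ g : Fin m → MvPolynomial (Fin N) K,
      (∀ i, (g i).IsHomogeneous e) ∧ Ideal.span Q = Ideal.span (Set.range g) := by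
  obtain ⟨g, hg⟩ := exists_span_range_eq_of_finrank_le _ hm
  have hgQ (i : Fin m) := hg.le (Submodule.subset_span ⟨i, rfl⟩)
  refine ⟨g, fun i => (hgQ i).1, le_antisymm (Ideal.span_le.2 fun q hq => ?_)
    (Ideal.span_le.2 (Set.range_subset_iff.2 fun i => (hgQ i).2))⟩
  exact Submodule.span_subset_span K _ _ (hg.ge ⟨hQ q hq, Ideal.subset_span hq⟩)

attribute [local instance] MvPolynomial.algebraMvPolynomial

lemma hilbertFunction_bot (n : ℕ) :
    hilbertFunction K (⊥ : Ideal (MvPolynomial (Fin N) K)) n =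
      finrank K (homogeneousSubmodule (Fin N) K n) := by
  have h := finrank_inf_add_hilbertFunction (⊥ : Ideal (MvPolynomial (Fin N) K)) n
  rwa [Submodule.restrictScalars_bot, inf_bot_eq, finrank_bot, zero_add] at h

lemma finrank_inf_map (K : Type u) [Field K] {k : Type u} [Field k] [Algebra k K]
    (I : Ideal (MvPolynomial (Fin N) k)) (n : ℕ) :
    finrank K (homogeneousSubmodule (Fin N) K n ⊓
      (I.map (algebraMap _ (MvPolynomial (Fin N) K))).restrictScalars K : Submodule K _) =
    finrank k (homogeneousSubmodule (Fin N) k n ⊓ I.restrictScalars k : Submodule k _) := by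
  have h := finrank_inf_add_hilbertFunction I n
  have hK := finrank_inf_add_hilbertFunction (I.map (algebraMap _ (MvPolynomial (Fin N) K))) n
  have h_bot := hilbertFunction_map K (⊥ : Ideal (MvPolynomial (Fin N) k)) n
  rw [Ideal.map_bot, hilbertFunction_bot, hilbertFunction_bot] at h_bot
  rw [hilbertFunction_map] at hK
  omega

end EquigeneratedIdeals

section QuadraticIdeals

open MvPolynomial Module

attribute [local instance] MvPolynomial.gradedAlgebra

lemma le_of_height_eq {K : Type u} [Field K] {N c : ℕ} {I : Ideal (MvPolynomial (Fin N) K)}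
    (hI : I ≤ idealOfVars (Fin N) K) (hc : I.height = c) : c ≤ N := by
  have := (Ideal.height_mono hI).trans height_idealOfVars_le
  rw [hc] at this
  exact_mod_cast this

variable {K : Type u} [Field K] {N c : ℕ} {Q : Set (MvPolynomial (Fin N) K)}
  (hQ : ∀ q ∈ Q, q.IsHomogeneous 2) (hht : (Ideal.span Q).height = c)
include hQ hht

lemma span_le_idealOfVars : Ideal.span Q ≤ idealOfVars (Fin N) K := by
  refine le_idealOfVars_of_isHomogeneous (isHomogeneous_span fun q hq => ⟨2, hQ q hq⟩) fun h => ?_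
  rw [h, Ideal.height_top] at hht
  exact ENat.top_ne_natCast c hht

variable (hc : 2 ≤ c) (hmult : hilbertSamuelMultiplicity K (Ideal.span Q) = 2 ^ c - c + 1)
include hc hmult

theorem hasProjectiveDimensionLE_and_finrank_inf_le_of_infinite [Infinite K] :
    HasProjectiveDimensionLE
        (ModuleCat.of (MvPolynomial (Fin N) K) (MvPolynomial (Fin N) K ⧸ Ideal.span Q)) c ∧
      finrank K (homogeneousSubmodule (Fin N) K 2 ⊓
        (Ideal.span Q).restrictScalars K : Submodule K _) ≤ c + 1 := by
  obtain ⟨d, hN⟩ := Nat.exists_eq_add_of_le (le_of_height_eq (span_le_idealOfVars hQ hht) hht)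
  obtain ⟨f, z, hfI, hf, hg⟩ := exists_isHomogeneousParameterSystem (I := Ideal.span Q) two_pos
    hN.symm (hht.ge.trans (Ideal.height_mono (Ideal.span_mono fun q hq =>
      ⟨Ideal.subset_span hq, hQ q hq⟩)))
  have hfI := Ideal.span_le.2 (Set.range_subset_iff.2 hfI)
  let _ : Algebra (MvPolynomial (Fin d) K) (MvPolynomial (Fin N) K) := (aeval z).toAlgebra
  have : IsScalarTower K (MvPolynomial (Fin d) K) (MvPolynomial (Fin N) K) :=
    .of_algebraMap_eq' (aeval z).comp_algebraMap.symm
  have hz (k : Fin d) : algebraMap (MvPolynomial (Fin d) K) (MvPolynomial (Fin N) K) (X k) = z k :=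
    aeval_X z k
  have hinj : Function.Injective (algebraMap (MvPolynomial (Fin d) K) (MvPolynomial (Fin N) K)) :=
    (injective_iff_map_eq_zero _).2 fun p hp =>
      eq_zero_of_algebraMap_mem hg hz hfI hf hht (hp ▸ zero_mem _)
  have hrank : c + finrank (MvPolynomial (Fin d) K) (MvPolynomial (Fin N) K ⧸ Ideal.span Q) =
      2 ^ c + 1 := by
    have hlt : (c : ℚ) < 2 ^ c := by exact_mod_cast c.lt_two_pow_self
    have h := finrank_quotient_eq_hilbertSamuelMultiplicity hg hz hfI hf hht
      (isHomogeneous_span fun q hq => ⟨2, hQ q hq⟩) (by rw [hmult]; linarith)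
    rw [hmult, sub_add_eq_add_sub, sub_eq_iff_eq_add'] at h
    exact_mod_cast h.symm
  obtain ⟨q, hq, hI, _⟩ :=
    exists_eq_sup_span_singleton_and_free hg hz hfI hf hht hQ rfl hc hrank
  obtain ⟨e⟩ := nonempty_algEquiv_mvPolynomial hN.symm (isHomogeneous_algebraMap_X hz hg) hinj
  refine ⟨hasProjectiveDimensionLE_of_algEquiv_mvPolynomial e _, ?_⟩
  have h := finrank_inf_le_of_span_range (e := 2) (g := Sum.elim f fun _ : Unit => q) (by
    rintro (i | _)
    exacts [hg.isHomogeneous (.inl i), hq])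
  rw [Set.Sum.elim_range, Set.range_const, Ideal.span_union, ← hI] at h
  simpa using h

end QuadraticIdeals

end HeightThreeQuadrics

section

open HeightThreeQuadrics MvPolynomial

attribute [local instance] MvPolynomial.algebraMvPolynomial

theorem CM_of_height_three_mult_six_general (k : Type u) [Field k] (N c : ℕ) (hc : 2 ≤ c)
    (Q : Set (MvPolynomial (Fin N) k)) (hQ : ∀ q ∈ Q, q.IsHomogeneous 2)
    (I : Ideal (MvPolynomial (Fin N) k)) (hI : I = Ideal.span Q) (hht : I.heightENat = c)
    (hmult : hilbertSamuelMultiplicity k I = 2 ^ c - c + 1) :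
    ringKrullDim (MvPolynomial (Fin N) k ⧸ I) =
        (gradedDepth k N (MvPolynomial (Fin N) k ⧸ I) : WithBot ℕ∞) ∧
      (∃ g : Fin (c + 1) → MvPolynomial (Fin N) k,
        (∀ i, (g i).IsHomogeneous 2) ∧ I = Ideal.span (Set.range g)) ∧
      projDim (MvPolynomial (Fin N) k) (MvPolynomial (Fin N) k ⧸ I) = c := by
  subst hI
  rw [heightENat_eq_height] at hht
  let K := AlgebraicClosure k
  have : Infinite K := IsAlgClosed.instInfinite
  let φ := algebraMap (MvPolynomial (Fin N) k) (MvPolynomial (Fin N) K)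
  have hφ : (Ideal.span Q).map φ = Ideal.span (φ '' Q) := Ideal.map_span φ Q
  have hφQ : ∀ q ∈ φ '' Q, q.IsHomogeneous 2 := Set.forall_mem_image.2 fun q hq => (hQ q hq).map _
  obtain ⟨hpd, hfinrank⟩ := hasProjectiveDimensionLE_and_finrank_inf_le_of_infinite hφQ
    (by rw [← hφ, height_map, hht]) hc (by rw [← hφ, hilbertSamuelMultiplicity_map, hmult])
  rw [← hφ] at hpd hfinrank
  rw [finrank_inf_map] at hfinrank
  obtain ⟨hdepth, hprojDim⟩ := ringKrullDim_eq_gradedDepth_and_projDim_eq_height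
    (span_le_idealOfVars hQ hht) hht (hasProjectiveDimensionLE_quotient_of_map _ hpd)
  exact ⟨hdepth, exists_span_range_eq_of_finrank_inf_le hQ hfinrank, hprojDim⟩

end

/-- If `I` is a homogeneous ideal of height `3` generated by quadrics with
`e(S/I) = 6`, then `S/I` is Cohen–Macaulay (depth = dimension), `I` is generated by `4`
quadrics, and `pd_S(S/I) = 3`. -/
theorem CM_of_height_three_mult_six (k : Type u) [Field k] (N : ℕ)
    (Q : Set (MvPolynomial (Fin N) k))
    (hQ : ∀ q ∈ Q, MvPolynomial.IsHomogeneous q 2)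
    (I : Ideal (MvPolynomial (Fin N) k))
    (hI : I = Ideal.span Q)
    (hht : I.heightENat = 3)
    (hmult : hilbertSamuelMultiplicity k I = 6) :
    ringKrullDim (MvPolynomial (Fin N) k ⧸ I) =
        (gradedDepth k N (MvPolynomial (Fin N) k ⧸ I) : WithBot ℕ∞) ∧
      (∃ g : Fin 4 → MvPolynomial (Fin N) k,
        (∀ i, (g i).IsHomogeneous 2) ∧ I = Ideal.span (Set.range g)) ∧
      projDim (MvPolynomial (Fin N) k) (MvPolynomial (Fin N) k ⧸ I) = (3 : ℕ∞) := by
  exact CM_of_height_three_mult_six_general k N 3 (by norm_num) Q hQ I hI hht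
    (by rw [hmult]; norm_num)
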